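/- arXiv:2007.12742 — 2 statements merged into one kernel-verified Lean document; each statement's English description precedes it below -/
import Mathlib

section
/- Let d ∈ ℕ. There exists a constant C(d) > 0 depending only on d such that for every n ∈ ℕ, every Gaussian random vector X in ℝⁿ, and every non-constant polynomial g on ℝⁿ of total degree at most d, the distribution of g(X) has a density ϱ_g satisfying ω(ϱ_g, ε) = sup_{|h| ≤ ε} ∫_ℝ |ϱ_g(s+h) − ϱ_g(s)| ds ≤ C(d) [𝔻g(X)]^{−1/(2d)} ε^{1/d} for all ε > 0, where 𝔻g(X) := 𝔼(g(X) − 𝔼g(X))² is the variance of g(X). In particular ϱ_g belongs to the Nikolskii–Besov space B^{1/d}_{1,∞}(ℝ). -/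
/-!
The theorem is dual to a smoothing inequality for the standard Gaussian measure on `ℝⁿ`: for a
polynomial `g` of degree at most `d`, a weight `U²` with `U` a polynomial, and a `C¹` function `φ`
with `|φ| ≤ A` and `|φ'| ≤ 1`,
`|𝔼 φ'(g) U²| ≤ C (A² / 𝔻g)^(1/(2d)) 𝔼 U²`,
where `C` depends only on `d` and on the degree of `U`. It is proved by induction on `d`, for all
degrees of `U` at once.

Let `x, y` be independent standard Gaussian vectors. The law of `(x, y)` is invariant under
rotations, and along a rotation orbit `φ'(g(x)) ∂_y g(x)` is the exact derivative of `φ(g)` in the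
angle. Polynomials become trigonometric polynomials of the angle, so a kernel
`p / (p² + r² + δ²)` with `p = ∂_y g` is monotone between boundedly many angles and has total
variation `O(1/δ)`. Integrating by parts therefore gives
`|𝔼 φ'(g) U² p² / (p² + r² + δ²)| ≤ C (A/δ) 𝔼 U²`, uniformly in the dimension and in the polynomial
`r`. With two independent directions `y₁, y₂`, write `1 = p₁²/q + p₂²/q + δ²/q`, where
`pᵢ = ∂_{yᵢ} g` and `q = p₁² + p₂² + δ²`. The first two terms are handled by the integration by
parts. The last one lives where both derivatives are small: for fixed `y`, `∂_y g` has degree at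
most `d - 1`, and the induction hypothesis with an arctangent as test function bounds
`𝔼 U² δ²/((∂_y g)² + δ²)` by a power of `δ / ‖∂_y g‖_{L²}`. Taking the geometric mean of the two
directions halves the exponent, so that the negative moments of `‖∂_y g‖_{L²}` in `y` are finite; by
the Poincaré inequality they are controlled by `𝔻g`. This gives
`|𝔼 φ'(g) U²| ≤ C (A/δ + (δ²/𝔻g)^(1/(2(d-1)))) 𝔼 U²`, and the optimal `δ` closes the induction.

Applied to `U = 1` and `φ(s) = (∫_s^{s+h} ψ) / 2` with `ψ` continuous and `|ψ| ≤ 1`, the inequality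
bounds `𝔼 (ψ(g + h) - ψ(g))` by `C (𝔻g)^(-1/(2d)) |h|^(1/d)`. This extends to measurable `ψ`, forces
the law of `g` to be absolutely continuous, and, for `ψ` the sign of a difference of densities, is
the asserted bound on the `L¹` modulus. A general Gaussian vector is an affine image `b + L x` of a
standard one, and `g(b + L x)` is again a polynomial of degree at most `d` in `x`.
-/

open MeasureTheory ProbabilityTheory

/-- The `L¹` modulus of continuity `ω(ϱ, ε) = sup_{|h| ≤ ε} ∫ |ϱ(s+h) − ϱ(s)| ds`. -/
noncomputable def omegaMod (ρ : ℝ → ℝ) (ε : ℝ) : ℝ :=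
  sSup {r : ℝ | ∃ h : ℝ, |h| ≤ ε ∧ r = ∫ s : ℝ, |ρ (s + h) - ρ s|}

/-- The standard Gaussian measure on `ℝⁿ` (i.i.d. `N(0,1)` coordinates). -/
noncomputable def stdGaussian (n : ℕ) : Measure (Fin n → ℝ) :=
  Measure.pi fun _ => gaussianReal 0 1

/-- A (possibly degenerate) Gaussian distribution on `ℝⁿ`: the image of the standard
Gaussian measure under an affine map. -/
def IsGaussianVec {n : ℕ} (μ : Measure (Fin n → ℝ)) : Prop :=
  ∃ (L : (Fin n → ℝ) →ₗ[ℝ] (Fin n → ℝ)) (b : Fin n → ℝ),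
    μ = (stdGaussian n).map (fun x => b + L x)

namespace GaussPoly

/-! ### Trigonometric polynomials -/

section TrigPoly

open Polynomial (X C)

/-- `f` is a real trigonometric polynomial of degree at most `m`, encoded by the requirement that
`f(θ) e^{imθ}` be a complex polynomial of degree at most `2m` in `e^{iθ}`. -/
def IsTrigPoly (m : ℕ) (f : ℝ → ℝ) : Prop :=
  ∃ P : Polynomial ℂ, P.natDegree ≤ 2 * m ∧
    ∀ θ : ℝ, (f θ : ℂ) * Complex.exp (θ * Complex.I) ^ m = P.eval (Complex.exp (θ * Complex.I))

namespace IsTrigPoly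

variable {m k : ℕ} {f g : ℝ → ℝ}

lemma mono (hf : IsTrigPoly m f) (hmk : m ≤ k) : IsTrigPoly k f := by
  obtain ⟨P, hP, hf⟩ := hf
  refine ⟨P * X ^ (k - m), ?_, fun θ => ?_⟩
  · refine Polynomial.natDegree_mul_le.trans ?_
    rw [Polynomial.natDegree_X_pow]
    omega
  · rw [Polynomial.eval_mul, Polynomial.eval_pow, Polynomial.eval_X, ← hf, mul_assoc, ← pow_add,
      Nat.add_sub_cancel' hmk]

lemma const (c : ℝ) : IsTrigPoly m fun _ => c :=
  mono (m := 0) ⟨C (c : ℂ), by simp, fun θ => by simp⟩ m.zero_le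

lemma add (hf : IsTrigPoly m f) (hg : IsTrigPoly m g) : IsTrigPoly m fun θ => f θ + g θ := by
  obtain ⟨P, hP, hf⟩ := hf
  obtain ⟨Q, hQ, hg⟩ := hg
  refine ⟨P + Q, (Polynomial.natDegree_add_le _ _).trans (max_le hP hQ), fun θ => ?_⟩
  rw [Polynomial.eval_add, ← hf, ← hg]
  push_cast
  ring

lemma mul (hf : IsTrigPoly m f) (hg : IsTrigPoly k g) :
    IsTrigPoly (m + k) fun θ => f θ * g θ := by
  obtain ⟨P, hP, hf⟩ := hf
  obtain ⟨Q, hQ, hg⟩ := hg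
  refine ⟨P * Q, Polynomial.natDegree_mul_le.trans (by omega), fun θ => ?_⟩
  rw [Polynomial.eval_mul, ← hf, ← hg]
  push_cast
  ring

lemma const_mul (c : ℝ) (hf : IsTrigPoly m f) : IsTrigPoly m fun θ => c * f θ := by
  simpa using (const (m := 0) c).mul hf

lemma pow (hf : IsTrigPoly m f) (k : ℕ) : IsTrigPoly (k * m) fun θ => f θ ^ k := by
  induction k with
  | zero => simpa using const 1
  | succ k ih => simpa [pow_succ, Nat.succ_mul] using ih.mul hf

lemma sum {ι : Type*} (s : Finset ι) {f : ι → ℝ → ℝ} (hf : ∀ i ∈ s, IsTrigPoly m (f i)) :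
    IsTrigPoly m fun θ => ∑ i ∈ s, f i θ := by
  classical
  induction s using Finset.induction_on with
  | empty => simpa using const 0
  | insert a s ha ih =>
    simp only [Finset.sum_insert ha]
    exact (hf a (by simp)).add (ih fun i hi => hf i (by simp [hi]))

lemma prod {ι : Type*} (s : Finset ι) {m : ι → ℕ} {f : ι → ℝ → ℝ}
    (hf : ∀ i ∈ s, IsTrigPoly (m i) (f i)) :
    IsTrigPoly (∑ i ∈ s, m i) fun θ => ∏ i ∈ s, f i θ := by
  classical
  induction s using Finset.induction_on with
  | empty => simpa using const 1
  | insert a s ha ih =>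
    simp only [Finset.sum_insert ha, Finset.prod_insert ha]
    exact (hf a (by simp)).mul (ih fun i hi => hf i (by simp [hi]))

lemma exp_neg_mul_exp (θ : ℝ) :
    Complex.exp (-(θ * Complex.I)) * Complex.exp (θ * Complex.I) = 1 := by
  rw [← Complex.exp_add, neg_add_cancel, Complex.exp_zero]

lemma cos : IsTrigPoly 1 Real.cos := by
  refine ⟨C (1 / 2) * (X ^ 2 + 1), by compute_degree, fun θ => ?_⟩
  simp only [Complex.ofReal_cos, Complex.cos, neg_mul, Polynomial.eval_mul, Polynomial.eval_C,
    Polynomial.eval_add, Polynomial.eval_pow, Polynomial.eval_X, Polynomial.eval_one]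
  linear_combination (1 / 2) * exp_neg_mul_exp θ

lemma sin : IsTrigPoly 1 Real.sin := by
  refine ⟨C (Complex.I / 2) * (1 - X ^ 2), by compute_degree, fun θ => ?_⟩
  simp only [Complex.ofReal_sin, Complex.sin, neg_mul, Polynomial.eval_mul, Polynomial.eval_C,
    Polynomial.eval_sub, Polynomial.eval_pow, Polynomial.eval_X, Polynomial.eval_one]
  linear_combination (Complex.I / 2) * exp_neg_mul_exp θ

lemma contDiff (hf : IsTrigPoly m f) (n : ℕ) : ContDiff ℝ n f := by
  obtain ⟨P, -, hf⟩ := hf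
  have hf' : f = fun θ : ℝ => (P.eval (Complex.exp (θ * Complex.I)) *
      Complex.exp (-(θ * Complex.I)) ^ m).re := by
    ext θ
    rw [← hf, mul_assoc, ← mul_pow, mul_comm (Complex.exp _), exp_neg_mul_exp]
    simp
  have hθ : ContDiff ℝ n fun θ : ℝ => (θ : ℂ) := Complex.ofRealCLM.contDiff
  have hP : ContDiff ℝ n fun z : ℂ => P.eval z := by
    simpa using (P.contDiff_aeval (𝕜 := ℂ) n).restrict_scalars ℝ
  rw [hf']
  exact Complex.reCLM.contDiff.comp
    ((hP.comp (by fun_prop : ContDiff ℝ n fun θ : ℝ => Complex.exp (θ * Complex.I))).mul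
      (by fun_prop))

lemma differentiable (hf : IsTrigPoly m f) : Differentiable ℝ f :=
  (hf.contDiff 1).differentiable one_ne_zero

lemma continuous (hf : IsTrigPoly m f) : Continuous f := hf.differentiable.continuous

lemma ofReal_deriv_mul_exp_pow {P : Polynomial ℂ} (hf : Differentiable ℝ f)
    (hP : ∀ θ : ℝ, (f θ : ℂ) * Complex.exp (θ * Complex.I) ^ m =
      P.eval (Complex.exp (θ * Complex.I))) (θ : ℝ) :
    ((deriv f θ : ℝ) : ℂ) * Complex.exp (θ * Complex.I) ^ m =
      (C Complex.I * (X * P.derivative - C (m : ℂ) * P)).eval (Complex.exp (θ * Complex.I)) := by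
  have hexp : HasDerivAt (fun θ : ℝ => Complex.exp (θ * Complex.I))
      (Complex.exp (θ * Complex.I) * Complex.I) θ := by
    simpa using ((hasDerivAt_id θ).ofReal_comp.mul_const Complex.I).cexp
  have hlhs : HasDerivAt (fun θ : ℝ => (f θ : ℂ) * Complex.exp (θ * Complex.I) ^ m) _ θ :=
    (hf θ).hasDerivAt.ofReal_comp.mul (hexp.pow m)
  have hrhs : HasDerivAt (fun θ : ℝ => P.eval (Complex.exp (θ * Complex.I))) _ θ :=
    HasDerivAt.comp (h₂ := fun z : ℂ => P.eval z) θ (P.hasDerivAt _) hexp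
  have heq := hlhs.unique (funext hP ▸ hrhs)
  simp only [Polynomial.eval_mul, Polynomial.eval_sub, Polynomial.eval_C, Polynomial.eval_X, ← hP]
  cases m with
  | zero =>
    simp only [pow_zero, mul_one, Nat.cast_zero, zero_mul, mul_zero, add_zero] at heq ⊢
    rw [heq]
    ring
  | succ k =>
    simp only [Nat.add_sub_cancel] at heq
    push_cast at heq ⊢
    linear_combination heq

lemma deriv (hf : IsTrigPoly m f) : IsTrigPoly m (deriv f) := by
  have hdiff := hf.differentiable
  obtain ⟨P, hP, hf⟩ := hf
  refine ⟨_, (Polynomial.natDegree_C_mul_le _ _).trans ((Polynomial.natDegree_sub_le _ _).trans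
    (max_le ?_ ((Polynomial.natDegree_C_mul_le _ _).trans hP))), ofReal_deriv_mul_exp_pow hdiff hf⟩
  rcases eq_or_ne P.natDegree 0 with h0 | h0
  · simp [Polynomial.derivative_of_natDegree_zero h0]
  · have hlt := Polynomial.natDegree_derivative_lt h0
    refine Polynomial.natDegree_mul_le.trans ?_
    rw [Polynomial.natDegree_X]
    omega

lemma arg_exp_mul_I {θ : ℝ} (hθ : θ ∈ Set.Ioc (-Real.pi) Real.pi) :
    (Complex.exp (θ * Complex.I)).arg = θ := by
  rw [Complex.arg_exp_mul_I, toIocMod_eq_self]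
  exact ⟨hθ.1, hθ.2.trans (by linarith)⟩

lemma exists_finset_zeros (hf : IsTrigPoly m f) (hf0 : f ≠ 0) :
    ∃ s : Finset ℝ, s.card ≤ 2 * m ∧
      ∀ θ ∈ Set.Ioc (-Real.pi) Real.pi, f θ = 0 → θ ∈ s := by
  obtain ⟨P, hP, hf⟩ := hf
  have hP0 : P ≠ 0 := by
    rintro rfl
    exact hf0 (funext fun θ => by simpa [Complex.exp_ne_zero] using hf θ)
  refine ⟨P.roots.toFinset.image Complex.arg, ?_, fun θ hθ h0 => ?_⟩
  · exact (Finset.card_image_le.trans (Multiset.toFinset_card_le _)).trans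
      ((Polynomial.card_roots' P).trans hP)
  · refine Finset.mem_image.2 ⟨Complex.exp (θ * Complex.I), ?_, arg_exp_mul_I hθ⟩
    rw [Multiset.mem_toFinset, Polynomial.mem_roots hP0, Polynomial.IsRoot, ← hf, h0]
    simp

/-- Differentiation at `0` is a linear functional on the trigonometric polynomials of degree `m`,
and these are determined by their values at `2m + 1` points. -/
lemma exists_deriv_zero_eq_sum (m : ℕ) : ∃ (s : Finset ℝ) (c : ℝ → ℝ),
    ∀ f, IsTrigPoly m f → _root_.deriv f 0 = ∑ θ ∈ s, c θ * f θ := by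
  obtain ⟨s, hs, hcard⟩ := (Set.Ioc_infinite (neg_lt_self Real.pi_pos)).exists_subset_card_eq
    (2 * m + 1)
  set v : ℝ → ℂ := fun θ => Complex.exp (θ * Complex.I)
  have hv : Set.InjOn v s := fun a ha b hb hab => by
    rw [← arg_exp_mul_I (hs ha), ← arg_exp_mul_I (hs hb)]
    exact congrArg Complex.arg hab
  let Λ : Polynomial ℂ → ℂ := fun P => Complex.I * (P.derivative.eval 1 - m * P.eval 1)
  refine ⟨s, fun θ => (v θ ^ m * Λ (Lagrange.basis s v θ)).re, fun f hf => ?_⟩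
  have hdiff := hf.differentiable
  obtain ⟨P, hP, hf⟩ := hf
  have hΛ : ((_root_.deriv f 0 : ℝ) : ℂ) = Λ P := by
    simpa [Λ] using ofReal_deriv_mul_exp_pow hdiff hf 0
  have hinterp : P = ∑ θ ∈ s, C (P.eval (v θ)) * Lagrange.basis s v θ := by
    rw [← Lagrange.interpolate_apply]
    refine Lagrange.eq_interpolate hv
      (Polynomial.degree_le_natDegree.trans_lt (Nat.cast_lt.2 ?_))
    omega
  have hsum : ((_root_.deriv f 0 : ℝ) : ℂ) = ∑ θ ∈ s, v θ ^ m * Λ (Lagrange.basis s v θ) * f θ := by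
    rw [hΛ, hinterp]
    simp only [Λ, Polynomial.derivative_sum, Polynomial.eval_finsetSum, Polynomial.derivative_mul,
      Polynomial.derivative_C, zero_mul, zero_add, Polynomial.eval_mul, Polynomial.eval_C]
    rw [Finset.mul_sum, ← Finset.sum_sub_distrib, Finset.mul_sum]
    refine Finset.sum_congr rfl fun θ _ => ?_
    rw [← hf θ]
    ring
  simpa using congrArg Complex.re hsum

end IsTrigPoly

end TrigPoly

/-! ### Variation of functions whose derivative has few zeros -/

section Variation

variable {F F' : ℝ → ℝ} {M a b : ℝ}

lemma abs_integral_eq_integral_abs_of_ne_zero (hF' : Continuous F') (hab : a ≤ b)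
    (hz : ∀ t ∈ Set.Ioo a b, F' t ≠ 0) : |∫ t in a..b, F' t| = ∫ t in a..b, |F' t| := by
  have hsign : (∀ t ∈ Set.Ioo a b, 0 < F' t) ∨ ∀ t ∈ Set.Ioo a b, F' t < 0 := by
    by_contra! hcon
    obtain ⟨⟨t₁, ht₁, h₁⟩, t₂, ht₂, h₂⟩ := hcon
    obtain ⟨c, hc, hc0⟩ := isPreconnected_Ioo.intermediate_value ht₁ ht₂ hF'.continuousOn ⟨h₁, h₂⟩
    exact hz c hc hc0
  simp only [intervalIntegral.integral_of_le hab, integral_Ioc_eq_integral_Ioo]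
  rcases hsign with h | h
  · rw [setIntegral_congr_fun measurableSet_Ioo fun t ht => abs_of_pos (h t ht), abs_of_nonneg]
    exact setIntegral_nonneg measurableSet_Ioo fun t ht => (h t ht).le
  · rw [setIntegral_congr_fun measurableSet_Ioo fun t ht => abs_of_neg (h t ht), integral_neg,
      abs_of_nonpos]
    exact setIntegral_nonpos measurableSet_Ioo fun t ht => (h t ht).le

lemma integral_abs_deriv_le_of_ne_zero (hF : ∀ t, HasDerivAt F (F' t) t) (hF' : Continuous F')
    (hM : ∀ t, |F t| ≤ M) (hab : a ≤ b) (hz : ∀ t ∈ Set.Ioo a b, F' t ≠ 0) :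
    ∫ t in a..b, |F' t| ≤ 2 * M := by
  rw [← abs_integral_eq_integral_abs_of_ne_zero hF' hab hz,
    intervalIntegral.integral_eq_sub_of_hasDerivAt (fun t _ => hF t) (hF'.intervalIntegrable _ _)]
  linarith [abs_sub (F b) (F a), hM a, hM b]

lemma card_filter_lt_add_card_filter_gt_lt {s : Finset ℝ} {c : ℝ} (hc : c ∈ s) :
    (s.filter (· < c)).card + (s.filter (c < ·)).card < s.card := by
  rw [← Finset.card_union_of_disjoint
    (Finset.disjoint_filter.2 fun t _ h₁ h₂ => lt_asymm h₁ h₂)]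
  refine Finset.card_lt_card ((Finset.ssubset_iff_of_subset
    (Finset.union_subset (Finset.filter_subset _ _) (Finset.filter_subset _ _))).2 ⟨c, hc, ?_⟩)
  simp

lemma integral_abs_deriv_le (hF : ∀ t, HasDerivAt F (F' t) t) (hF' : Continuous F')
    (hM : ∀ t, |F t| ≤ M) (s : Finset ℝ) (hab : a ≤ b)
    (hz : ∀ t ∈ Set.Ioo a b, F' t = 0 → t ∈ s) :
    ∫ t in a..b, |F' t| ≤ 2 * M * (s.card + 1) := by
  have hM0 : 0 ≤ M := (abs_nonneg _).trans (hM 0)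
  induction s using Finset.strongInduction generalizing a b with
  | H s ih =>
    by_cases h : ∃ c ∈ Set.Ioo a b, c ∈ s
    · obtain ⟨c, hc, hcs⟩ := h
      have hleft := ih (s.filter (· < c)) (Finset.filter_ssubset.2 ⟨c, hcs, lt_irrefl c⟩) hc.1.le
        fun t ht h0 => Finset.mem_filter.2 ⟨hz t ⟨ht.1, ht.2.trans hc.2⟩ h0, ht.2⟩
      have hright := ih (s.filter (c < ·)) (Finset.filter_ssubset.2 ⟨c, hcs, lt_irrefl c⟩) hc.2.le
        fun t ht h0 => Finset.mem_filter.2 ⟨hz t ⟨hc.1.trans ht.1, ht.2⟩ h0, ht.1⟩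
      have hcard : ((s.filter (· < c)).card + (s.filter (c < ·)).card + 1 : ℝ) ≤ s.card := by
        exact_mod_cast card_filter_lt_add_card_filter_gt_lt hcs
      rw [← intervalIntegral.integral_add_adjacent_intervals (hF'.abs.intervalIntegrable a c)
        (hF'.abs.intervalIntegrable c b)]
      nlinarith
    · refine (integral_abs_deriv_le_of_ne_zero hF hF' hM hab
        fun t ht h0 => h ⟨t, ht, hz t ht h0⟩).trans ?_
      nlinarith [mul_nonneg hM0 s.card.cast_nonneg']

end Variation

/-! ### Functions of polynomial growth -/

section PolyGrowth

variable {E F : Type*} [NormedAddCommGroup E] [NormedAddCommGroup F]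

/-- Continuous functions of at most polynomial growth: a class of functions stable under the
algebraic operations of the argument and integrable with respect to every Gaussian measure. -/
def PolyGrowth (f : E → ℝ) : Prop :=
  Continuous f ∧ ∃ (C : ℝ) (N : ℕ), ∀ x, |f x| ≤ C * (1 + ‖x‖) ^ N

namespace PolyGrowth

variable {f g : E → ℝ}

lemma continuous (hf : PolyGrowth f) : Continuous f := hf.1

lemma of_abs_le (hf : Continuous f) {C : ℝ} (h : ∀ x, |f x| ≤ C) : PolyGrowth f :=
  ⟨hf, C, 0, by simpa using h⟩

lemma const (c : ℝ) : PolyGrowth fun _ : E => c := of_abs_le continuous_const fun _ => le_rfl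

lemma norm : PolyGrowth fun x : E => ‖x‖ := ⟨continuous_norm, 1, 1, fun x => by simp⟩

lemma mono (hg : PolyGrowth g) (hf : Continuous f) (h : ∀ x, |f x| ≤ g x) : PolyGrowth f := by
  obtain ⟨-, C, N, hC⟩ := hg
  exact ⟨hf, C, N, fun x => (h x).trans ((le_abs_self _).trans (hC x))⟩

lemma abs (hf : PolyGrowth f) : PolyGrowth fun x => |f x| := by
  obtain ⟨hc, C, N, hC⟩ := hf
  exact ⟨hc.abs, C, N, by simpa using hC⟩

lemma add (hf : PolyGrowth f) (hg : PolyGrowth g) : PolyGrowth fun x => f x + g x := by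
  obtain ⟨hfc, C, N, hC⟩ := hf
  obtain ⟨hgc, D, M, hD⟩ := hg
  refine ⟨hfc.add hgc, |C| + |D|, N + M, fun x => (abs_add_le _ _).trans ?_⟩
  rw [add_mul]
  have hx : 1 ≤ 1 + ‖x‖ := le_add_of_nonneg_right (norm_nonneg x)
  refine add_le_add ((hC x).trans ?_) ((hD x).trans ?_)
  · gcongr
    exacts [le_abs_self C, N.le_add_right M]
  · gcongr
    exacts [le_abs_self D, M.le_add_left N]

lemma mul (hf : PolyGrowth f) (hg : PolyGrowth g) : PolyGrowth fun x => f x * g x := by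
  obtain ⟨hfc, C, N, hC⟩ := hf
  obtain ⟨hgc, D, M, hD⟩ := hg
  refine ⟨hfc.mul hgc, C * D, N + M, fun x => ?_⟩
  rw [abs_mul, pow_add, mul_mul_mul_comm]
  exact mul_le_mul (hC x) (hD x) (abs_nonneg _) ((abs_nonneg _).trans (hC x))

lemma const_mul (c : ℝ) (hf : PolyGrowth f) : PolyGrowth fun x => c * f x := (const c).mul hf

lemma sub (hf : PolyGrowth f) (hg : PolyGrowth g) : PolyGrowth fun x => f x - g x := by
  simpa [sub_eq_add_neg] using hf.add (hg.const_mul (-1))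

lemma pow (hf : PolyGrowth f) (k : ℕ) : PolyGrowth fun x => f x ^ k := by
  induction k with
  | zero => simpa using const (E := E) 1
  | succ k ih => simpa [pow_succ] using ih.mul hf

lemma sum {ι : Type*} (s : Finset ι) {f : ι → E → ℝ} (hf : ∀ i ∈ s, PolyGrowth (f i)) :
    PolyGrowth fun x => ∑ i ∈ s, f i x := by
  classical
  induction s using Finset.induction_on with
  | empty => simpa using const (E := E) 0
  | insert a s ha ih =>
    simp only [Finset.sum_insert ha]
    exact (hf a (by simp)).add (ih fun i hi => hf i (by simp [hi]))

lemma comp_of_norm_le {f : F → ℝ} (hf : PolyGrowth f) {u : E → F} (hu : Continuous u) {K : ℝ}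
    (h : ∀ x, ‖u x‖ ≤ K * ‖x‖) : PolyGrowth fun x => f (u x) := by
  obtain ⟨hfc, C, N, hC⟩ := hf
  refine ⟨hfc.comp hu, |C| * (1 + |K|) ^ N, N, fun x => (hC _).trans ?_⟩
  rw [mul_assoc, ← mul_pow]
  have hux : 1 + ‖u x‖ ≤ (1 + |K|) * (1 + ‖x‖) := by
    nlinarith [h x, norm_nonneg x, abs_nonneg K, mul_le_mul_of_nonneg_right (le_abs_self K)
      (norm_nonneg x)]
  gcongr
  exact le_abs_self C

lemma fst (hf : PolyGrowth f) : PolyGrowth fun z : E × F => f z.1 :=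
  hf.comp_of_norm_le continuous_fst (K := 1) fun z => by simpa using norm_fst_le z

lemma snd {f : F → ℝ} (hf : PolyGrowth f) : PolyGrowth fun z : E × F => f z.2 :=
  hf.comp_of_norm_le continuous_snd (K := 1) fun z => by simpa using norm_snd_le z

variable [NormedSpace ℝ E] [CompleteSpace E] [SecondCountableTopology E] [MeasurableSpace E]
  [BorelSpace E] {μ : Measure E} [IsGaussian μ]

lemma integrable (hf : PolyGrowth f) : Integrable f μ := by
  obtain ⟨hfc, C, N, hC⟩ := hf
  have hid : MemLp (fun x : E => x) (N : ENNReal) μ :=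
    IsGaussian.memLp_id μ N (ENNReal.natCast_ne_top N)
  have hmem : MemLp (fun x : E => 1 + ‖x‖) (N : ENNReal) μ := (memLp_const (1 : ℝ)).add hid.norm
  refine (hmem.integrable_norm_pow'.const_mul C).mono' hfc.aestronglyMeasurable
    (Filter.Eventually.of_forall fun x => ?_)
  rw [Real.norm_eq_abs, Real.norm_of_nonneg (by positivity)]
  exact hC x

end PolyGrowth

end PolyGrowth

/-! ### Calculus along Gaussian rotations -/

section Rotation

open ContinuousLinearMap (rotation)

variable {E : Type*} [NormedAddCommGroup E] [NormedSpace ℝ E]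

lemma rotation_add (θ t : ℝ) (z : E × E) : rotation (θ + t) z = rotation t (rotation θ z) := by
  ext <;> simp only [ContinuousLinearMap.rotation_apply, Real.cos_add, Real.sin_add] <;> module

@[simp] lemma rotation_zero (z : E × E) : rotation 0 z = z := by
  simp [ContinuousLinearMap.rotation_apply]

lemma continuous_rotation : Continuous fun p : ℝ × (E × E) => rotation p.1 p.2 := by
  simp only [ContinuousLinearMap.rotation_apply]
  fun_prop

lemma continuous_rotation_left (z : E × E) : Continuous fun θ => rotation θ z := by
  simp only [ContinuousLinearMap.rotation_apply]
  fun_prop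

lemma norm_rotation_le (θ : ℝ) (z : E × E) : ‖rotation θ z‖ ≤ 2 * ‖z‖ := by
  have hle (a b : ℝ) (ha : |a| ≤ 1) (hb : |b| ≤ 1) : ‖a • z.1 + b • z.2‖ ≤ 2 * ‖z‖ := by
    refine (norm_add_le _ _).trans ?_
    rw [norm_smul, norm_smul, Real.norm_eq_abs, Real.norm_eq_abs]
    nlinarith [norm_nonneg z.1, norm_nonneg z.2, norm_fst_le z, norm_snd_le z]
  refine max_le (hle _ _ (Real.abs_cos_le_one θ) (Real.abs_sin_le_one θ))
    (hle _ _ ?_ (Real.abs_cos_le_one θ))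
  simpa using Real.abs_sin_le_one θ

lemma PolyGrowth.comp_rotation {F : E × E → ℝ} (hF : PolyGrowth F) (θ : ℝ) :
    PolyGrowth fun z => F (rotation θ z) :=
  hF.comp_of_norm_le (rotation θ).continuous (norm_rotation_le θ)

/-- `F'` is the derivative of `F` along the orbits of the rotations of `E × E`, that is, along the
vector field `(x, y) ↦ (y, -x)`. -/
def HasAngularDeriv (F F' : E × E → ℝ) : Prop :=
  ∀ z, HasDerivAt (fun θ => F (rotation θ z)) (F' z) 0

/-- `F` has polynomial growth and restricts to a trigonometric polynomial of degree at most `m` on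
every orbit of the rotations of `E × E`. -/
def IsOrbitTrigPoly (m : ℕ) (F : E × E → ℝ) : Prop :=
  PolyGrowth F ∧ ∀ z, IsTrigPoly m fun θ => F (rotation θ z)

/-- The derivative of `F` along the orbits of the rotations of `E × E`, with value `0` where `F` is
not differentiable along the orbit. -/
noncomputable def angularDeriv (F : E × E → ℝ) (z : E × E) : ℝ :=
  deriv (fun θ => F (rotation θ z)) 0

variable {F F' G G' : E × E → ℝ} {m k : ℕ}

namespace HasAngularDeriv

lemma hasDerivAt (hF : HasAngularDeriv F F') (z : E × E) (θ : ℝ) :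
    HasDerivAt (fun θ => F (rotation θ z)) (F' (rotation θ z)) θ := by
  have h : HasDerivAt (fun t => F (rotation (θ + t) z)) (F' (rotation θ z)) (θ - θ) := by
    simpa only [rotation_add, sub_self] using hF (rotation θ z)
  simpa only [add_sub_cancel] using h.comp_sub_const θ θ

lemma mul (hF : HasAngularDeriv F F') (hG : HasAngularDeriv G G') :
    HasAngularDeriv (fun z => F z * G z) fun z => F' z * G z + F z * G' z := fun z => by
  simpa using (hF z).fun_mul (hG z)

lemma scomp {φ φ' : ℝ → ℝ} (hφ : ∀ s, HasDerivAt φ (φ' s) s) (hF : HasAngularDeriv F F') :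
    HasAngularDeriv (fun z => φ (F z)) fun z => φ' (F z) * F' z := fun z => by
  have h := (hφ (F (rotation 0 z))).comp 0 (hF z)
  rwa [rotation_zero] at h

lemma sub_eq_integral (hF : HasAngularDeriv F F') (hF' : Continuous F') (z : E × E) (T : ℝ) :
    F (rotation T z) - F z = ∫ θ in (0 : ℝ)..T, F' (rotation θ z) := by
  rw [intervalIntegral.integral_eq_sub_of_hasDerivAt (f := fun θ => F (rotation θ z))
    (fun θ _ => hF.hasDerivAt z θ)
    ((hF'.comp (continuous_rotation_left z)).intervalIntegrable _ _), rotation_zero]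

end HasAngularDeriv

namespace IsOrbitTrigPoly

lemma mono (hF : IsOrbitTrigPoly m F) (hmk : m ≤ k) : IsOrbitTrigPoly k F :=
  ⟨hF.1, fun z => (hF.2 z).mono hmk⟩

lemma mul (hF : IsOrbitTrigPoly m F) (hG : IsOrbitTrigPoly k G) :
    IsOrbitTrigPoly (m + k) fun z => F z * G z :=
  ⟨hF.1.mul hG.1, fun z => (hF.2 z).mul (hG.2 z)⟩

lemma pow (hF : IsOrbitTrigPoly m F) (j : ℕ) : IsOrbitTrigPoly (j * m) fun z => F z ^ j :=
  ⟨hF.1.pow j, fun z => (hF.2 z).pow j⟩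

lemma hasAngularDeriv (hF : IsOrbitTrigPoly m F) : HasAngularDeriv F (angularDeriv F) :=
  fun z => ((hF.2 z).differentiable 0).hasDerivAt

end IsOrbitTrigPoly

lemma HasAngularDeriv.angularDeriv_eq (hF : HasAngularDeriv F F') : angularDeriv F = F' :=
  funext fun z => (hF z).deriv

lemma HasAngularDeriv.deriv_comp_rotation (hF : HasAngularDeriv F F') (z : E × E) :
    deriv (fun θ => F (rotation θ z)) = fun θ => F' (rotation θ z) :=
  funext fun θ => (hF.hasDerivAt z θ).deriv

end Rotation

section RotationIntegral

open ContinuousLinearMap (rotation)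

/-- A test function `φ` with continuous derivative `φ'`, `|φ| ≤ A` and `|φ'| ≤ 1`. -/
structure IsTest (φ φ' : ℝ → ℝ) (A : ℝ) : Prop where
  hasDerivAt : ∀ s, HasDerivAt φ (φ' s) s
  continuous_deriv : Continuous φ'
  abs_le : ∀ s, |φ s| ≤ A
  abs_deriv_le : ∀ s, |φ' s| ≤ 1

section NormedSpace

variable {E : Type*} [NormedAddCommGroup E] [NormedSpace ℝ E] {F F' : E × E → ℝ}

lemma PolyGrowth.exists_abs_comp_rotation_le (hF : PolyGrowth F) :
    ∃ H : E × E → ℝ, PolyGrowth H ∧ ∀ θ z, |F (rotation θ z)| ≤ H z := by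
  obtain ⟨-, C, N, hC⟩ := hF
  have hC0 : 0 ≤ C := by simpa using (abs_nonneg _).trans (hC 0)
  refine ⟨fun z => C * (1 + 2 * ‖z‖) ^ N,
    (((PolyGrowth.const 1).add (PolyGrowth.norm.const_mul 2)).pow N).const_mul C, fun θ z => ?_⟩
  exact (hC _).trans (mul_le_mul_of_nonneg_left
    (pow_le_pow_left₀ (by positivity) (by linarith [norm_rotation_le θ z]) N) hC0)

lemma PolyGrowth.intervalIntegral_comp_rotation (hF : PolyGrowth F) (T : ℝ) :
    PolyGrowth fun z => ∫ θ in (0 : ℝ)..T, F (rotation θ z) := by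
  obtain ⟨H, hH, hFH⟩ := hF.exists_abs_comp_rotation_le
  have hcont : Continuous (Function.uncurry fun (z : E × E) (θ : ℝ) => F (rotation θ z)) := by
    simp only [Function.uncurry_def, ContinuousLinearMap.rotation_apply]
    exact hF.continuous.comp (by fun_prop)
  refine (hH.const_mul |T|).mono
    (intervalIntegral.continuous_parametric_intervalIntegral_of_continuous' hcont 0 T) fun z => ?_
  have hle := intervalIntegral.norm_integral_le_of_norm_le_const
    (a := 0) (b := T) (f := fun θ => F (rotation θ z)) (C := H z) fun θ _ => hFH θ z
  rwa [sub_zero, mul_comm] at hle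

lemma PolyGrowth.intervalIntegrable_comp_rotation (hF : PolyGrowth F) (z : E × E) (a b : ℝ) :
    IntervalIntegrable (fun θ => F (rotation θ z)) volume a b :=
  (hF.continuous.comp (continuous_rotation_left z)).intervalIntegrable a b

lemma HasAngularDeriv.abs_comp_rotation_le (hF : HasAngularDeriv F F') (hF' : Continuous F')
    (z : E × E) (θ : ℝ) (hθ : θ ∈ Set.Icc (0 : ℝ) 1) :
    |F (rotation θ z)| ≤ |F z| + ∫ t in (0 : ℝ)..1, |F' (rotation t z)| := by
  have h_int : IntervalIntegrable (fun t => |F' (rotation t z)|) volume 0 1 :=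
    (hF'.abs.comp (continuous_rotation_left z)).intervalIntegrable 0 1
  calc |F (rotation θ z)| = |F z + ∫ t in (0 : ℝ)..θ, F' (rotation t z)| := by
        rw [← hF.sub_eq_integral hF', add_sub_cancel]
    _ ≤ |F z| + |∫ t in (0 : ℝ)..θ, F' (rotation t z)| := abs_add_le _ _
    _ ≤ |F z| + ∫ t in (0 : ℝ)..1, |F' (rotation t z)| := by
      gcongr
      exact (intervalIntegral.abs_integral_le_integral_abs hθ.1).trans
        (intervalIntegral.integral_mono_interval le_rfl hθ.1 hθ.2
          (.of_forall fun t => abs_nonneg _) h_int)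

end NormedSpace

variable {E : Type*} [NormedAddCommGroup E] [NormedSpace ℝ E] [CompleteSpace E]
  [SecondCountableTopology E] [MeasurableSpace E] [BorelSpace E] {μ : Measure E} [IsGaussian μ]
  {F F' G G' W W' : E × E → ℝ} {A T : ℝ}

lemma integral_comp_rotation (hμ : μ[id] = 0) (hF : Continuous F) (θ : ℝ) :
    ∫ z, F (rotation θ z) ∂μ.prod μ = ∫ z, F z ∂μ.prod μ := by
  conv_rhs => rw [← IsGaussian.map_rotation_eq_self hμ θ]
  rw [integral_map (rotation θ).continuous.aemeasurable hF.aestronglyMeasurable]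

lemma integral_intervalIntegral_comp_rotation (hμ : μ[id] = 0) (hF : PolyGrowth F) (T : ℝ) :
    ∫ z, (∫ θ in (0 : ℝ)..T, F (rotation θ z)) ∂μ.prod μ = T * ∫ z, F z ∂μ.prod μ := by
  obtain ⟨H, hH, hFH⟩ := hF.exists_abs_comp_rotation_le
  rw [← intervalIntegral_integral_swap]
  · simp [integral_comp_rotation hμ hF.continuous]
  · have : IsFiniteMeasure (volume.restrict (Set.uIoc 0 T)) :=
      ⟨by simp [Set.uIoc, Real.volume_Ioc]⟩
    exact (hH.integrable.comp_snd _).mono'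
      (hF.continuous.comp continuous_rotation).aestronglyMeasurable
      (.of_forall fun p => hFH p.1 p.2)

lemma HasAngularDeriv.integral_eq_zero (hμ : μ[id] = 0) (hF : HasAngularDeriv F F')
    (hFg : PolyGrowth F) (hFg' : PolyGrowth F') : ∫ z, F' z ∂μ.prod μ = 0 := by
  have h := integral_intervalIntegral_comp_rotation hμ hFg' 1
  simp only [← hF.sub_eq_integral hFg'.continuous] at h
  rw [integral_sub (hFg.comp_rotation 1).integrable hFg.integrable,
    integral_comp_rotation hμ hFg.continuous, sub_self, one_mul] at h
  exact h.symm

-- `φ'(F) F'` is an exact derivative along the rotations, so no boundary terms appear.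
lemma HasAngularDeriv.abs_integral_deriv_comp_mul_le (hμ : μ[id] = 0) {φ φ' : ℝ → ℝ}
    (hφ : IsTest φ φ' A) (hF : HasAngularDeriv F F') (hG : HasAngularDeriv G G')
    (hFg : PolyGrowth F) (hFg' : PolyGrowth F') (hGg : PolyGrowth G) (hGg' : PolyGrowth G') :
    |∫ z, φ' (F z) * F' z * G z ∂μ.prod μ| ≤ A * ∫ z, |G' z| ∂μ.prod μ := by
  have hφF : PolyGrowth fun z => φ (F z) := .of_abs_le
    ((continuous_iff_continuousAt.2 fun s => (hφ.hasDerivAt s).continuousAt).comp hFg.continuous)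
    fun z => hφ.abs_le _
  have hφF' : PolyGrowth fun z => φ' (F z) * F' z :=
    .mul (.of_abs_le (hφ.continuous_deriv.comp hFg.continuous) fun z => hφ.abs_deriv_le _) hFg'
  have hzero := ((hF.scomp hφ.hasDerivAt).mul hG).integral_eq_zero hμ (hφF.mul hGg)
    ((hφF'.mul hGg).add (hφF.mul hGg'))
  rw [integral_add (hφF'.mul hGg).integrable (hφF.mul hGg').integrable] at hzero
  rw [eq_neg_of_add_eq_zero_left hzero, abs_neg, ← integral_const_mul, ← Real.norm_eq_abs]
  have h_int : Integrable (fun z => A * |G' z|) (μ.prod μ) := (hGg'.abs.const_mul A).integrable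
  refine norm_integral_le_of_norm_le h_int (.of_forall fun z => ?_)
  rw [Real.norm_eq_abs, abs_mul]
  exact mul_le_mul_of_nonneg_right (hφ.abs_le _) (abs_nonneg _)

lemma abs_intervalIntegral_pow_le {f : ℝ → ℝ} (hf : Continuous f) (hT : 0 ≤ T) (q : ℕ) :
    |∫ t in (0 : ℝ)..T, f t| ^ (q + 1) ≤ T ^ q * ∫ t in (0 : ℝ)..T, |f t| ^ (q + 1) := by
  rcases hT.eq_or_lt with rfl | hT
  · simp
  have hJ := (convexOn_pow (q + 1)).map_set_average_le (μ := volume) (t := Set.Ioc 0 T)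
    (f := fun t => |f t|) (by fun_prop) isClosed_Ici (by simp [hT]) (by simp)
    (.of_forall fun t => abs_nonneg (f t))
    (hf.abs.continuousOn.integrableOn_Icc.mono_set Set.Ioc_subset_Icc_self)
    ((hf.abs.pow (q + 1)).continuousOn.integrableOn_Icc.mono_set Set.Ioc_subset_Icc_self)
  simp only [setAverage_eq, smul_eq_mul, Real.volume_real_Ioc_of_le hT.le, sub_zero,
    ← intervalIntegral.integral_of_le hT.le] at hJ
  calc |∫ t in (0 : ℝ)..T, f t| ^ (q + 1)
    _ ≤ (∫ t in (0 : ℝ)..T, |f t|) ^ (q + 1) := by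
      gcongr
      exact intervalIntegral.abs_integral_le_integral_abs hT.le
    _ = T ^ (q + 1) * (T⁻¹ * ∫ t in (0 : ℝ)..T, |f t|) ^ (q + 1) := by
      rw [← mul_pow, mul_inv_cancel_left₀ hT.ne']
    _ ≤ T ^ (q + 1) * (T⁻¹ * ∫ t in (0 : ℝ)..T, |f t| ^ (q + 1)) := by gcongr
    _ = T ^ q * ∫ t in (0 : ℝ)..T, |f t| ^ (q + 1) := by
      rw [pow_succ, mul_assoc, mul_inv_cancel_left₀ hT.ne']

lemma HasAngularDeriv.integral_abs_sub_pow_le (hμ : μ[id] = 0) (hF : HasAngularDeriv F F')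
    (hFg : PolyGrowth F) (hFg' : PolyGrowth F') (hT : 0 ≤ T) (q : ℕ) :
    ∫ z, |F (rotation T z) - F z| ^ (q + 1) ∂μ.prod μ ≤
      T ^ (q + 1) * ∫ z, |F' z| ^ (q + 1) ∂μ.prod μ := by
  have hpow := hFg'.abs.pow (q + 1)
  calc ∫ z, |F (rotation T z) - F z| ^ (q + 1) ∂μ.prod μ
    _ ≤ ∫ z, T ^ q * (∫ θ in (0 : ℝ)..T, |F' (rotation θ z)| ^ (q + 1)) ∂μ.prod μ := by
      refine integral_mono (((hFg.comp_rotation T).sub hFg).abs.pow (q + 1)).integrable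
        ((hpow.intervalIntegral_comp_rotation T).const_mul _).integrable fun z => ?_
      dsimp only
      rw [hF.sub_eq_integral hFg'.continuous]
      exact abs_intervalIntegral_pow_le (hFg'.continuous.comp (continuous_rotation_left z)) hT q
    _ = T ^ (q + 1) * ∫ z, |F' z| ^ (q + 1) ∂μ.prod μ := by
      rw [integral_const_mul, integral_intervalIntegral_comp_rotation hμ hpow, pow_succ, mul_assoc]

lemma HasAngularDeriv.integral_abs_mul_le (hμ : μ[id] = 0) (hW : HasAngularDeriv W W')
    (hWg : PolyGrowth W) (hWg' : PolyGrowth W') (hF : PolyGrowth F) {M : ℝ}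
    (hM : ∀ z, ∫ θ in (0 : ℝ)..1, |F (rotation θ z)| ≤ M) :
    ∫ z, |F z * W z| ∂μ.prod μ ≤
      M * (∫ z, |W z| ∂μ.prod μ + ∫ z, |W' z| ∂μ.prod μ) := by
  have hle (z : E × E) : ∫ θ in (0 : ℝ)..1, |F (rotation θ z) * W (rotation θ z)| ≤
      M * (|W z| + ∫ θ in (0 : ℝ)..1, |W' (rotation θ z)|) := by
    have hsup := hW.abs_comp_rotation_le hWg'.continuous z
    refine (intervalIntegral.integral_mono_on zero_le_one
      ((hF.mul hWg).abs.intervalIntegrable_comp_rotation z 0 1)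
      ((hF.abs.intervalIntegrable_comp_rotation z 0 1).mul_const _)
      fun θ hθ => (abs_mul _ _).trans_le
        (mul_le_mul_of_nonneg_left (hsup θ hθ) (abs_nonneg _))).trans ?_
    rw [intervalIntegral.integral_mul_const]
    exact mul_le_mul_of_nonneg_right (hM z) ((abs_nonneg _).trans (hsup 0 (by simp)))
  have hW'int := hWg'.abs.intervalIntegral_comp_rotation 1
  calc ∫ z, |F z * W z| ∂μ.prod μ
    _ = ∫ z, (∫ θ in (0 : ℝ)..1, |F (rotation θ z) * W (rotation θ z)|) ∂μ.prod μ := by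
      rw [integral_intervalIntegral_comp_rotation hμ (hF.mul hWg).abs, one_mul]
    _ ≤ ∫ z, M * (|W z| + ∫ θ in (0 : ℝ)..1, |W' (rotation θ z)|) ∂μ.prod μ :=
      integral_mono ((hF.mul hWg).abs.intervalIntegral_comp_rotation 1).integrable
        ((hWg.abs.add hW'int).const_mul M).integrable hle
    _ = M * (∫ z, |W z| ∂μ.prod μ + ∫ z, |W' z| ∂μ.prod μ) := by
      rw [integral_const_mul, integral_add hWg.abs.integrable hW'int.integrable,
        integral_intervalIntegral_comp_rotation hμ hWg'.abs, one_mul]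

end RotationIntegral

section Bernstein

open ContinuousLinearMap (rotation)

variable {E : Type*} [NormedAddCommGroup E] [NormedSpace ℝ E] {F G : E × E → ℝ}
  {m k : ℕ}

/-- Nodes of the interpolation formula for the derivative at `0` of a trigonometric polynomial of
degree at most `m`. -/
noncomputable def derivNodes (m : ℕ) : Finset ℝ := (IsTrigPoly.exists_deriv_zero_eq_sum m).choose

/-- Weights of the interpolation formula for the derivative at `0` of a trigonometric polynomial of
degree at most `m`. -/
noncomputable def derivWeights (m : ℕ) : ℝ → ℝ :=
  (IsTrigPoly.exists_deriv_zero_eq_sum m).choose_spec.choose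

/-- The constant of the Bernstein inequality in `L^(q+1)` obtained from the interpolation formula
with nodes `derivNodes m` and weights `derivWeights m`. -/
noncomputable def bernsteinConst (m q : ℕ) : ℝ :=
  (derivNodes m).card ^ q * ∑ θ ∈ derivNodes m, |derivWeights m θ| ^ (q + 1)

lemma bernsteinConst_nonneg (m q : ℕ) : 0 ≤ bernsteinConst m q := by
  unfold bernsteinConst
  positivity

namespace IsOrbitTrigPoly

lemma angularDeriv_eq_sum (hF : IsOrbitTrigPoly m F) : angularDeriv F =
    fun z => ∑ θ ∈ derivNodes m, derivWeights m θ * F (rotation θ z) :=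
  funext fun z => (IsTrigPoly.exists_deriv_zero_eq_sum m).choose_spec.choose_spec _ (hF.2 z)

protected lemma angularDeriv (hF : IsOrbitTrigPoly m F) : IsOrbitTrigPoly m (angularDeriv F) := by
  refine ⟨?_, fun z => ?_⟩
  · rw [hF.angularDeriv_eq_sum]
    exact .sum _ fun θ _ => (hF.1.comp_rotation θ).const_mul _
  · rw [← hF.hasAngularDeriv.deriv_comp_rotation z]
    exact (hF.2 z).deriv

variable [CompleteSpace E] [SecondCountableTopology E] [MeasurableSpace E] [BorelSpace E]
  {μ : Measure E} [IsGaussian μ]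

lemma integral_abs_angularDeriv_pow_le (hμ : μ[id] = 0) (hF : IsOrbitTrigPoly m F) (q : ℕ) :
    ∫ z, |angularDeriv F z| ^ (q + 1) ∂μ.prod μ ≤
      bernsteinConst m q * ∫ z, |F z| ^ (q + 1) ∂μ.prod μ := by
  have hpow := hF.1.abs.pow (q + 1)
  have hterm (θ : ℝ) : PolyGrowth fun z =>
      |derivWeights m θ| ^ (q + 1) * |F (rotation θ z)| ^ (q + 1) :=
    (hpow.comp_rotation θ).const_mul _
  have hle (z : E × E) : |angularDeriv F z| ^ (q + 1) ≤ (derivNodes m).card ^ q *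
      ∑ θ ∈ derivNodes m, |derivWeights m θ| ^ (q + 1) * |F (rotation θ z)| ^ (q + 1) := by
    simp only [hF.angularDeriv_eq_sum, ← mul_pow, ← abs_mul]
    exact (pow_le_pow_left₀ (abs_nonneg _) (Finset.abs_sum_le_sum_abs _ _) _).trans
      (pow_sum_le_card_mul_sum_pow (fun _ _ => abs_nonneg _) q)
  calc ∫ z, |angularDeriv F z| ^ (q + 1) ∂μ.prod μ
    _ ≤ ∫ z, (derivNodes m).card ^ q * ∑ θ ∈ derivNodes m,
          |derivWeights m θ| ^ (q + 1) * |F (rotation θ z)| ^ (q + 1) ∂μ.prod μ :=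
      integral_mono (hF.angularDeriv.1.abs.pow _).integrable
        ((PolyGrowth.sum _ fun θ _ => hterm θ).const_mul _).integrable hle
    _ = bernsteinConst m q * ∫ z, |F z| ^ (q + 1) ∂μ.prod μ := by
      rw [integral_const_mul, integral_finsetSum _ fun θ _ => (hterm θ).integrable]
      simp only [integral_const_mul, integral_comp_rotation hμ hpow.continuous]
      rw [← Finset.sum_mul, ← mul_assoc, bernsteinConst]

lemma integral_abs_angularDeriv_le (hμ : μ[id] = 0) (hF : IsOrbitTrigPoly m F) :
    ∫ z, |angularDeriv F z| ∂μ.prod μ ≤ bernsteinConst m 0 * ∫ z, |F z| ∂μ.prod μ := by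
  simpa using hF.integral_abs_angularDeriv_pow_le hμ 0

lemma abs_integral_deriv_comp_mul_le (hμ : μ[id] = 0) {φ φ' : ℝ → ℝ} {A : ℝ}
    (hφ : IsTest φ φ' A) (hF : IsOrbitTrigPoly m F) (hG : IsOrbitTrigPoly k G) :
    |∫ z, φ' (F z) * angularDeriv F z * G z ∂μ.prod μ| ≤
      A * (bernsteinConst k 0 * ∫ z, |G z| ∂μ.prod μ) :=
  (hF.hasAngularDeriv.abs_integral_deriv_comp_mul_le hμ hφ hG.hasAngularDeriv hF.1
    hF.angularDeriv.1 hG.1 hG.angularDeriv.1).trans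
    (mul_le_mul_of_nonneg_left (hG.integral_abs_angularDeriv_le hμ)
      ((abs_nonneg _).trans (hφ.abs_le 0)))

end IsOrbitTrigPoly

end Bernstein

section SmoothedInv

open ContinuousLinearMap (rotation)

/-- The kernel `p / (p² + r² + δ²)`. In the smoothing argument it replaces `1 / p`, where `p` is a
directional derivative; `r` is an independent copy of `p`. -/
noncomputable def smoothedInv (δ p r : ℝ) : ℝ := p / (p ^ 2 + r ^ 2 + δ ^ 2)

lemma abs_smoothedInv_le {δ : ℝ} (hδ : 0 < δ) (p r : ℝ) : |smoothedInv δ p r| ≤ 1 / δ := by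
  have hpos : 0 < p ^ 2 + r ^ 2 + δ ^ 2 := by positivity
  rw [smoothedInv, abs_div, abs_of_pos hpos, div_le_div_iff₀ hpos hδ]
  nlinarith [sq_abs p, sq_nonneg (|p| - δ), sq_nonneg r, sq_nonneg p]

lemma hasDerivAt_smoothedInv {δ : ℝ} (hδ : 0 < δ) {p r : ℝ → ℝ} {p' r' t : ℝ}
    (hp : HasDerivAt p p' t) (hr : HasDerivAt r r' t) :
    HasDerivAt (fun t => smoothedInv δ (p t) (r t))
      ((p' * (r t ^ 2 + δ ^ 2 - p t ^ 2) - 2 * (p t * (r t * r'))) *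
        ((p t ^ 2 + r t ^ 2 + δ ^ 2) ^ 2)⁻¹) t := by
  have hpos : 0 < p t ^ 2 + r t ^ 2 + δ ^ 2 := by positivity
  refine (hp.fun_div (((hp.fun_pow 2).fun_add (hr.fun_pow 2)).add_const (δ ^ 2))
    hpos.ne').congr_deriv ?_
  rw [← div_eq_mul_inv]
  congr 1
  push_cast
  ring

-- The numerator of the derivative is a trigonometric polynomial of degree `3 m`, so the kernel
-- has at most `6 m` monotonicity breaks.
lemma integral_abs_deriv_smoothedInv_le {m : ℕ} {p r : ℝ → ℝ} (hp : IsTrigPoly m p)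
    (hr : IsTrigPoly m r) {δ : ℝ} (hδ : 0 < δ) :
    ∫ θ in (0 : ℝ)..1, |deriv (fun θ => smoothedInv δ (p θ) (r θ)) θ| ≤
      2 * (1 / δ) * (6 * m + 1) := by
  set N : ℝ → ℝ := fun θ => deriv p θ * (r θ ^ 2 + δ ^ 2 + -1 * p θ ^ 2) +
    -2 * (p θ * (r θ * deriv r θ)) with hN
  have hNtrig : IsTrigPoly (3 * m) N := by
    have hquad := ((hr.pow 2).add (.const (δ ^ 2))).add ((hp.pow 2).const_mul (-1))
    have hcross := (hp.mul (hr.mul hr.deriv)).const_mul (-2)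
    exact ((hp.deriv.mul hquad).mono (by lia)).add (hcross.mono (by lia))
  have hpos (θ : ℝ) : 0 < p θ ^ 2 + r θ ^ 2 + δ ^ 2 := by positivity
  have hderiv (θ : ℝ) : HasDerivAt (fun θ => smoothedInv δ (p θ) (r θ))
      (N θ * ((p θ ^ 2 + r θ ^ 2 + δ ^ 2) ^ 2)⁻¹) θ := by
    refine (hasDerivAt_smoothedInv hδ (hp.differentiable θ).hasDerivAt
      (hr.differentiable θ).hasDerivAt).congr_deriv ?_
    rw [hN]
    ring
  have hcont : Continuous fun θ => N θ * ((p θ ^ 2 + r θ ^ 2 + δ ^ 2) ^ 2)⁻¹ :=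
    hNtrig.continuous.mul (.inv₀ ((((hp.continuous.pow 2).add (hr.continuous.pow 2)).add
      continuous_const).pow 2) fun θ => (pow_pos (hpos θ) 2).ne')
  simp only [(hderiv _).deriv]
  by_cases hN0 : N = 0
  · simp only [hN0, Pi.zero_apply, zero_mul, abs_zero, intervalIntegral.integral_zero]
    positivity
  obtain ⟨s, hs, hz⟩ := hNtrig.exists_finset_zeros hN0
  have hcard : (s.card : ℝ) ≤ 6 * m := mod_cast hs.trans (by lia)
  refine (integral_abs_deriv_le hderiv hcont (fun θ => abs_smoothedInv_le hδ _ _) s zero_le_one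
    fun t ht h => hz t ?_ ?_).trans (by gcongr)
  · exact ⟨by linarith [ht.1, Real.pi_pos], by linarith [ht.2, Real.pi_gt_three]⟩
  · exact (mul_eq_zero.1 h).resolve_right (inv_ne_zero (pow_pos (hpos t) 2).ne')

lemma PolyGrowth.smoothedInv {X : Type*} [NormedAddCommGroup X] {f g : X → ℝ} (hf : PolyGrowth f)
    (hg : PolyGrowth g) {δ : ℝ} (hδ : 0 < δ) : PolyGrowth fun x => smoothedInv δ (f x) (g x) :=
  .of_abs_le (hf.continuous.div (((hf.pow 2).add (hg.pow 2)).add (.const (δ ^ 2))).continuous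
    fun x => by positivity) fun x => abs_smoothedInv_le hδ _ _

variable {E : Type*} [NormedAddCommGroup E] [NormedSpace ℝ E] {P P' R R' W W' F : E × E → ℝ}
  {m k : ℕ} {δ A : ℝ}

lemma HasAngularDeriv.exists_smoothedInv (hP : HasAngularDeriv P P') (hR : HasAngularDeriv R R')
    (hPg : PolyGrowth P) (hPg' : PolyGrowth P') (hRg : PolyGrowth R) (hRg' : PolyGrowth R')
    (hδ : 0 < δ) :
    ∃ Q, PolyGrowth Q ∧ HasAngularDeriv (fun z => GaussPoly.smoothedInv δ (P z) (R z)) Q := by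
  have hpos (z : E × E) : 0 < P z ^ 2 + R z ^ 2 + δ ^ 2 := by positivity
  have hden : PolyGrowth fun z => ((P z ^ 2 + R z ^ 2 + δ ^ 2) ^ 2)⁻¹ := by
    refine .of_abs_le (C := ((δ ^ 2) ^ 2)⁻¹) (Continuous.inv₀
      ((((hPg.pow 2).add (hRg.pow 2)).add (.const (δ ^ 2))).pow 2).continuous
      fun z => (pow_pos (hpos z) 2).ne') fun z => ?_
    rw [abs_of_pos (by positivity)]
    gcongr
    nlinarith [sq_nonneg (P z), sq_nonneg (R z)]
  refine ⟨_, PolyGrowth.mul ((hPg'.mul (((hRg.pow 2).add (.const (δ ^ 2))).sub (hPg.pow 2))).sub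
    ((hPg.mul (hRg.mul hRg')).const_mul 2)) hden, fun z => ?_⟩
  simpa only [rotation_zero] using hasDerivAt_smoothedInv hδ (hP z) (hR z)

variable [CompleteSpace E] [SecondCountableTopology E] [MeasurableSpace E] [BorelSpace E]
  {μ : Measure E} [IsGaussian μ]

lemma abs_integral_deriv_comp_mul_smoothedInv_le (hμ : μ[id] = 0) {φ φ' : ℝ → ℝ}
    (hφ : IsTest φ φ' A) (hF : IsOrbitTrigPoly m F) (hR : IsOrbitTrigPoly m R)
    (hW : IsOrbitTrigPoly k W) (hδ : 0 < δ) :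
    |∫ z, φ' (F z) * angularDeriv F z * (smoothedInv δ (angularDeriv F z) (R z) * W z) ∂μ.prod μ| ≤
      A * (1 / δ * (2 * (6 * m + 1) * (1 + bernsteinConst k 0) + bernsteinConst k 0)) *
        ∫ z, |W z| ∂μ.prod μ := by
  have hP := hF.angularDeriv
  obtain ⟨Q, hQg, hQ⟩ := hP.hasAngularDeriv.exists_smoothedInv hR.hasAngularDeriv
    hP.1 hP.angularDeriv.1 hR.1 hR.angularDeriv.1 hδ
  have hqg : PolyGrowth fun z => smoothedInv δ (angularDeriv F z) (R z) := hP.1.smoothedInv hR.1 hδ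
  have hWd := hW.hasAngularDeriv
  have hW' := hW.angularDeriv
  have hbern := hW.integral_abs_angularDeriv_le hμ
  have hA : 0 ≤ A := (abs_nonneg _).trans (hφ.abs_le 0)
  have hQint (z : E × E) : ∫ θ in (0 : ℝ)..1, |Q (rotation θ z)| ≤ 2 * (1 / δ) * (6 * m + 1) := by
    have h := integral_abs_deriv_smoothedInv_le (hP.2 z) (hR.2 z) hδ
    rwa [hQ.deriv_comp_rotation z] at h
  have hQW : ∫ z, |Q z * W z| ∂μ.prod μ ≤ 2 * (1 / δ) * (6 * m + 1) *
      ((1 + bernsteinConst k 0) * ∫ z, |W z| ∂μ.prod μ) :=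
    (hWd.integral_abs_mul_le hμ hW.1 hW'.1 hQg hQint).trans
      (mul_le_mul_of_nonneg_left (by linarith) (by positivity))
  have hqW' : ∫ z, |smoothedInv δ (angularDeriv F z) (R z) * angularDeriv W z| ∂μ.prod μ ≤
      1 / δ * (bernsteinConst k 0 * ∫ z, |W z| ∂μ.prod μ) := by
    refine le_trans ?_ (mul_le_mul_of_nonneg_left hbern (by positivity))
    rw [← integral_const_mul]
    refine integral_mono (hqg.mul hW'.1).abs.integrable (hW'.1.abs.const_mul _).integrable
      fun z => (abs_mul _ _).trans_le ?_
    exact mul_le_mul_of_nonneg_right (abs_smoothedInv_le hδ _ _) (abs_nonneg _)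
  calc |∫ z, φ' (F z) * angularDeriv F z *
        (smoothedInv δ (angularDeriv F z) (R z) * W z) ∂μ.prod μ|
    _ ≤ A * ∫ z, |Q z * W z + smoothedInv δ (angularDeriv F z) (R z) * angularDeriv W z|
          ∂μ.prod μ :=
      hF.hasAngularDeriv.abs_integral_deriv_comp_mul_le hμ hφ (hQ.mul hWd) hF.1 hP.1
        (hqg.mul hW.1) ((hQg.mul hW.1).add (hqg.mul hW'.1))
    _ ≤ A * (∫ z, |Q z * W z| ∂μ.prod μ +
          ∫ z, |smoothedInv δ (angularDeriv F z) (R z) * angularDeriv W z| ∂μ.prod μ) := by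
      gcongr
      rw [← integral_add (hQg.mul hW.1).abs.integrable (hqg.mul hW'.1).abs.integrable]
      exact integral_mono ((hQg.mul hW.1).add (hqg.mul hW'.1)).abs.integrable
        ((hQg.mul hW.1).abs.add (hqg.mul hW'.1).abs).integrable fun z => abs_add_le _ _
    _ ≤ A * (2 * (1 / δ) * (6 * m + 1) * ((1 + bernsteinConst k 0) * ∫ z, |W z| ∂μ.prod μ) +
          1 / δ * (bernsteinConst k 0 * ∫ z, |W z| ∂μ.prod μ)) := by gcongr
    _ = A * (1 / δ * (2 * (6 * m + 1) * (1 + bernsteinConst k 0) + bernsteinConst k 0)) *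
        ∫ z, |W z| ∂μ.prod μ := by ring

end SmoothedInv

/-! ### The standard Gaussian measure and polynomials -/

open MvPolynomial (eval pderiv)

/-- The standard Gaussian measure on `ℝⁿ`. The root prefix separates it from
`ProbabilityTheory.stdGaussian`. -/
noncomputable abbrev γ (n : ℕ) : Measure (Fin n → ℝ) := _root_.stdGaussian n

instance isGaussian_γ (n : ℕ) : IsGaussian (γ n) := by
  have h : γ n = (ProbabilityTheory.stdGaussian (EuclideanSpace ℝ (Fin n))).map
      (EuclideanSpace.equiv (Fin n) ℝ) := by
    rw [← map_pi_eq_stdGaussian, Measure.map_map (by fun_prop) (by fun_prop)]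
    exact Measure.map_id.symm
  rw [h]
  infer_instance

section Gaussian

variable {n : ℕ}

lemma integral_id_γ : (γ n)[id] = 0 := by
  ext i
  have h := (ContinuousLinearMap.proj (R := ℝ) (φ := fun _ : Fin n => ℝ) i).integral_comp_id_comm
    (μ := γ n) IsGaussian.integrable_id
  refine h.symm.trans (Eq.trans ?_ (integral_id_gaussianReal (μ := 0) (v := 1)))
  exact integral_comp_eval (μ := fun _ : Fin n => gaussianReal 0 1) (f := fun t => t)
    (by fun_prop)

lemma map_sum_mul_γ (v : Fin n → ℝ) :
    (γ n).map (fun y => ∑ i, y i * v i) = (gaussianReal 0 1).map fun t => √(∑ i, v i ^ 2) * t := by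
  let L : StrongDual ℝ (Fin n → ℝ) := ∑ i, v i • ContinuousLinearMap.proj (R := ℝ) i
  have hL : ⇑L = ∑ i, fun y : Fin n → ℝ => v i * y i := by ext; simp [L]
  have hmean : (γ n)[L] = 0 :=
    (L.integral_comp_id_comm IsGaussian.integrable_id).trans (by
      rw [show ∫ x, x ∂γ n = 0 from integral_id_γ, map_zero])
  have hvar : Var[L; γ n] = ∑ i, v i ^ 2 := by
    rw [hL]
    refine (variance_sum_pi (μ := fun _ : Fin n => gaussianReal 0 1) (X := fun i t => v i * t)
      fun i => IsGaussian.memLp_two_id.const_mul _).trans (Finset.sum_congr rfl fun i _ => ?_)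
    exact (variance_const_mul _ _ _).trans (by simp [variance_fun_id_gaussianReal])
  have hsum : (fun y : Fin n → ℝ => ∑ i, y i * v i) = L := by ext; simp [hL, mul_comm]
  rw [hsum, IsGaussian.map_eq_gaussianReal L, gaussianReal_map_const_mul, hmean, hvar]
  congr 1
  · simp
  · ext
    simp [Real.sq_sqrt, Finset.sum_nonneg, sq_nonneg]

lemma integral_comp_sum_mul_γ (v : Fin n → ℝ) {f : ℝ → ℝ} (hf : Measurable f) :
    ∫ y, f (∑ i, y i * v i) ∂γ n = ∫ t, f (√(∑ i, v i ^ 2) * t) ∂gaussianReal 0 1 := by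
  rw [← integral_map (φ := fun y : Fin n → ℝ => ∑ i, y i * v i)
    (Continuous.aemeasurable (by fun_prop)) hf.aestronglyMeasurable, map_sum_mul_γ,
    integral_map (by fun_prop) hf.aestronglyMeasurable]

lemma integral_abs_sum_mul_pow_γ (v : Fin n → ℝ) (q : ℕ) :
    ∫ y, |∑ i, y i * v i| ^ q ∂γ n =
      √(∑ i, v i ^ 2) ^ q * ∫ t, |t| ^ q ∂gaussianReal 0 1 := by
  rw [integral_comp_sum_mul_γ v (f := fun t => |t| ^ q) (by fun_prop), ← integral_const_mul]
  simp only [abs_mul, mul_pow, abs_of_nonneg (Real.sqrt_nonneg _)]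

lemma integral_sq_gaussianReal : ∫ t, |t| ^ 2 ∂gaussianReal 0 1 = 1 := by
  have h := variance_id_gaussianReal (μ := 0) (v := 1)
  rw [variance_eq_integral (by fun_prop)] at h
  simpa using h

end Gaussian

section Polynomial

open ContinuousLinearMap (rotation)

variable {n k : ℕ} (g : MvPolynomial (Fin n) ℝ)

lemma PolyGrowth.eval : PolyGrowth fun x => eval x g := by
  induction g using MvPolynomial.induction_on with
  | C a => simpa using PolyGrowth.const (E := Fin n → ℝ) a
  | add p q hp hq => simpa using hp.add hq
  | mul_X p i hp =>
    simpa using hp.mul ((PolyGrowth.norm (E := Fin n → ℝ)).mono (continuous_apply i)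
      fun x => norm_le_pi_norm x i)

/-- The directional derivative `∂_y g` as a polynomial. -/
noncomputable def dirDeriv (y : Fin n → ℝ) : MvPolynomial (Fin n) ℝ :=
  ∑ i, MvPolynomial.C (y i) * pderiv i g

/-- The directional derivative `∂_y g(x)` as a function of the pair `z = (x, y)`. -/
noncomputable def evalDirDeriv (z : (Fin n → ℝ) × (Fin n → ℝ)) : ℝ :=
  ∑ i, z.2 i * eval z.1 (pderiv i g)

lemma eval_dirDeriv (x y : Fin n → ℝ) : eval x (dirDeriv g y) = evalDirDeriv g (x, y) := by
  simp [dirDeriv, evalDirDeriv, map_sum]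

lemma totalDegree_pderiv_le (i : Fin n) : (pderiv i g).totalDegree ≤ g.totalDegree - 1 := by
  classical
  conv_lhs => rw [g.as_sum, map_sum]
  refine MvPolynomial.totalDegree_finsetSum_le fun s hs => ?_
  rw [MvPolynomial.pderiv_monomial]
  by_cases h0 : s i = 0
  · simp [h0]
  have hs' : s - Finsupp.single i 1 + Finsupp.single i 1 = s :=
    tsub_add_cancel_of_le (Finsupp.single_le_iff.2 (Nat.one_le_iff_ne_zero.2 h0))
  have hdeg : (s - Finsupp.single i 1).degree + 1 = s.degree := by
    simpa using congrArg Finsupp.degree hs'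
  have hle : s.degree ≤ g.totalDegree := MvPolynomial.le_totalDegree hs
  exact (MvPolynomial.totalDegree_monomial_le _ _).trans
    (show (s - Finsupp.single i 1).degree ≤ _ by lia)

variable {g} in
lemma totalDegree_dirDeriv_le (hg : g.totalDegree ≤ k + 1) (y : Fin n → ℝ) :
    (dirDeriv g y).totalDegree ≤ k :=
  MvPolynomial.totalDegree_finsetSum_le fun i _ => by
    grw [MvPolynomial.totalDegree_mul, totalDegree_pderiv_le, hg]
    simp

lemma hasAngularDeriv_eval : HasAngularDeriv (fun z => eval z.1 g) (evalDirDeriv g) := by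
  intro z
  induction g using MvPolynomial.induction_on with
  | C a => simpa [evalDirDeriv] using hasDerivAt_const (0 : ℝ) a
  | add p q hp hq =>
    simpa [evalDirDeriv, mul_add, Finset.sum_add_distrib] using hp.fun_add hq
  | mul_X p i hp =>
    have hX : HasDerivAt (fun θ => (rotation θ z).1 i) (z.2 i) 0 := by
      exact (((Real.hasDerivAt_cos 0).mul_const (z.1 i)).fun_add
        ((Real.hasDerivAt_sin 0).mul_const (z.2 i))).congr_deriv (by simp)
    simp only [map_mul, MvPolynomial.eval_X]
    refine (hp.fun_mul hX).congr_deriv ?_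
    have hleibniz (j : Fin n) : z.2 j * eval z.1 (pderiv j (p * MvPolynomial.X i)) =
        (if j = i then eval z.1 p * z.2 j else 0) + z.2 j * eval z.1 (pderiv j p) * z.1 i := by
      rcases eq_or_ne j i with rfl | hij
      · simp; ring
      · simp [hij, hij.symm]; ring
    simp only [evalDirDeriv, hleibniz]
    simp [Finset.sum_add_distrib, Finset.sum_mul, add_comm]

variable {g} in
lemma isOrbitTrigPoly_eval (hg : g.totalDegree ≤ k) : IsOrbitTrigPoly k fun z => eval z.1 g := by
  refine ⟨(PolyGrowth.eval g).fst, fun z => ?_⟩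
  simp only [MvPolynomial.eval_eq]
  refine .sum _ fun s hs => .const_mul _ ((IsTrigPoly.prod (m := s) _ fun i _ => ?_).mono
    ((MvPolynomial.le_totalDegree hs).trans hg))
  have hcoord : IsTrigPoly 1 fun θ => (rotation θ z).1 i := by
    simpa [ContinuousLinearMap.rotation_apply, mul_comm] using
      (IsTrigPoly.cos.const_mul (z.1 i)).add (IsTrigPoly.sin.const_mul (z.2 i))
  simpa using hcoord.pow (s i)

lemma angularDeriv_eval : angularDeriv (fun z => eval z.1 g) = evalDirDeriv g :=
  (hasAngularDeriv_eval g).angularDeriv_eq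

variable {g} in
lemma isOrbitTrigPoly_evalDirDeriv (hg : g.totalDegree ≤ k) :
    IsOrbitTrigPoly k (evalDirDeriv g) :=
  angularDeriv_eval g ▸ (isOrbitTrigPoly_eval hg).angularDeriv

lemma PolyGrowth.evalDirDeriv : PolyGrowth (evalDirDeriv g) :=
  (isOrbitTrigPoly_evalDirDeriv (g := g) le_rfl).1

end Polynomial

/-! ### Moment inequalities for polynomials -/

section Moments

variable {Ω : Type*} [MeasurableSpace Ω] {μ : Measure Ω} {f g : Ω → ℝ}

lemma integral_mul_le_sqrt_mul_sqrt (hf : MemLp f 2 μ) (hg : MemLp g 2 μ) :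
    ∫ x, f x * g x ∂μ ≤ √(∫ x, f x ^ 2 ∂μ) * √(∫ x, g x ^ 2 ∂μ) := by
  have h := integral_mul_norm_le_Lp_mul_Lq (μ := μ) (f := f) (g := g) Real.HolderConjugate.two_two
    (by simpa using hf) (by simpa using hg)
  simp only [Real.norm_eq_abs, Real.rpow_ofNat, sq_abs, ← Real.sqrt_eq_rpow, ← abs_mul] at h
  exact ((le_abs_self _).trans abs_integral_le_integral_abs).trans h

lemma integral_finsetSum_sq_le {ι : Type*} (s : Finset ι) {w : ι → Ω → ℝ} {m : ι → ℝ} {C : ℝ}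
    (hw : ∀ i, MemLp (w i) 2 μ) (hC : 0 ≤ C) (hm : ∀ i, 0 ≤ m i)
    (h : ∀ i, ∫ x, w i x ^ 2 ∂μ ≤ C * m i ^ 2) :
    ∫ x, (∑ i ∈ s, w i x) ^ 2 ∂μ ≤ C * (∑ i ∈ s, m i) ^ 2 := by
  have hsqrt (i : ι) : √(∫ x, w i x ^ 2 ∂μ) ≤ √C * m i := by
    grw [h i, Real.sqrt_mul hC, Real.sqrt_sq (hm i)]
  have h_int (i j : ι) : Integrable (fun x => w i x * w j x) μ := (hw i).integrable_mul (hw j)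
  calc ∫ x, (∑ i ∈ s, w i x) ^ 2 ∂μ = ∑ i ∈ s, ∑ j ∈ s, ∫ x, w i x * w j x ∂μ := by
        simp only [sq, Finset.sum_mul_sum]
        rw [integral_finsetSum _ fun i _ => integrable_finsetSum _ fun j _ => h_int i j]
        exact Finset.sum_congr rfl fun i _ => integral_finsetSum _ fun j _ => h_int i j
    _ ≤ ∑ i ∈ s, ∑ j ∈ s, (√C * m i) * (√C * m j) := by
        gcongr with i _ j _
        exact (integral_mul_le_sqrt_mul_sqrt (hw i) (hw j)).trans
          (mul_le_mul (hsqrt i) (hsqrt j) (Real.sqrt_nonneg _)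
            (mul_nonneg (Real.sqrt_nonneg _) (hm i)))
    _ = C * (∑ i ∈ s, m i) ^ 2 := by
        rw [← Finset.sum_mul_sum, ← Finset.mul_sum, ← sq, mul_pow, Real.sq_sqrt hC]

end Moments

section GaussianMoments

variable {E : Type*} [NormedAddCommGroup E] [NormedSpace ℝ E] [CompleteSpace E]
  [SecondCountableTopology E] [MeasurableSpace E] [BorelSpace E] {μ : Measure E} [IsGaussian μ]
  {f : E → ℝ}

lemma PolyGrowth.memLp_two (hf : PolyGrowth f) : MemLp f 2 μ :=
  (memLp_two_iff_integrable_sq hf.continuous.aestronglyMeasurable).2 (hf.pow 2).integrable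

lemma PolyGrowth.integral_sub_integral_pow_le (hf : PolyGrowth f) {q : ℕ} (hq : Even q) :
    ∫ x, (f x - ∫ y, f y ∂μ) ^ q ∂μ ≤ ∫ z, (f z.1 - f z.2) ^ q ∂μ.prod μ := by
  have hprod : PolyGrowth fun z : E × E => (f z.1 - f z.2) ^ q := (hf.fst.sub hf.snd).pow q
  rw [integral_prod _ hprod.integrable]
  refine integral_mono ((hf.sub (.const _)).pow q).integrable hprod.integrable.integral_prod_left
    fun x => ?_
  have hsub := (PolyGrowth.const (f x)).sub hf
  have h := hq.convexOn_pow.map_integral_le (μ := μ) (f := fun y => f x - f y)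
    (continuous_pow q).continuousOn isClosed_univ (by simp) hsub.integrable (hsub.pow q).integrable
  simpa [integral_sub (integrable_const _) hf.integrable] using h

lemma PolyGrowth.integral_pow_four_le (hf : PolyGrowth f) :
    ∫ x, f x ^ 4 ∂μ ≤
      8 * ((∫ z, (f z.1 - f z.2) ^ 4 ∂μ.prod μ) + (∫ x, f x ^ 2 ∂μ) ^ 2) := by
  set m := ∫ x, f x ∂μ
  have hsub : PolyGrowth fun x => (f x - m) ^ 4 := (hf.sub (.const m)).pow 4
  have hmean : m ^ 2 ≤ ∫ x, f x ^ 2 ∂μ := by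
    have h := variance_nonneg f μ
    rw [variance_eq_sub hf.memLp_two] at h
    exact sub_nonneg.1 h
  calc ∫ x, f x ^ 4 ∂μ ≤ ∫ x, 8 * ((f x - m) ^ 4 + m ^ 4) ∂μ := by
        refine integral_mono (hf.pow 4).integrable ((hsub.add (.const _)).const_mul 8).integrable
          fun x => ?_
        have h := Even.add_pow_le (n := 4) (a := f x - m) (b := m) (by decide)
        norm_num at h
        exact h
    _ = 8 * ((∫ x, (f x - m) ^ 4 ∂μ) + (m ^ 2) ^ 2) := by
        rw [integral_const_mul, integral_add hsub.integrable (integrable_const _)]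
        simp [← pow_mul]
    _ ≤ _ := by
        gcongr
        exact hf.integral_sub_integral_pow_le (by decide)

end GaussianMoments

section PolynomialMoments

open ContinuousLinearMap (rotation)

variable {n k : ℕ} (f : MvPolynomial (Fin n) ℝ)

/-- The squared length `|∇f(x)|²` of the gradient. -/
noncomputable def gradSq (x : Fin n → ℝ) : ℝ := ∑ i, eval x (pderiv i f) ^ 2

/-- The mean `𝔼 f` of a polynomial under the standard Gaussian measure. -/
noncomputable def mean : ℝ := ∫ x, eval x f ∂γ n

/-- The second moment `𝔼 f²` of a polynomial under the standard Gaussian measure. -/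
noncomputable def secondMoment : ℝ := ∫ x, eval x f ^ 2 ∂γ n

/-- The variance `𝔻 f` of a polynomial under the standard Gaussian measure. -/
noncomputable def polyVar : ℝ := Var[fun x => eval x f; γ n]

/-- The Dirichlet energy `𝔼 |∇f|²` of a polynomial under the standard Gaussian measure. -/
noncomputable def energy : ℝ := ∫ x, gradSq f x ∂γ n

lemma gradSq_nonneg (x : Fin n → ℝ) : 0 ≤ gradSq f x := Finset.sum_nonneg fun _ _ => sq_nonneg _

lemma PolyGrowth.gradSq : PolyGrowth (gradSq f) :=
  .sum _ fun i _ => (PolyGrowth.eval (pderiv i f)).pow 2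

lemma secondMoment_nonneg : 0 ≤ secondMoment f := integral_nonneg fun _ => sq_nonneg _

lemma polyVar_nonneg : 0 ≤ polyVar f := variance_nonneg _ _

lemma energy_nonneg : 0 ≤ energy f := integral_nonneg (gradSq_nonneg f)

lemma secondMoment_eq : secondMoment f = polyVar f + mean f ^ 2 := by
  rw [polyVar, variance_eq_sub (PolyGrowth.eval f).memLp_two]
  exact (sub_add_cancel _ _).symm

lemma energy_eq_sum : energy f = ∑ i, secondMoment (pderiv i f) :=
  integral_finsetSum _ fun i _ => ((PolyGrowth.eval (pderiv i f)).pow 2).integrable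

lemma integral_abs_evalDirDeriv_pow (q : ℕ) :
    ∫ z, |evalDirDeriv f z| ^ q ∂(γ n).prod (γ n) =
      (∫ t, |t| ^ q ∂gaussianReal 0 1) * ∫ x, √(gradSq f x) ^ q ∂γ n := by
  rw [integral_prod _ ((PolyGrowth.evalDirDeriv f).abs.pow q).integrable, ← integral_const_mul]
  congr with x
  exact (integral_abs_sum_mul_pow_γ (fun i => eval x (pderiv i f)) q).trans (mul_comm _ _)

lemma integral_abs_evalDirDeriv_sq :
    ∫ z, |evalDirDeriv f z| ^ 2 ∂(γ n).prod (γ n) = energy f := by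
  simp only [integral_abs_evalDirDeriv_pow, integral_sq_gaussianReal, one_mul,
    Real.sq_sqrt (gradSq_nonneg f _), energy]

lemma integral_abs_evalDirDeriv_pow_four :
    ∫ z, |evalDirDeriv f z| ^ 4 ∂(γ n).prod (γ n) =
      (∫ t, |t| ^ 4 ∂gaussianReal 0 1) * ∫ x, gradSq f x ^ 2 ∂γ n := by
  simp only [integral_abs_evalDirDeriv_pow, show 4 = 2 * 2 from rfl, pow_mul (√_),
    Real.sq_sqrt (gradSq_nonneg f _)]

-- The rotation by `π / 2` turns the first component into the second one.
lemma integral_eval_sub_eval_pow_le (q : ℕ) :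
    ∫ z, |eval z.1 f - eval z.2 f| ^ (q + 1) ∂(γ n).prod (γ n) ≤
      (Real.pi / 2) ^ (q + 1) * ∫ z, |evalDirDeriv f z| ^ (q + 1) ∂(γ n).prod (γ n) := by
  have h := (hasAngularDeriv_eval f).integral_abs_sub_pow_le (μ := γ n) integral_id_γ
    (PolyGrowth.eval f).fst (PolyGrowth.evalDirDeriv f) (by positivity : 0 ≤ Real.pi / 2) q
  simpa [ContinuousLinearMap.rotation_apply, abs_sub_comm] using h

theorem polyVar_le_energy : polyVar f ≤ (Real.pi / 2) ^ 2 * energy f := by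
  rw [polyVar, variance_eq_integral (PolyGrowth.eval f).continuous.aemeasurable,
    ← integral_abs_evalDirDeriv_sq]
  refine ((PolyGrowth.eval f).integral_sub_integral_pow_le even_two).trans ?_
  simpa using integral_eval_sub_eval_pow_le f 1

variable {f}

theorem energy_le_secondMoment (hf : f.totalDegree ≤ k) :
    energy f ≤ bernsteinConst k 1 * secondMoment f := by
  have h := (isOrbitTrigPoly_eval hf).integral_abs_angularDeriv_pow_le (μ := γ n) integral_id_γ 1
  rw [angularDeriv_eval, integral_abs_evalDirDeriv_sq] at h
  simpa [secondMoment, integral_fun_fst fun x => eval x f ^ 2] using h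

lemma integral_gradSq_sq_le {C : ℝ} (hC : 0 ≤ C)
    (h : ∀ i, ∫ x, eval x (pderiv i f) ^ 4 ∂γ n ≤ C * secondMoment (pderiv i f) ^ 2) :
    ∫ x, gradSq f x ^ 2 ∂γ n ≤ C * energy f ^ 2 := by
  rw [energy_eq_sum]
  refine integral_finsetSum_sq_le _ (fun i => ((PolyGrowth.eval _).pow 2).memLp_two) hC
    (fun i => secondMoment_nonneg _) fun i => ?_
  simpa [← pow_mul] using h i

end PolynomialMoments

-- Hypercontractivity with a dimension-free constant, by induction on the degree: the fourth moment
-- of `f - 𝔼 f` is controlled by that of `|∇f|`, the latter by the partial derivatives.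
theorem exists_integral_eval_pow_four_le (k : ℕ) : ∃ C : ℝ, 0 ≤ C ∧
    ∀ (n : ℕ) (f : MvPolynomial (Fin n) ℝ), f.totalDegree ≤ k →
      ∫ x, eval x f ^ 4 ∂γ n ≤ C * secondMoment f ^ 2 := by
  induction k with
  | zero =>
    refine ⟨1, zero_le_one, fun n f hf => ?_⟩
    rw [MvPolynomial.totalDegree_eq_zero_iff_eq_C.1 (Nat.le_zero.1 hf)]
    simp [secondMoment, ← pow_mul]
  | succ k ih =>
    obtain ⟨C, hC, ih⟩ := ih
    set c := ∫ t, |t| ^ 4 ∂gaussianReal 0 1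
    have : 0 ≤ c := integral_nonneg fun _ => by positivity
    set b := bernsteinConst (k + 1) 1
    refine ⟨8 * ((Real.pi / 2) ^ 4 * (c * (C * b ^ 2)) + 1), by positivity, fun n f hf => ?_⟩
    have hgrad : ∫ x, gradSq f x ^ 2 ∂γ n ≤ C * (b * secondMoment f) ^ 2 := by
      refine (integral_gradSq_sq_le hC fun i => ih n _ ?_).trans ?_
      · grw [totalDegree_pderiv_le, hf, Nat.add_sub_cancel]
      · gcongr
        exacts [energy_nonneg f, energy_le_secondMoment hf]
    calc ∫ x, eval x f ^ 4 ∂γ n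
        ≤ 8 * ((∫ z, (eval z.1 f - eval z.2 f) ^ 4 ∂(γ n).prod (γ n)) + secondMoment f ^ 2) := by
          exact (PolyGrowth.eval f).integral_pow_four_le (μ := γ n)
      _ ≤ 8 * ((Real.pi / 2) ^ 4 * (c * ∫ x, gradSq f x ^ 2 ∂γ n) + secondMoment f ^ 2) := by
          gcongr
          have h := integral_eval_sub_eval_pow_le f 3
          simp only [Nat.reduceAdd, integral_abs_evalDirDeriv_pow_four,
            (by decide : Even 4).pow_abs (_ - _)] at h
          exact h
      _ ≤ 8 * ((Real.pi / 2) ^ 4 * (c * (C * (b * secondMoment f) ^ 2)) + secondMoment f ^ 2) := by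
          gcongr
      _ = _ := by ring

theorem exists_secondMoment_mul_le (k : ℕ) : ∃ C : ℝ, 0 ≤ C ∧
    ∀ (n : ℕ) (f g : MvPolynomial (Fin n) ℝ), f.totalDegree ≤ k → g.totalDegree ≤ k →
      secondMoment (f * g) ≤ C * secondMoment f * secondMoment g := by
  obtain ⟨C, hC, h⟩ := exists_integral_eval_pow_four_le k
  refine ⟨C, hC, fun n f g hf hg => ?_⟩
  have hsqrt {p : MvPolynomial (Fin n) ℝ} (hp : p.totalDegree ≤ k) :
      √(∫ x, (eval x p ^ 2) ^ 2 ∂γ n) ≤ √C * secondMoment p := by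
    simp only [← pow_mul]
    grw [h n p hp, Real.sqrt_mul hC, Real.sqrt_sq (secondMoment_nonneg p)]
  calc secondMoment (f * g) = ∫ x, eval x f ^ 2 * eval x g ^ 2 ∂γ n := by
        simp [secondMoment, mul_pow]
    _ ≤ (√C * secondMoment f) * (√C * secondMoment g) :=
        (integral_mul_le_sqrt_mul_sqrt ((PolyGrowth.eval f).pow 2).memLp_two
          ((PolyGrowth.eval g).pow 2).memLp_two).trans
          (mul_le_mul (hsqrt hf) (hsqrt hg) (Real.sqrt_nonneg _)
            (mul_nonneg (Real.sqrt_nonneg _) (secondMoment_nonneg f)))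
    _ = C * secondMoment f * secondMoment g := by
        rw [mul_mul_mul_comm, Real.mul_self_sqrt hC, mul_assoc]

/-! ### The smoothing inequality for polynomials of degree one -/

/-- The weighted smoothing inequality `|𝔼 φ'(g) U²| ≤ C (A² / 𝔻 g)^(1 / (2 d)) 𝔼 U²`, where
`|φ| ≤ A` and `|φ'| ≤ 1`, for polynomials `g` of degree at most `d` and weights `U` of degree at
most `D`. The constant depends on `d` and `D`, but not on the dimension. -/
def SmoothingInequality (d D : ℕ) : Prop :=
  ∃ C : ℝ, 0 ≤ C ∧ ∀ (n : ℕ) (g U : MvPolynomial (Fin n) ℝ) (φ φ' : ℝ → ℝ) (A : ℝ),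
    g.totalDegree ≤ d → U.totalDegree ≤ D → 0 < A → IsTest φ φ' A → 0 < polyVar g →
    |∫ x, φ' (eval x g) * eval x U ^ 2 ∂γ n| ≤
      C * (A ^ 2 / polyVar g) ^ (1 / (2 * d) : ℝ) * secondMoment U

section DegreeOne

variable {n D : ℕ} {g U : MvPolynomial (Fin n) ℝ}

lemma isOrbitTrigPoly_eval_sq (hU : U.totalDegree ≤ D) :
    IsOrbitTrigPoly (2 * D) fun z => eval z.1 U ^ 2 :=
  (isOrbitTrigPoly_eval hU).pow 2

lemma exists_pderiv_eq_C (hg : g.totalDegree ≤ 1) :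
    ∃ v : Fin n → ℝ, ∀ i, pderiv i g = MvPolynomial.C (v i) := by
  have hdeg (i : Fin n) : (pderiv i g).totalDegree = 0 := by
    have := totalDegree_pderiv_le g i
    lia
  exact ⟨_, fun i => MvPolynomial.totalDegree_eq_zero_iff_eq_C.1 (hdeg i)⟩

-- The derivative `∂_y g` depends on `y` only; it is itself the kernel of the integration by parts.
lemma abs_integral_mul_energy_le (hg : g.totalDegree ≤ 1) (hU : U.totalDegree ≤ D)
    {φ φ' : ℝ → ℝ} {A : ℝ} (hφ : IsTest φ φ' A) :
    |∫ x, φ' (eval x g) * eval x U ^ 2 ∂γ n| * energy g ≤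
      A * (bernsteinConst (1 + 2 * D) 0 *
        ((∫ t, |t| ^ 1 ∂gaussianReal 0 1) * secondMoment U)) * √(energy g) := by
  obtain ⟨v, hv⟩ := exists_pderiv_eq_C hg
  have hdir (z : (Fin n → ℝ) × (Fin n → ℝ)) : evalDirDeriv g z = ∑ i, z.2 i * v i := by
    simp [evalDirDeriv, hv]
  have henergy : energy g = ∑ i, v i ^ 2 := by simp [energy, gradSq, hv]
  have hkernel : ∫ z, |evalDirDeriv g z * eval z.1 U ^ 2| ∂(γ n).prod (γ n) =
      secondMoment U * (√(energy g) * ∫ t, |t| ^ 1 ∂gaussianReal 0 1) := by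
    rw [← pow_one √(energy g), henergy, ← integral_abs_sum_mul_pow_γ, secondMoment,
      ← integral_prod_mul]
    congr with z
    rw [hdir, abs_mul, abs_sq, pow_one, mul_comm]
  have hmain : ∫ z, φ' (eval z.1 g) * evalDirDeriv g z * (evalDirDeriv g z * eval z.1 U ^ 2)
      ∂(γ n).prod (γ n) = (∫ x, φ' (eval x g) * eval x U ^ 2 ∂γ n) * energy g := by
    have hsq : energy g = ∫ y, |∑ i, y i * v i| ^ 2 ∂γ n := by
      rw [integral_abs_sum_mul_pow_γ, integral_sq_gaussianReal, ← henergy,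
        Real.sq_sqrt (energy_nonneg g), mul_one]
    rw [hsq, ← integral_prod_mul]
    congr with z
    rw [hdir, sq_abs]
    ring
  have h := (isOrbitTrigPoly_eval hg).abs_integral_deriv_comp_mul_le (μ := γ n) integral_id_γ hφ
    ((isOrbitTrigPoly_evalDirDeriv hg).mul (isOrbitTrigPoly_eval_sq hU))
  rw [angularDeriv_eval, hmain, hkernel, abs_mul, abs_of_nonneg (energy_nonneg g)] at h
  exact h.trans_eq (by ring)

end DegreeOne

theorem smoothingInequality_one (D : ℕ) : SmoothingInequality 1 D := by
  set c := ∫ t, |t| ^ 1 ∂gaussianReal 0 1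
  have : 0 ≤ c := integral_nonneg fun _ => by positivity
  have hb := bernsteinConst_nonneg (1 + 2 * D) 0
  set b := bernsteinConst (1 + 2 * D) 0
  refine ⟨Real.pi / 2 * (b * c), by positivity, fun n g U φ φ' A hg hU hA hφ hvar => ?_⟩
  have hsqrt : √(polyVar g) ≤ Real.pi / 2 * √(energy g) := by
    grw [polyVar_le_energy g, Real.sqrt_mul (by positivity), Real.sqrt_sq (by positivity)]
  have hvar' : 0 < √(polyVar g) := Real.sqrt_pos.2 hvar
  have henergy : 0 < √(energy g) := pos_of_mul_pos_right (hvar'.trans_le hsqrt) (by positivity)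
  have hle : |∫ x, φ' (eval x g) * eval x U ^ 2 ∂γ n| * √(energy g) ≤
      A * (b * (c * secondMoment U)) := by
    refine le_of_mul_le_mul_right ?_ henergy
    rw [mul_assoc, Real.mul_self_sqrt (energy_nonneg g)]
    exact abs_integral_mul_energy_le hg hU hφ
  have hroot : (A ^ 2 / polyVar g) ^ (1 / (2 * (1 : ℕ)) : ℝ) = A / √(polyVar g) := by
    rw [Nat.cast_one, mul_one, ← Real.sqrt_eq_rpow, Real.sqrt_div (by positivity),
      Real.sqrt_sq hA.le]
  rw [hroot, mul_div_assoc', div_mul_eq_mul_div, le_div_iff₀ hvar']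
  calc |∫ x, φ' (eval x g) * eval x U ^ 2 ∂γ n| * √(polyVar g)
    _ ≤ |∫ x, φ' (eval x g) * eval x U ^ 2 ∂γ n| * (Real.pi / 2 * √(energy g)) := by gcongr
    _ = Real.pi / 2 * (|∫ x, φ' (eval x g) * eval x U ^ 2 ∂γ n| * √(energy g)) := by ring
    _ ≤ Real.pi / 2 * (A * (b * (c * secondMoment U))) := by gcongr
    _ = Real.pi / 2 * (b * c) * A * secondMoment U := by ring

/-! ### Weighted small-ball estimates -/

lemma isTest_arctan {δ : ℝ} (hδ : 0 < δ) :
    IsTest (fun s => δ * Real.arctan (s / δ)) (fun s => δ ^ 2 / (s ^ 2 + δ ^ 2)) (2 * δ) where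
  hasDerivAt s := by
    refine (((hasDerivAt_id s).div_const δ).arctan.const_mul δ).congr_deriv ?_
    simp only [id]
    field_simp
    ring
  continuous_deriv := continuous_const.div (by fun_prop) fun s => by positivity
  abs_le s := by
    rw [abs_mul, abs_of_pos hδ, mul_comm]
    gcongr
    rw [abs_le]
    constructor <;> linarith [Real.neg_pi_div_two_lt_arctan (s / δ),
      Real.arctan_lt_pi_div_two (s / δ), Real.pi_le_four]
  abs_deriv_le s := by
    rw [abs_of_nonneg (by positivity), div_le_one (by positivity)]
    exact le_add_of_nonneg_left (sq_nonneg s)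

section SmallBall

variable {n k D : ℕ} (f U : MvPolynomial (Fin n) ℝ) {δ : ℝ}

/-- The weighted small-ball functional `𝔼 U² δ² / (f² + δ²)`, a smooth substitute for
`𝔼 U² 1_{|f| ≤ δ}`. -/
noncomputable def smallBall (δ : ℝ) : ℝ :=
  ∫ x, δ ^ 2 / (eval x f ^ 2 + δ ^ 2) * eval x U ^ 2 ∂γ n

/-- The centred polynomial `f - 𝔼 f`. -/
noncomputable def centered : MvPolynomial (Fin n) ℝ := f - MvPolynomial.C (mean f)

lemma eval_centered (x : Fin n → ℝ) : eval x (centered f) = eval x f - mean f := by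
  simp [centered]

variable {f} in
lemma totalDegree_centered_le (hf : f.totalDegree ≤ k) : (centered f).totalDegree ≤ k :=
  (MvPolynomial.totalDegree_sub _ _).trans (by simpa using hf)

lemma secondMoment_centered : secondMoment (centered f) = polyVar f := by
  rw [polyVar, variance_eq_integral (PolyGrowth.eval f).continuous.aemeasurable]
  simp only [secondMoment, eval_centered, mean]

lemma polyGrowth_smallBall (hδ : 0 < δ) :
    PolyGrowth fun x => δ ^ 2 / (eval x f ^ 2 + δ ^ 2) * eval x U ^ 2 :=
  .mul (.of_abs_le ((isTest_arctan hδ).continuous_deriv.comp (PolyGrowth.eval f).continuous)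
    fun _ => (isTest_arctan hδ).abs_deriv_le _) ((PolyGrowth.eval U).pow 2)

lemma smallBall_nonneg : 0 ≤ smallBall f U δ := integral_nonneg fun x => by positivity

lemma smallBall_le (hδ : 0 < δ) : smallBall f U δ ≤ secondMoment U :=
  integral_mono (polyGrowth_smallBall f U hδ).integrable ((PolyGrowth.eval U).pow 2).integrable
    fun x => mul_le_of_le_one_left (sq_nonneg _)
      ((le_abs_self _).trans ((isTest_arctan hδ).abs_deriv_le (eval x f)))

-- Pointwise `(𝔼 f)² ≤ 2 f² + 2 (f - 𝔼 f)²`, and `f²` cancels the denominator.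
lemma mean_sq_mul_smallBall_le (hδ : 0 < δ) : mean f ^ 2 * smallBall f U δ ≤
    4 * δ ^ 2 * secondMoment U + 4 * smallBall f (centered f * U) δ := by
  have hU : PolyGrowth fun x => 4 * δ ^ 2 * eval x U ^ 2 := ((PolyGrowth.eval U).pow 2).const_mul _
  have hcU := (polyGrowth_smallBall f (centered f * U) hδ).const_mul 4
  simp only [smallBall, secondMoment, ← integral_const_mul]
  rw [← integral_add hU.integrable hcU.integrable]
  refine integral_mono ((polyGrowth_smallBall f U hδ).const_mul _).integrable
    (hU.add hcU).integrable fun x => ?_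
  simp only [map_mul, eval_centered]
  generalize eval x f = a, eval x U = u, mean f = m
  have hpos : 0 < a ^ 2 + δ ^ 2 := by positivity
  calc m ^ 2 * (δ ^ 2 / (a ^ 2 + δ ^ 2) * u ^ 2)
    _ = m ^ 2 * (δ ^ 2 * u ^ 2) / (a ^ 2 + δ ^ 2) := by ring
    _ ≤ (4 * (a ^ 2 + δ ^ 2) + 4 * (a - m) ^ 2) * (δ ^ 2 * u ^ 2) / (a ^ 2 + δ ^ 2) := by
      gcongr
      nlinarith [sq_nonneg (2 * a - m), sq_nonneg δ]
    _ = 4 * δ ^ 2 * u ^ 2 + 4 * (δ ^ 2 / (a ^ 2 + δ ^ 2) * ((a - m) * u) ^ 2) := by field_simp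

end SmallBall

lemma SmoothingInequality.exists_smallBall_mul_polyVar_rpow_le {k D : ℕ} (hk : 1 ≤ k)
    (h : SmoothingInequality k D) :
    ∃ C : ℝ, 0 ≤ C ∧ ∀ (n : ℕ) (f W : MvPolynomial (Fin n) ℝ) (δ : ℝ),
      f.totalDegree ≤ k → W.totalDegree ≤ D → 0 < δ →
      smallBall f W δ * polyVar f ^ (1 / (2 * k) : ℝ) ≤
        C * (δ ^ 2) ^ (1 / (2 * k) : ℝ) * secondMoment W := by
  obtain ⟨C, hC, h⟩ := h
  have : (0 : ℝ) < k := by exact_mod_cast hk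
  set s : ℝ := 1 / (2 * k)
  have hs : 0 < s := by positivity
  refine ⟨C * 4 ^ s, by positivity, fun n f W δ hf hW hδ => ?_⟩
  rcases (polyVar_nonneg f).eq_or_lt with hvar | hvar
  · rw [← hvar, Real.zero_rpow hs.ne', mul_zero]
    have := secondMoment_nonneg W
    positivity
  have hle := (le_abs_self _).trans
    (h n f W _ _ (2 * δ) hf hW (by positivity) (isTest_arctan hδ) hvar)
  rw [Real.div_rpow (by positivity) hvar.le, mul_pow, Real.mul_rpow (by positivity) (by positivity),
    mul_div_assoc', div_mul_eq_mul_div, le_div_iff₀ (by positivity)] at hle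
  rw [show (2 : ℝ) ^ 2 = 4 by norm_num] at hle
  exact hle.trans_eq (by ring)

section Interpolation

variable {n k D : ℕ} {f U : MvPolynomial (Fin n) ℝ} {δ s C H : ℝ}

lemma smallBall_centered_mul_le (hδ : 0 < δ) (hC : 0 ≤ C) (hH : 0 ≤ H)
    (hvar : smallBall f (centered f * U) δ * polyVar f ^ s ≤
      C * (δ ^ 2) ^ s * secondMoment (centered f * U))
    (hmul : secondMoment (centered f * U) ≤ H * polyVar f * secondMoment U) :
    smallBall f (centered f * U) δ ≤
      C * H * (δ ^ 2) ^ s * polyVar f ^ (1 - s) * secondMoment U := by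
  have hU := secondMoment_nonneg U
  rcases (polyVar_nonneg f).eq_or_lt with hV | hV
  · refine ((smallBall_le f _ hδ).trans hmul).trans ?_
    rw [← hV, mul_zero, zero_mul]
    positivity
  have hsplit : polyVar f ^ s * polyVar f ^ (1 - s) = polyVar f := by
    rw [← Real.rpow_add hV, add_sub_cancel, Real.rpow_one]
  refine le_of_mul_le_mul_right (hvar.trans ?_) (Real.rpow_pos_of_pos hV s)
  calc C * (δ ^ 2) ^ s * secondMoment (centered f * U)
    _ ≤ C * (δ ^ 2) ^ s * (H * (polyVar f ^ s * polyVar f ^ (1 - s)) * secondMoment U) := by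
      rw [hsplit]
      gcongr
    _ = _ := by ring

-- The second moment is `𝔻 f + (𝔼 f)²`; the two parts are treated separately.
lemma smallBall_mul_secondMoment_le (hs : s < 1) (hs0 : 0 ≤ s) (hδ : 0 < δ) (hC : 0 ≤ C)
    (hH : 0 ≤ H) (hδf : δ ^ 2 ≤ secondMoment f)
    (hvar : smallBall f U δ * polyVar f ^ s ≤ C * (δ ^ 2) ^ s * secondMoment U)
    (hcentered : smallBall f (centered f * U) δ ≤
      C * H * (δ ^ 2) ^ s * polyVar f ^ (1 - s) * secondMoment U) :
    smallBall f U δ * secondMoment f ≤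
      (C + 4 + 4 * (C * H)) * (δ ^ 2) ^ s * secondMoment f ^ (1 - s) * secondMoment U := by
  have hU := secondMoment_nonneg U
  have hV := polyVar_nonneg f
  have hs' : 0 ≤ 1 - s := by linarith
  have hsplit {x : ℝ} (hx : 0 ≤ x) : x ^ s * x ^ (1 - s) = x := by
    rw [← Real.rpow_add_of_nonneg hx hs0 hs', add_sub_cancel, Real.rpow_one]
  have hVN : polyVar f ≤ secondMoment f := by
    rw [secondMoment_eq]
    exact le_add_of_nonneg_right (sq_nonneg _)
  calc smallBall f U δ * secondMoment f
    _ = smallBall f U δ * polyVar f ^ s * polyVar f ^ (1 - s) + mean f ^ 2 * smallBall f U δ := by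
      rw [mul_assoc, hsplit hV, secondMoment_eq]
      ring
    _ ≤ C * (δ ^ 2) ^ s * secondMoment U * polyVar f ^ (1 - s) +
        (4 * ((δ ^ 2) ^ s * (δ ^ 2) ^ (1 - s)) * secondMoment U +
          4 * (C * H * (δ ^ 2) ^ s * polyVar f ^ (1 - s) * secondMoment U)) := by
      rw [hsplit (sq_nonneg δ)]
      grw [hvar, mean_sq_mul_smallBall_le f U hδ, hcentered]
    _ ≤ C * (δ ^ 2) ^ s * secondMoment U * secondMoment f ^ (1 - s) +
        (4 * ((δ ^ 2) ^ s * secondMoment f ^ (1 - s)) * secondMoment U +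
          4 * (C * H * (δ ^ 2) ^ s * secondMoment f ^ (1 - s) * secondMoment U)) := by
      gcongr
    _ = _ := by ring

end Interpolation

theorem SmoothingInequality.exists_smallBall_le {k D : ℕ} (hk : 1 ≤ k)
    (h : SmoothingInequality k (k + D)) :
    ∃ C : ℝ, 0 ≤ C ∧ ∀ (n : ℕ) (f U : MvPolynomial (Fin n) ℝ) (δ : ℝ),
      f.totalDegree ≤ k → U.totalDegree ≤ D → 0 < δ →
      smallBall f U δ * secondMoment f ^ (1 / (2 * k) : ℝ) ≤
        C * (δ ^ 2) ^ (1 / (2 * k) : ℝ) * secondMoment U := by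
  obtain ⟨C, hC, hvar⟩ := h.exists_smallBall_mul_polyVar_rpow_le hk
  obtain ⟨H, hH, hmul⟩ := exists_secondMoment_mul_le (k + D)
  have hk' : (1 : ℝ) ≤ k := by exact_mod_cast hk
  set s : ℝ := 1 / (2 * k) with hs
  have hs0 : 0 ≤ s := by positivity
  have hs1 : s < 1 := by
    rw [hs, div_lt_one (by positivity)]
    linarith
  refine ⟨1 + (C + 4 + 4 * (C * H)), by positivity, fun n f U δ hf hU hδ => ?_⟩
  have hU0 := secondMoment_nonneg U
  rcases le_total (secondMoment f) (δ ^ 2) with hN | hN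
  · calc smallBall f U δ * secondMoment f ^ s
      _ ≤ 1 * secondMoment U * (δ ^ 2) ^ s := by
        rw [one_mul]
        exact mul_le_mul (smallBall_le f U hδ) (Real.rpow_le_rpow (secondMoment_nonneg f) hN hs0)
          (Real.rpow_nonneg (secondMoment_nonneg f) s) hU0
      _ ≤ (1 + (C + 4 + 4 * (C * H))) * secondMoment U * (δ ^ 2) ^ s := by
        gcongr
        exact le_add_of_nonneg_right (by positivity)
      _ = _ := by ring
  have hN0 : 0 < secondMoment f := lt_of_lt_of_le (by positivity) hN
  have hc := totalDegree_centered_le hf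
  have hcentered := smallBall_centered_mul_le hδ hC hH
    (hvar n f _ δ hf ((MvPolynomial.totalDegree_mul _ _).trans (add_le_add hc hU)) hδ)
    (secondMoment_centered f ▸ hmul n _ _ (hc.trans (by lia)) (hU.trans (by lia)))
  refine le_of_mul_le_mul_right ?_ (Real.rpow_pos_of_pos hN0 (1 - s))
  calc smallBall f U δ * secondMoment f ^ s * secondMoment f ^ (1 - s)
    _ = smallBall f U δ * secondMoment f := by
      rw [mul_assoc, ← Real.rpow_add hN0, add_sub_cancel, Real.rpow_one]
    _ ≤ (C + 4 + 4 * (C * H)) * (δ ^ 2) ^ s * secondMoment f ^ (1 - s) * secondMoment U :=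
      smallBall_mul_secondMoment_le hs1 hs0 hδ hC hH hN
        (hvar n f U δ hf (hU.trans (by lia)) hδ) hcentered
    _ ≤ (1 + (C + 4 + 4 * (C * H))) * (δ ^ 2) ^ s * secondMoment f ^ (1 - s) * secondMoment U := by
      gcongr ?_ * _ * _ * _
      exact le_add_of_nonneg_left zero_le_one
    _ = _ := by ring

section NegativeMoments

lemma integrable_abs_rpow_gaussianReal {s : ℝ} (hs : -1 < s) :
    Integrable (fun t => |t| ^ s) (gaussianReal 0 1) := by
  have hpos : IntegrableOn (fun t : ℝ => |t| ^ s * Real.exp (-(1 / 2) * t ^ 2)) (Set.Ioi 0) :=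
    (integrableOn_rpow_mul_exp_neg_mul_sq (b := 1 / 2) (by norm_num) hs).congr_fun
      (fun t ht => by simp only [abs_of_pos (Set.mem_Ioi.1 ht)]) measurableSet_Ioi
  have hneg : IntegrableOn (fun t : ℝ => |t| ^ s * Real.exp (-(1 / 2) * t ^ 2)) (Set.Iio 0) := by
    have h := IntegrableOn.comp_neg_Iio (c := 0) (neg_zero (G := ℝ).symm ▸ hpos)
    simpa only [abs_neg, neg_sq] using h
  have hdensity : Integrable fun t : ℝ => |t| ^ s * Real.exp (-(1 / 2) * t ^ 2) := by
    rw [← integrableOn_univ, ← Set.Iio_union_Ici (a := (0 : ℝ)), integrableOn_union,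
      integrableOn_Ici_iff_integrableOn_Ioi]
    exact ⟨hneg, hpos⟩
  rw [gaussianReal_of_var_ne_zero _ one_ne_zero,
    integrable_withDensity_iff_integrable_smul' (measurable_gaussianPDF 0 1)
      (Filter.Eventually.of_forall fun _ => gaussianPDF_lt_top)]
  refine (hdensity.const_mul (√(2 * Real.pi))⁻¹).congr (Filter.Eventually.of_forall fun t => ?_)
  simp only [toReal_gaussianPDF, gaussianPDFReal, smul_eq_mul, NNReal.coe_one, sub_zero, mul_one]
  ring_nf

lemma one_add_mul_le_rpow_neg {v a : ℝ} (hv : 0 < v) (ha : 0 ≤ a) :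
    1 + a * (1 - v) ≤ v ^ (-a) := by
  rw [Real.rpow_def_of_pos hv]
  linarith [Real.add_one_le_exp (Real.log v * -a),
    mul_le_mul_of_nonneg_left (Real.log_le_sub_one_of_pos hv) ha]

-- Jensen's inequality, by integrating the tangent line of `v ↦ v ^ (-a)` at the weighted mean.
lemma rpow_neg_integral_mul_le {α : Type*} {mα : MeasurableSpace α} {μ : Measure α} {w t : α → ℝ}
    {a : ℝ} (ha : 0 ≤ a) (hw : ∀ x, 0 ≤ w x) (hw_one : ∫ x, w x ∂μ = 1) (ht : ∀ x, 0 < t x)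
    (hwt : Integrable (fun x => w x * t x) μ) (hwt_pos : 0 < ∫ x, w x * t x ∂μ)
    (hwt_rpow : Integrable (fun x => w x * t x ^ (-a)) μ) :
    (∫ x, w x * t x ∂μ) ^ (-a) ≤ ∫ x, w x * t x ^ (-a) ∂μ := by
  set s := ∫ x, w x * t x ∂μ with hs
  have hwi : Integrable w μ := integrable_of_integral_eq_one hw_one
  have htangent (x) : s ^ (-a) * ((1 + a) * w x - a / s * (w x * t x)) ≤ w x * t x ^ (-a) := by
    have h := one_add_mul_le_rpow_neg (div_pos (ht x) hwt_pos) ha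
    rw [Real.div_rpow (ht x).le hwt_pos.le, le_div_iff₀ (by positivity)] at h
    calc _ = w x * ((1 + a * (1 - t x / s)) * s ^ (-a)) := by ring
      _ ≤ _ := mul_le_mul_of_nonneg_left h (hw x)
  calc s ^ (-a) = ∫ x, s ^ (-a) * ((1 + a) * w x - a / s * (w x * t x)) ∂μ := by
        rw [integral_const_mul, integral_sub (hwi.const_mul _) (hwt.const_mul _),
          integral_const_mul, integral_const_mul, hw_one, ← hs]
        field_simp
        ring
    _ ≤ _ := integral_mono (((hwi.const_mul _).sub (hwt.const_mul _)).const_mul _) hwt_rpow htangent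

variable {n : ℕ} (g : MvPolynomial (Fin n) ℝ)

lemma measurable_secondMoment_dirDeriv : Measurable fun y => secondMoment (dirDeriv g y) := by
  have h : StronglyMeasurable fun z : (Fin n → ℝ) × (Fin n → ℝ) => evalDirDeriv g (z.2, z.1) ^ 2 :=
    (((PolyGrowth.evalDirDeriv g).continuous.comp continuous_swap).pow 2).stronglyMeasurable
  simpa only [secondMoment, eval_dirDeriv] using (h.integral_prod_right' (ν := γ n)).measurable

lemma secondMoment_dirDeriv (y : Fin n → ℝ) :
    secondMoment (dirDeriv g y) = ∫ x, evalDirDeriv g (x, y) ^ 2 ∂γ n := by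
  simp only [secondMoment, eval_dirDeriv]

lemma evalDirDeriv_eq_zero {x : Fin n → ℝ} (hx : gradSq g x = 0) (y : Fin n → ℝ) :
    evalDirDeriv g (x, y) = 0 := by
  have h := (Finset.sum_eq_zero_iff_of_nonneg fun i _ => sq_nonneg _).1 hx
  exact Finset.sum_eq_zero fun i hi => by simp [pow_eq_zero_iff two_ne_zero |>.1 (h i hi)]

/-- The square `(∂_y g(x))²` normalised by `|∇g(x)|²`, rescaled by the energy of `g` and shifted by
`Δ` to keep it away from zero. Its average over `x` with weight `|∇g(x)|² / 𝔼|∇g|²` is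
`𝔼 (∂_y g)² + Δ`. -/
noncomputable def scaledDerivSq (Δ : ℝ) (z : (Fin n → ℝ) × (Fin n → ℝ)) : ℝ :=
  energy g * (evalDirDeriv g z ^ 2 / gradSq g z.1) + Δ

variable {Δ a : ℝ}

lemma le_scaledDerivSq (z : (Fin n → ℝ) × (Fin n → ℝ)) : Δ ≤ scaledDerivSq g Δ z :=
  le_add_of_nonneg_left <|
    mul_nonneg (energy_nonneg g) (div_nonneg (sq_nonneg _) (gradSq_nonneg g _))

lemma measurable_scaledDerivSq : Measurable (scaledDerivSq g Δ) := by
  have hD := (PolyGrowth.evalDirDeriv g).continuous.measurable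
  have hG := (PolyGrowth.gradSq g).continuous.measurable
  unfold scaledDerivSq
  fun_prop

-- For fixed `x`, `∂_y g(x) / |∇g(x)|` is a standard Gaussian variable in `y`.
lemma integral_scaledDerivSq_rpow_le (hΔ : 0 < Δ) (ha : 0 ≤ a) (ha' : a < 1 / 2)
    (hE : 0 < energy g) {x : Fin n → ℝ} (hx : 0 < gradSq g x) :
    ∫ y, scaledDerivSq g Δ (x, y) ^ (-a) ∂γ n ≤
      (∫ t, |t| ^ (-(2 * a)) ∂gaussianReal 0 1) * energy g ^ (-a) := by
  have hlin := integral_comp_sum_mul_γ (fun i => eval x (pderiv i g))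
    (f := fun s => (energy g * (s ^ 2 / gradSq g x) + Δ) ^ (-a)) (by fun_prop)
  have hsq (t : ℝ) : (√(∑ i, eval x (pderiv i g) ^ 2) * t) ^ 2 / gradSq g x = t ^ 2 := by
    rw [mul_pow, Real.sq_sqrt (Finset.sum_nonneg fun _ _ => sq_nonneg _)]
    exact mul_div_cancel_left₀ _ hx.ne'
  simp only [hsq] at hlin
  refine hlin.trans_le ?_
  rw [← integral_mul_const]
  have hne : ∀ᵐ t ∂gaussianReal 0 1, t ≠ (0 : ℝ) := by
    have := nullSingletonClass_gaussianReal (μ := 0) (v := 1) one_ne_zero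
    simp [ae_iff]
  refine integral_mono_of_nonneg (Filter.Eventually.of_forall fun t => by positivity)
    ((integrable_abs_rpow_gaussianReal (by linarith)).mul_const _) ?_
  filter_upwards [hne] with t ht
  calc (energy g * t ^ 2 + Δ) ^ (-a) ≤ (energy g * t ^ 2) ^ (-a) :=
        Real.rpow_le_rpow_of_nonpos (by positivity) (by linarith) (by linarith)
    _ = _ := by
        rw [Real.mul_rpow hE.le (sq_nonneg t), ← sq_abs, ← Real.rpow_natCast,
          ← Real.rpow_mul (abs_nonneg t), mul_comm]
        push_cast
        ring_nf

lemma integral_gradSq_div_energy (hE : 0 < energy g) : ∫ x, gradSq g x / energy g ∂γ n = 1 := by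
  rw [integral_div, ← energy, div_self hE.ne']

variable {g} in
lemma gradSq_div_energy_mul_scaledDerivSq (hE : 0 < energy g) (z : (Fin n → ℝ) × (Fin n → ℝ)) :
    gradSq g z.1 / energy g * scaledDerivSq g Δ z =
      evalDirDeriv g z ^ 2 + gradSq g z.1 / energy g * Δ := by
  rw [scaledDerivSq]
  rcases eq_or_ne (gradSq g z.1) 0 with hz | hz
  · simp [hz, show evalDirDeriv g z = 0 from evalDirDeriv_eq_zero g hz z.2]
  · field_simp

lemma abs_gradSq_mul_scaledDerivSq_rpow_le (hΔ : 0 < Δ) (ha : 0 ≤ a)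
    (z : (Fin n → ℝ) × (Fin n → ℝ)) :
    |gradSq g z.1 / energy g * scaledDerivSq g Δ z ^ (-a)| ≤
      gradSq g z.1 / energy g * Δ ^ (-a) := by
  have hw := div_nonneg (gradSq_nonneg g z.1) (energy_nonneg g)
  have hz := le_scaledDerivSq g (Δ := Δ) z
  rw [abs_of_nonneg (mul_nonneg hw (Real.rpow_nonneg (hΔ.le.trans hz) _))]
  exact mul_le_mul_of_nonneg_left (Real.rpow_le_rpow_of_nonpos hΔ hz (neg_nonpos.2 ha)) hw

lemma measurable_gradSq_mul_scaledDerivSq_rpow :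
    Measurable fun z => gradSq g z.1 / energy g * scaledDerivSq g Δ z ^ (-a) := by
  have hG := (PolyGrowth.gradSq g).continuous.measurable
  have ht := measurable_scaledDerivSq g (Δ := Δ)
  fun_prop

variable {g} in
lemma secondMoment_dirDeriv_rpow_le (hΔ : 0 < Δ) (ha : 0 ≤ a) (hE : 0 < energy g)
    (y : Fin n → ℝ) :
    (secondMoment (dirDeriv g y) + Δ) ^ (-a) ≤
      ∫ x, gradSq g x / energy g * scaledDerivSq g Δ (x, y) ^ (-a) ∂γ n := by
  have hwi : Integrable (fun x => gradSq g x / energy g) (γ n) :=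
    integrable_of_integral_eq_one (integral_gradSq_div_energy g hE)
  have hDi : Integrable (fun x => evalDirDeriv g (x, y) ^ 2) (γ n) := by
    simpa only [eval_dirDeriv] using ((PolyGrowth.eval (dirDeriv g y)).pow 2).integrable
  have hmul (x : Fin n → ℝ) := gradSq_div_energy_mul_scaledDerivSq (Δ := Δ) hE (x, y)
  have hmean : ∫ x, gradSq g x / energy g * scaledDerivSq g Δ (x, y) ∂γ n =
      secondMoment (dirDeriv g y) + Δ := by
    simp only [hmul]
    rw [integral_add hDi (hwi.mul_const Δ), integral_mul_const, integral_gradSq_div_energy g hE,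
      one_mul, ← secondMoment_dirDeriv]
  rw [← hmean]
  refine rpow_neg_integral_mul_le ha
    (fun x => div_nonneg (gradSq_nonneg g x) hE.le) (integral_gradSq_div_energy g hE)
    (fun x => hΔ.trans_le (le_scaledDerivSq g _)) ?_ ?_ ?_
  · simp only [hmul]
    exact hDi.add (hwi.mul_const Δ)
  · rw [hmean]
    linarith [secondMoment_nonneg (dirDeriv g y)]
  · exact (hwi.mul_const (Δ ^ (-a))).mono' ((measurable_gradSq_mul_scaledDerivSq_rpow g).comp
      measurable_prodMk_right).aestronglyMeasurable (Filter.Eventually.of_forall fun x =>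
        abs_gradSq_mul_scaledDerivSq_rpow_le g hΔ ha (x, y))

lemma integrable_secondMoment_dirDeriv_rpow (hΔ : 0 < Δ) (ha : 0 ≤ a) :
    Integrable (fun y => (secondMoment (dirDeriv g y) + Δ) ^ (-a)) (γ n) := by
  refine (integrable_const (Δ ^ (-a))).mono' (((measurable_secondMoment_dirDeriv g).add_const
    Δ).pow_const _).aestronglyMeasurable (Filter.Eventually.of_forall fun y => ?_)
  have h := secondMoment_nonneg (dirDeriv g y)
  rw [Real.norm_of_nonneg (by positivity)]
  exact Real.rpow_le_rpow_of_nonpos hΔ (by linarith) (by linarith)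

variable {g} in
lemma integral_secondMoment_dirDeriv_rpow_le_energy (hΔ : 0 < Δ) (ha : 0 ≤ a) (ha' : a < 1 / 2)
    (hE : 0 < energy g) :
    ∫ y, (secondMoment (dirDeriv g y) + Δ) ^ (-a) ∂γ n ≤
      (∫ t, |t| ^ (-(2 * a)) ∂gaussianReal 0 1) * energy g ^ (-a) := by
  set κ := ∫ t, |t| ^ (-(2 * a)) ∂gaussianReal 0 1
  have hwi : Integrable (fun x => gradSq g x / energy g) (γ n) :=
    integrable_of_integral_eq_one (integral_gradSq_div_energy g hE)
  have h_int : Integrable (fun z => gradSq g z.1 / energy g * scaledDerivSq g Δ z ^ (-a))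
      ((γ n).prod (γ n)) :=
    ((hwi.mul_const (Δ ^ (-a))).comp_fst (γ n)).mono'
      (measurable_gradSq_mul_scaledDerivSq_rpow g).aestronglyMeasurable
      (Filter.Eventually.of_forall (abs_gradSq_mul_scaledDerivSq_rpow_le g hΔ ha))
  have hinner (x : Fin n → ℝ) :
      ∫ y, gradSq g x / energy g * scaledDerivSq g Δ (x, y) ^ (-a) ∂γ n ≤
        gradSq g x / energy g * (κ * energy g ^ (-a)) := by
    rw [integral_const_mul]
    rcases (gradSq_nonneg g x).eq_or_lt with hx | hx
    · simp [← hx]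
    · exact mul_le_mul_of_nonneg_left (integral_scaledDerivSq_rpow_le g hΔ ha ha' hE hx)
        (by positivity)
  calc _ ≤ ∫ y, ∫ x, gradSq g x / energy g * scaledDerivSq g Δ (x, y) ^ (-a) ∂γ n ∂γ n :=
        integral_mono (integrable_secondMoment_dirDeriv_rpow g hΔ ha) h_int.integral_prod_right
          (secondMoment_dirDeriv_rpow_le hΔ ha hE)
    _ = ∫ x, ∫ y, gradSq g x / energy g * scaledDerivSq g Δ (x, y) ^ (-a) ∂γ n ∂γ n :=
        (integral_integral_swap h_int).symm
    _ ≤ ∫ x, gradSq g x / energy g * (κ * energy g ^ (-a)) ∂γ n :=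
        integral_mono h_int.integral_prod_left (hwi.mul_const _) hinner
    _ = κ * energy g ^ (-a) := by
        rw [integral_mul_const, integral_gradSq_div_energy g hE, one_mul]

lemma exists_integral_secondMoment_dirDeriv_rpow_le (ha : 0 ≤ a) (ha' : a < 1 / 2) :
    ∃ K : ℝ, ∀ (n : ℕ) (g : MvPolynomial (Fin n) ℝ) (Δ : ℝ), 0 < Δ → 0 < polyVar g →
      ∫ y, (secondMoment (dirDeriv g y) + Δ) ^ (-a) ∂γ n ≤ K * polyVar g ^ (-a) := by
  refine ⟨(∫ t, |t| ^ (-(2 * a)) ∂gaussianReal 0 1) * ((Real.pi / 2) ^ 2) ^ a,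
    fun n g Δ hΔ hV => ?_⟩
  have hpoincare := polyVar_le_energy g
  have hE : 0 < energy g := pos_of_mul_pos_right (hV.trans_le hpoincare) (by positivity)
  refine (integral_secondMoment_dirDeriv_rpow_le_energy hΔ ha ha' hE).trans ?_
  rw [mul_assoc]
  refine mul_le_mul_of_nonneg_left ?_ (integral_nonneg fun t => by positivity)
  have h := Real.rpow_le_rpow_of_nonpos hV hpoincare (neg_nonpos.2 ha)
  rw [Real.mul_rpow (by positivity) hE.le, Real.rpow_neg (by positivity : 0 ≤ (Real.pi / 2) ^ 2),
    inv_mul_le_iff₀ (by positivity)] at h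
  exact h

end NegativeMoments

/-! ### The induction on the degree -/

lemma SmoothingInequality.exists_smallBall_le_rpow {k D : ℕ} (hk : 1 ≤ k)
    (h : SmoothingInequality k (k + D)) : ∃ C : ℝ, 0 ≤ C ∧
    ∀ (n : ℕ) (f U : MvPolynomial (Fin n) ℝ) (δ : ℝ), f.totalDegree ≤ k → U.totalDegree ≤ D →
      0 < δ → smallBall f U δ ≤ C * (δ ^ 2) ^ (1 / (2 * k) : ℝ) * secondMoment U *
        (secondMoment f + δ ^ 2) ^ (-(1 / (2 * k)) : ℝ) := by
  obtain ⟨C, hC, hsmall⟩ := h.exists_smallBall_le hk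
  refine ⟨C + 1, by positivity, fun n f U δ hf hU hδ => ?_⟩
  set s : ℝ := 1 / (2 * k)
  have hs : 0 ≤ s := by positivity
  have hs_one : s ≤ 1 := by
    have : (1 : ℝ) ≤ k := by exact_mod_cast hk
    exact (div_le_one (by positivity)).2 (by linarith)
  have hf0 := secondMoment_nonneg f
  have hsub := Real.rpow_add_le_add_rpow hf0 (sq_nonneg δ) hs hs_one
  rw [Real.rpow_neg (by positivity), ← div_eq_mul_inv, le_div_iff₀ (by positivity)]
  calc smallBall f U δ * (secondMoment f + δ ^ 2) ^ s
      ≤ smallBall f U δ * secondMoment f ^ s + smallBall f U δ * (δ ^ 2) ^ s := by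
        rw [← mul_add]
        exact mul_le_mul_of_nonneg_left hsub (smallBall_nonneg f U)
    _ ≤ C * (δ ^ 2) ^ s * secondMoment U + secondMoment U * (δ ^ 2) ^ s :=
        add_le_add (hsmall n f U δ hf hU hδ) (by gcongr; exact smallBall_le f U hδ)
    _ = (C + 1) * (δ ^ 2) ^ s * secondMoment U := by ring

section Shares

variable {n : ℕ} (g : MvPolynomial (Fin n) ℝ) (δ : ℝ)

/-- The share of `(∂_{y₁} g)²` in the sum `(∂_{y₁} g)² + (∂_{y₂} g)² + δ²`. -/
noncomputable def derivShare (y₁ y₂ x : Fin n → ℝ) : ℝ :=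
  evalDirDeriv g (x, y₁) ^ 2 / (evalDirDeriv g (x, y₁) ^ 2 + evalDirDeriv g (x, y₂) ^ 2 + δ ^ 2)

/-- The share of `δ²` in the sum `(∂_{y₁} g)² + (∂_{y₂} g)² + δ²`. -/
noncomputable def smallShare (y₁ y₂ x : Fin n → ℝ) : ℝ :=
  δ ^ 2 / (evalDirDeriv g (x, y₁) ^ 2 + evalDirDeriv g (x, y₂) ^ 2 + δ ^ 2)

lemma abs_derivShare_le (y₁ y₂ x : Fin n → ℝ) : |derivShare g δ y₁ y₂ x| ≤ 1 := by
  rw [derivShare, abs_of_nonneg (by positivity)]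
  exact div_le_one_of_le₀ (by nlinarith) (by positivity)

lemma smallShare_nonneg (y₁ y₂ x : Fin n → ℝ) : 0 ≤ smallShare g δ y₁ y₂ x := by
  rw [smallShare]
  positivity

lemma smallShare_le_one (y₁ y₂ x : Fin n → ℝ) : smallShare g δ y₁ y₂ x ≤ 1 :=
  div_le_one_of_le₀ (by nlinarith) (by positivity)

variable {δ}

lemma derivShare_add_derivShare_add_smallShare (hδ : 0 < δ) (y₁ y₂ x : Fin n → ℝ) :
    derivShare g δ y₁ y₂ x + derivShare g δ y₂ y₁ x + smallShare g δ y₁ y₂ x = 1 := by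
  rw [derivShare, derivShare, smallShare, add_comm (evalDirDeriv g (x, y₂) ^ 2), ← add_div,
    ← add_div, div_self (by positivity)]

lemma continuous_derivShare (hδ : 0 < δ) : Continuous
    fun p : (Fin n → ℝ) × (Fin n → ℝ) × (Fin n → ℝ) => derivShare g δ p.2.1 p.2.2 p.1 := by
  have hD := (PolyGrowth.evalDirDeriv g).continuous
  unfold derivShare
  exact Continuous.div (by fun_prop) (by fun_prop) fun p => by positivity

lemma continuous_smallShare (hδ : 0 < δ) : Continuous
    fun p : (Fin n → ℝ) × (Fin n → ℝ) × (Fin n → ℝ) => smallShare g δ p.2.1 p.2.2 p.1 := by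
  have hD := (PolyGrowth.evalDirDeriv g).continuous
  unfold smallShare
  exact Continuous.div (by fun_prop) (by fun_prop) fun p => by positivity

lemma polyGrowth_derivShare (hδ : 0 < δ) (y₁ y₂ : Fin n → ℝ) :
    PolyGrowth (derivShare g δ y₁ y₂) :=
  .of_abs_le ((continuous_derivShare g hδ).along_fst (y := (y₁, y₂))) (abs_derivShare_le g δ y₁ y₂)

lemma polyGrowth_smallShare (hδ : 0 < δ) (y₁ y₂ : Fin n → ℝ) :
    PolyGrowth (smallShare g δ y₁ y₂) := by
  have hcont : Continuous (smallShare g δ y₁ y₂) :=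
    (continuous_smallShare g hδ).along_fst (y := (y₁, y₂))
  refine .of_abs_le (C := 1) hcont fun x => ?_
  rw [abs_of_nonneg (smallShare_nonneg g δ y₁ y₂ x)]
  exact smallShare_le_one g δ y₁ y₂ x

variable (U : MvPolynomial (Fin n) ℝ)

lemma integral_smallShare_mul_le (hδ : 0 < δ) (y₁ y₂ : Fin n → ℝ) :
    ∫ x, smallShare g δ y₁ y₂ x * eval x U ^ 2 ∂γ n ≤ smallBall (dirDeriv g y₁) U δ := by
  refine integral_mono
    ((polyGrowth_smallShare g hδ y₁ y₂).mul ((PolyGrowth.eval U).pow 2)).integrable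
    (polyGrowth_smallBall _ U hδ).integrable fun x => ?_
  simp only [smallShare, eval_dirDeriv]
  gcongr
  linarith [sq_nonneg (evalDirDeriv g (x, y₂))]

lemma smallShare_comm (y₁ y₂ : Fin n → ℝ) : smallShare g δ y₁ y₂ = smallShare g δ y₂ y₁ := by
  ext x
  simp only [smallShare, add_comm]

-- The integral in `x` is at most the geometric mean of the bounds for the two directions, so only
-- half of the exponent is needed in each of the two independent negative moments.
variable {g U} in
lemma integral_smallShare_mul_le_of_smallBall_le {y₁ y₂ : Fin n → ℝ} {M a b : ℝ} (hδ : 0 < δ)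
    (hM : 0 ≤ M) (ha : 0 ≤ a) (hb : 0 ≤ b) (h₁ : smallBall (dirDeriv g y₁) U δ ≤ M * a ^ 2)
    (h₂ : smallBall (dirDeriv g y₂) U δ ≤ M * b ^ 2) :
    ∫ x, smallShare g δ y₁ y₂ x * eval x U ^ 2 ∂γ n ≤ M * (a * b) := by
  have hJ : 0 ≤ ∫ x, smallShare g δ y₁ y₂ x * eval x U ^ 2 ∂γ n :=
    integral_nonneg fun x => mul_nonneg (smallShare_nonneg ..) (sq_nonneg _)
  have hJ₁ := (integral_smallShare_mul_le g U hδ y₁ y₂).trans h₁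
  have hJ₂ := (integral_smallShare_mul_le g U hδ y₂ y₁).trans h₂
  rw [smallShare_comm] at hJ₂
  refine (sq_le_sq₀ hJ (by positivity)).1 ?_
  calc _ = _ := sq _
    _ ≤ (M * a ^ 2) * (M * b ^ 2) := mul_le_mul hJ₁ hJ₂ hJ (by positivity)
    _ = _ := by ring

variable {g U} in
lemma integral_integral_smallShare_mul_le {M a : ℝ} (hδ : 0 < δ) (hM : 0 ≤ M) (ha : 0 ≤ a)
    (hsmall : ∀ y, smallBall (dirDeriv g y) U δ ≤
      M * (secondMoment (dirDeriv g y) + δ ^ 2) ^ (-(2 * a))) :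
    ∫ q, ∫ x, smallShare g δ q.1 q.2 x * eval x U ^ 2 ∂γ n ∂(γ n).prod (γ n) ≤
      M * (∫ y, (secondMoment (dirDeriv g y) + δ ^ 2) ^ (-a) ∂γ n) ^ 2 := by
  set Y : (Fin n → ℝ) → ℝ := fun y => (secondMoment (dirDeriv g y) + δ ^ 2) ^ (-a)
  have hbase (y : Fin n → ℝ) : 0 ≤ secondMoment (dirDeriv g y) + δ ^ 2 :=
    add_nonneg (secondMoment_nonneg _) (sq_nonneg δ)
  have hY (y : Fin n → ℝ) : 0 ≤ Y y := Real.rpow_nonneg (hbase y) _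
  have hYi : Integrable Y (γ n) := integrable_secondMoment_dirDeriv_rpow g (by positivity) ha
  have hsmall' (y : Fin n → ℝ) : smallBall (dirDeriv g y) U δ ≤ M * Y y ^ 2 := by
    refine (hsmall y).trans_eq ?_
    rw [← Real.rpow_mul_natCast (hbase y)]
    congr 2
    push_cast
    ring
  calc _ ≤ ∫ q, M * (Y q.1 * Y q.2) ∂(γ n).prod (γ n) :=
        integral_mono_of_nonneg (Filter.Eventually.of_forall fun q =>
          integral_nonneg fun x => mul_nonneg (smallShare_nonneg ..) (sq_nonneg _))
          ((hYi.mul_prod hYi).const_mul M) (Filter.Eventually.of_forall fun q =>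
            integral_smallShare_mul_le_of_smallBall_le hδ hM (hY _) (hY _) (hsmall' _) (hsmall' _))
    _ = M * (∫ y, Y y ∂γ n) ^ 2 := by rw [integral_const_mul, integral_prod_mul, sq]

end Shares

lemma SmoothingInequality.exists_integral_smallShare_le {k D : ℕ} (hk : 1 ≤ k)
    (h : SmoothingInequality k (k + D)) : ∃ C : ℝ, 0 ≤ C ∧
    ∀ (n : ℕ) (g U : MvPolynomial (Fin n) ℝ) (δ : ℝ), g.totalDegree ≤ k + 1 → U.totalDegree ≤ D →
      0 < δ → 0 < polyVar g →
      ∫ q, ∫ x, smallShare g δ q.1 q.2 x * eval x U ^ 2 ∂γ n ∂(γ n).prod (γ n) ≤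
        C * (δ ^ 2 / polyVar g) ^ (1 / (2 * k) : ℝ) * secondMoment U := by
  obtain ⟨C, hC, hsmall⟩ := h.exists_smallBall_le_rpow hk
  have hk' : (1 : ℝ) ≤ k := by exact_mod_cast hk
  have ha : 0 ≤ (1 / (4 * k) : ℝ) := by positivity
  have ha_half : (1 / (4 * k) : ℝ) < 1 / 2 := one_div_lt_one_div_of_lt two_pos (by linarith)
  have hexp : (1 / (2 * k) : ℝ) = 2 * (1 / (4 * k)) := by
    field_simp
    norm_num
  rw [hexp] at hsmall ⊢
  generalize (1 / (4 * k) : ℝ) = a at *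
  obtain ⟨K, hmoment⟩ := exists_integral_secondMoment_dirDeriv_rpow_le ha ha_half
  refine ⟨C * K ^ 2, by positivity, fun n g U δ hg hU hδ hV => ?_⟩
  have hδ2 : 0 < δ ^ 2 := by positivity
  have hM : 0 ≤ C * (δ ^ 2) ^ (2 * a) * secondMoment U :=
    mul_nonneg (by positivity) (secondMoment_nonneg U)
  refine (integral_integral_smallShare_mul_le hδ hM ha fun y =>
    hsmall n _ U δ (totalDegree_dirDeriv_le hg y) hU hδ).trans ?_
  have hmoment_sq : (∫ y, (secondMoment (dirDeriv g y) + δ ^ 2) ^ (-a) ∂γ n) ^ 2 ≤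
      K ^ 2 * (polyVar g ^ (2 * a))⁻¹ := by
    rw [← Real.rpow_neg hV.le, show -(2 * a) = -a * (2 : ℕ) by push_cast; ring,
      Real.rpow_mul_natCast hV.le, ← mul_pow]
    exact pow_le_pow_left₀ (integral_nonneg fun y => Real.rpow_nonneg
      (add_nonneg (secondMoment_nonneg _) hδ2.le) _) (hmoment n g _ hδ2 hV) 2
  refine (mul_le_mul_of_nonneg_left hmoment_sq hM).trans_eq ?_
  rw [Real.div_rpow hδ2.le hV.le]
  ring

section ShareIntegrals

variable {n : ℕ} (g U : MvPolynomial (Fin n) ℝ) {φ φ' : ℝ → ℝ} {A δ : ℝ}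

lemma IsTest.polyGrowth_mul_eval_sq (hφ : IsTest φ φ' A) :
    PolyGrowth fun x => φ' (eval x g) * eval x U ^ 2 :=
  .mul (.of_abs_le (hφ.continuous_deriv.comp (PolyGrowth.eval g).continuous)
    fun _ => hφ.abs_deriv_le _) ((PolyGrowth.eval U).pow 2)

lemma polyGrowth_uncurry_derivShare (hδ : 0 < δ) (y₂ : Fin n → ℝ) :
    PolyGrowth fun z : (Fin n → ℝ) × (Fin n → ℝ) => derivShare g δ z.2 y₂ z.1 := by
  have hD := (PolyGrowth.evalDirDeriv g).continuous
  refine .of_abs_le (C := 1) ?_ fun z => abs_derivShare_le g δ z.2 y₂ z.1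
  unfold derivShare
  exact Continuous.div (by fun_prop) (by fun_prop) fun z => by positivity

lemma integral_abs_eval_fst_sq : ∫ z, |eval z.1 U ^ 2| ∂(γ n).prod (γ n) = secondMoment U := by
  simp only [abs_sq]
  rw [integral_fun_fst (fun x => eval x U ^ 2)]
  simp [secondMoment]

variable {g U}

-- `derivShare` is the angular derivative `∂_{y₁} g` times its smoothed inverse
-- `∂_{y₁} g / ((∂_{y₁} g)² + r² + δ²)`, where `r = ∂_{y₂} g` with `y₂` fixed.
lemma abs_integral_derivShare_mul_le {k D : ℕ} (hg : g.totalDegree ≤ k + 1)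
    (hU : U.totalDegree ≤ D) (hφ : IsTest φ φ' A) (hδ : 0 < δ) (y₂ : Fin n → ℝ) :
    |∫ y₁, ∫ x, derivShare g δ y₁ y₂ x * (φ' (eval x g) * eval x U ^ 2) ∂γ n ∂γ n| ≤
      A * (1 / δ * (2 * (6 * (k + 1 : ℕ) + 1) * (1 + bernsteinConst (2 * D) 0) +
        bernsteinConst (2 * D) 0)) * secondMoment U := by
  have hbound := abs_integral_deriv_comp_mul_smoothedInv_le (μ := γ n) integral_id_γ hφ
    (isOrbitTrigPoly_eval hg)
    (isOrbitTrigPoly_eval ((totalDegree_dirDeriv_le hg y₂).trans k.le_succ))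
    (isOrbitTrigPoly_eval_sq hU) hδ
  rw [angularDeriv_eval, integral_abs_eval_fst_sq] at hbound
  have h_int := ((polyGrowth_uncurry_derivShare g hδ y₂).mul
    (hφ.polyGrowth_mul_eval_sq g U).fst).integrable (μ := (γ n).prod (γ n))
  rw [← integral_prod_symm _ h_int]
  refine Eq.trans_le ?_ hbound
  congr with z
  rw [derivShare, smoothedInv, eval_dirDeriv]
  ring

variable (g) in
lemma integral_mul_eq_integral_shares {κ : (Fin n → ℝ) → ℝ} (hκ : PolyGrowth κ) (hδ : 0 < δ)
    (y₁ y₂ : Fin n → ℝ) :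
    ∫ x, κ x ∂γ n = (∫ x, derivShare g δ y₁ y₂ x * κ x ∂γ n) +
      (∫ x, derivShare g δ y₂ y₁ x * κ x ∂γ n) + ∫ x, smallShare g δ y₁ y₂ x * κ x ∂γ n := by
  have h₁ := (polyGrowth_derivShare g hδ y₁ y₂).mul hκ
  have h₂ := (polyGrowth_derivShare g hδ y₂ y₁).mul hκ
  have h₃ := (polyGrowth_smallShare g hδ y₁ y₂).mul hκ
  rw [← integral_add h₁.integrable h₂.integrable, ← integral_add (h₁.add h₂).integrable
    h₃.integrable]
  congr with x
  rw [← add_mul, ← add_mul, derivShare_add_derivShare_add_smallShare g hδ, one_mul]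

lemma integrable_integral_mul {κ : (Fin n → ℝ) → ℝ} (hκ : PolyGrowth κ)
    {s : (Fin n → ℝ) → (Fin n → ℝ) → (Fin n → ℝ) → ℝ}
    (hs : Continuous fun p : (Fin n → ℝ) × (Fin n → ℝ) × (Fin n → ℝ) => s p.2.1 p.2.2 p.1)
    (hs_le : ∀ y₁ y₂ x, |s y₁ y₂ x| ≤ 1) :
    Integrable (fun q : (Fin n → ℝ) × (Fin n → ℝ) => ∫ x, s q.1 q.2 x * κ x ∂γ n)
      ((γ n).prod (γ n)) := by
  have hmeas := (hs.mul (hκ.continuous.comp continuous_fst)).stronglyMeasurable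
  refine (integrable_const (∫ x, |κ x| ∂γ n)).mono'
    (hmeas.integral_prod_left' (μ := γ n)).aestronglyMeasurable
    (Filter.Eventually.of_forall fun q => norm_integral_le_of_norm_le hκ.abs.integrable
      (Filter.Eventually.of_forall fun x => ?_))
  rw [Real.norm_eq_abs, abs_mul]
  exact mul_le_of_le_one_left (abs_nonneg _) (hs_le q.1 q.2 x)

variable (g) in
lemma integral_eq_integral_shares {κ : (Fin n → ℝ) → ℝ} (hκ : PolyGrowth κ) (hδ : 0 < δ) :
    ∫ x, κ x ∂γ n = 2 * (∫ y₂, ∫ y₁, ∫ x, derivShare g δ y₁ y₂ x * κ x ∂γ n ∂γ n ∂γ n) +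
      ∫ q, ∫ x, smallShare g δ q.1 q.2 x * κ x ∂γ n ∂(γ n).prod (γ n) := by
  have hT := integrable_integral_mul hκ (continuous_derivShare g hδ) (abs_derivShare_le g δ)
  have hS := integrable_integral_mul hκ (continuous_smallShare g hδ) fun y₁ y₂ x => by
    rw [abs_of_nonneg (smallShare_nonneg g δ y₁ y₂ x)]
    exact smallShare_le_one g δ y₁ y₂ x
  have hT_swap : Integrable (fun q : (Fin n → ℝ) × (Fin n → ℝ) =>
      ∫ x, derivShare g δ q.2 q.1 x * κ x ∂γ n) ((γ n).prod (γ n)) := hT.swap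
  have hswap := integral_prod_swap (μ := γ n) (ν := γ n)
    fun q : (Fin n → ℝ) × (Fin n → ℝ) => ∫ x, derivShare g δ q.1 q.2 x * κ x ∂γ n
  calc ∫ x, κ x ∂γ n = ∫ _q, ∫ x, κ x ∂γ n ∂(γ n).prod (γ n) := by simp
    _ = ∫ q, ((∫ x, derivShare g δ q.1 q.2 x * κ x ∂γ n) +
          (∫ x, derivShare g δ q.2 q.1 x * κ x ∂γ n) + ∫ x, smallShare g δ q.1 q.2 x * κ x ∂γ n)
          ∂(γ n).prod (γ n) := by
        congr with q
        exact integral_mul_eq_integral_shares g hκ hδ q.1 q.2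
    _ = _ := by
        rw [integral_add ?_ hS, integral_add hT hT_swap]
        · simp only [Prod.fst_swap, Prod.snd_swap] at hswap
          rw [hswap, integral_prod_symm _ hT]
          ring
        · exact hT.add hT_swap

lemma abs_integral_smallShare_mul_le (hφ : IsTest φ φ' A) (hδ : 0 < δ) :
    |∫ q, ∫ x, smallShare g δ q.1 q.2 x * (φ' (eval x g) * eval x U ^ 2) ∂γ n ∂(γ n).prod (γ n)| ≤
      ∫ q, ∫ x, smallShare g δ q.1 q.2 x * eval x U ^ 2 ∂γ n ∂(γ n).prod (γ n) := by
  have hU := (PolyGrowth.eval U).pow 2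
  have hS := integrable_integral_mul hU (continuous_smallShare g hδ) fun y₁ y₂ x => by
    rw [abs_of_nonneg (smallShare_nonneg g δ y₁ y₂ x)]
    exact smallShare_le_one g δ y₁ y₂ x
  rw [← Real.norm_eq_abs]
  refine norm_integral_le_of_norm_le hS (Filter.Eventually.of_forall fun q =>
    norm_integral_le_of_norm_le ((polyGrowth_smallShare g hδ q.1 q.2).mul hU).integrable
      (Filter.Eventually.of_forall fun x => ?_))
  rw [Real.norm_eq_abs, abs_mul, abs_mul, abs_of_nonneg (smallShare_nonneg ..), abs_sq]
  exact mul_le_mul_of_nonneg_left (mul_le_of_le_one_left (sq_nonneg _) (hφ.abs_deriv_le _))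
    (smallShare_nonneg ..)

end ShareIntegrals

lemma SmoothingInequality.exists_abs_integral_le {k D : ℕ} (hk : 1 ≤ k)
    (h : SmoothingInequality k (k + D)) : ∃ C : ℝ, 0 ≤ C ∧
    ∀ (n : ℕ) (g U : MvPolynomial (Fin n) ℝ) (φ φ' : ℝ → ℝ) (A δ : ℝ), g.totalDegree ≤ k + 1 →
      U.totalDegree ≤ D → IsTest φ φ' A → 0 < δ → 0 < polyVar g →
      |∫ x, φ' (eval x g) * eval x U ^ 2 ∂γ n| ≤
        C * (A / δ + (δ ^ 2 / polyVar g) ^ (1 / (2 * k) : ℝ)) * secondMoment U := by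
  obtain ⟨C, hC, hsmall⟩ := h.exists_integral_smallShare_le hk
  have hb := bernsteinConst_nonneg (2 * D) 0
  set B := 2 * (6 * (k + 1 : ℕ) + 1) * (1 + bernsteinConst (2 * D) 0) + bernsteinConst (2 * D) 0
  have hB : 0 ≤ B := by positivity
  refine ⟨2 * B + C, by positivity, fun n g U φ φ' A δ hg hU hφ hδ hV => ?_⟩
  have hA : 0 ≤ A := (abs_nonneg _).trans (hφ.abs_le 0)
  have hderiv : |∫ y₂, ∫ y₁, ∫ x, derivShare g δ y₁ y₂ x * (φ' (eval x g) * eval x U ^ 2)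
      ∂γ n ∂γ n ∂γ n| ≤ A * (1 / δ * B) * secondMoment U := by
    have := norm_integral_le_of_norm_le_const (μ := γ n) (Filter.Eventually.of_forall fun y₂ =>
      (Real.norm_eq_abs _).trans_le (abs_integral_derivShare_mul_le hg hU hφ hδ y₂))
    rwa [probReal_univ, mul_one] at this
  have hrest := (abs_integral_smallShare_mul_le hφ hδ).trans (hsmall n g U δ hg hU hδ hV)
  have hU0 := secondMoment_nonneg U
  rw [integral_eq_integral_shares g (hφ.polyGrowth_mul_eval_sq g U) hδ]
  refine (abs_add_le _ _).trans ?_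
  rw [abs_mul, abs_two]
  have hP : 0 ≤ (δ ^ 2 / polyVar g) ^ (1 / (2 * k) : ℝ) := by positivity
  generalize (δ ^ 2 / polyVar g) ^ (1 / (2 * k) : ℝ) = P at *
  calc _ ≤ 2 * (A * (1 / δ * B) * secondMoment U) + C * P * secondMoment U :=
        add_le_add (mul_le_mul_of_nonneg_left hderiv zero_le_two) hrest
    _ = (2 * B * (A / δ) + C * P) * secondMoment U := by ring
    _ ≤ (2 * B + C) * (A / δ + P) * secondMoment U := by
        refine mul_le_mul_of_nonneg_right ?_ hU0
        have : 0 ≤ A / δ := by positivity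
        nlinarith [mul_nonneg hB hP, mul_nonneg hC this]

-- The choice of `δ` makes `A / δ` and `(δ² / V) ^ (1 / 2k)` equal.
lemma exists_balanced_delta {k A V : ℝ} (hk : 0 < k) (hA : 0 < A) (hV : 0 < V) :
    ∃ δ : ℝ, 0 < δ ∧ A / δ = (A ^ 2 / V) ^ (1 / (2 * (k + 1))) ∧
      (δ ^ 2 / V) ^ (1 / (2 * k)) = (A ^ 2 / V) ^ (1 / (2 * (k + 1))) := by
  set t : ℝ := A ^ 2 / V with ht_def
  have ht : 0 < t := by positivity
  set τ : ℝ := t ^ (1 / (2 * (k + 1))) with hτ_def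
  have : 0 < τ := by positivity
  refine ⟨A / τ, by positivity, div_div_cancel₀ hA.ne', ?_⟩
  have hτ_sq : τ ^ 2 = t ^ (1 / (k + 1)) := by
    rw [hτ_def, ← Real.rpow_mul_natCast ht.le]
    congr 1
    push_cast
    field_simp
  have hratio : (A / τ) ^ 2 / V = t ^ (k / (k + 1)) := by
    rw [div_pow, div_right_comm, hτ_sq, ← ht_def, div_eq_iff (by positivity), ← Real.rpow_add ht,
      ← add_div, div_self (by positivity), Real.rpow_one]
  rw [hratio, ← Real.rpow_mul ht.le, hτ_def]
  congr 1
  field_simp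

lemma SmoothingInequality.succ {k D : ℕ} (hk : 1 ≤ k) (h : SmoothingInequality k (k + D)) :
    SmoothingInequality (k + 1) D := by
  obtain ⟨C, hC, hbound⟩ := h.exists_abs_integral_le hk
  refine ⟨2 * C, by positivity, fun n g U φ φ' A hg hU hA hφ hV => ?_⟩
  obtain ⟨δ, hδ, hδ₁, hδ₂⟩ := exists_balanced_delta (Nat.cast_pos.2 hk) hA hV
  refine (hbound n g U φ φ' A δ hg hU hφ hδ hV).trans_eq ?_
  rw [hδ₁, hδ₂]
  push_cast
  ring

theorem smoothingInequality {d : ℕ} (hd : 1 ≤ d) (D : ℕ) : SmoothingInequality d D := by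
  induction d, hd using Nat.le_induction generalizing D with
  | base => exact smoothingInequality_one D
  | succ k hk ih => exact (ih (k + D)).succ hk

/-! ### From translation regularity to a density -/

section TestFunctions

variable {α : Type*} [MeasurableSpace α]

lemma integrable_of_abs_le {m : Measure α} [IsFiniteMeasure m] {f : α → ℝ} {C : ℝ}
    (hf : Measurable f) (h : ∀ x, |f x| ≤ C) : Integrable f m :=
  (integrable_const C).mono' hf.aestronglyMeasurable (.of_forall h)

variable [TopologicalSpace α] [NormalSpace α] [BorelSpace α]

lemma exists_continuous_abs_le_integral_abs_sub_le {m : Measure α} [IsFiniteMeasure m]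
    [m.WeaklyRegular] {ψ : α → ℝ} (hψ : Measurable ψ) (hψ_le : ∀ x, |ψ x| ≤ 1) {η : ℝ}
    (hη : 0 < η) : ∃ c : α → ℝ, Continuous c ∧ (∀ x, |c x| ≤ 1) ∧ ∫ x, |ψ x - c x| ∂m ≤ η := by
  have hψ_int : Integrable ψ m := integrable_of_abs_le hψ hψ_le
  obtain ⟨u, hu, hu_int⟩ := hψ_int.exists_boundedContinuous_integral_sub_le hη
  have hle : (-1 : ℝ) ≤ 1 := by norm_num
  have hclamp : Continuous fun x => (Set.projIcc (-1) 1 hle (u x) : ℝ) :=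
    continuous_subtype_val.comp (continuous_projIcc.comp u.continuous)
  refine ⟨_, hclamp, fun x => abs_le.2 (Set.projIcc (-1) 1 hle (u x)).2, hu.trans' ?_⟩
  refine integral_mono_of_nonneg (.of_forall fun x => abs_nonneg _) (hψ_int.sub hu_int).norm
    (.of_forall fun x => ?_)
  have hψx : (Set.projIcc (-1) 1 hle (ψ x) : ℝ) = ψ x :=
    congrArg Subtype.val (Set.projIcc_of_mem hle (abs_le.1 (hψ_le x)))
  calc |ψ x - Set.projIcc (-1) 1 hle (u x)|
      = |(Set.projIcc (-1) 1 hle (ψ x) : ℝ) - Set.projIcc (-1) 1 hle (u x)| := by rw [hψx]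
    _ ≤ ‖ψ x - u x‖ := Set.abs_projIcc_sub_projIcc hle

lemma abs_integral_sub_integral_le_of_continuous {ν₁ ν₂ : Measure α} [IsFiniteMeasure ν₁]
    [IsFiniteMeasure ν₂] [(ν₁ + ν₂).WeaklyRegular] {K : ℝ}
    (hK : ∀ ψ : α → ℝ, Continuous ψ → (∀ x, |ψ x| ≤ 1) → |∫ x, ψ x ∂ν₁ - ∫ x, ψ x ∂ν₂| ≤ K)
    {ψ : α → ℝ} (hψ : Measurable ψ) (hψ_le : ∀ x, |ψ x| ≤ 1) :
    |∫ x, ψ x ∂ν₁ - ∫ x, ψ x ∂ν₂| ≤ K := by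
  refine le_of_forall_pos_le_add fun η hη => ?_
  obtain ⟨c, hc, hc_le, hcη⟩ :=
    exists_continuous_abs_le_integral_abs_sub_le (m := ν₁ + ν₂) hψ hψ_le hη
  have hsplit (m : Measure α) [IsFiniteMeasure m] : ∫ x, ψ x ∂m - ∫ x, c x ∂m =
      ∫ x, (ψ x - c x) ∂m :=
    (integral_sub (integrable_of_abs_le hψ hψ_le) (integrable_of_abs_le hc.measurable hc_le)).symm
  have hdiff (m : Measure α) [IsFiniteMeasure m] : Integrable (fun x => |ψ x - c x|) m :=
    ((integrable_of_abs_le hψ hψ_le).sub (integrable_of_abs_le hc.measurable hc_le)).abs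
  rw [integral_add_measure (hdiff ν₁) (hdiff ν₂)] at hcη
  calc |∫ x, ψ x ∂ν₁ - ∫ x, ψ x ∂ν₂|
      = |(∫ x, c x ∂ν₁ - ∫ x, c x ∂ν₂) + (∫ x, (ψ x - c x) ∂ν₁ - ∫ x, (ψ x - c x) ∂ν₂)| := by
        rw [← hsplit ν₁, ← hsplit ν₂]
        congr 1
        ring
    _ ≤ |∫ x, c x ∂ν₁ - ∫ x, c x ∂ν₂| +
          (|∫ x, (ψ x - c x) ∂ν₁| + |∫ x, (ψ x - c x) ∂ν₂|) :=
        (abs_add_le _ _).trans (by gcongr; exact abs_sub _ _)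
    _ ≤ K + (∫ x, |ψ x - c x| ∂ν₁ + ∫ x, |ψ x - c x| ∂ν₂) :=
        add_le_add (hK c hc hc_le)
          (add_le_add abs_integral_le_integral_abs abs_integral_le_integral_abs)
    _ ≤ K + η := by gcongr

end TestFunctions

-- Almost every translate of `ν` gives no mass to a null set.
lemma absolutelyContinuous_of_tendsto_map_add {G : Type*} [AddGroup G] [TopologicalSpace G]
    [MeasurableSpace G] [MeasurableAdd₂ G] {μ ν : Measure G} [SFinite μ] [μ.IsAddLeftInvariant]
    [μ.IsOpenPosMeasure] [IsFiniteMeasure ν]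
    (hν : ∀ N, MeasurableSet N →
      Filter.Tendsto (fun h => (ν.map (· + h)).real N) (nhds 0) (nhds (ν.real N))) : ν ≪ μ := by
  refine Measure.AbsolutelyContinuous.mk fun N hN hN0 => ?_
  have hae : ∀ᵐ h ∂μ, (ν.map (· + h)).real N = 0 := by
    filter_upwards [Measure.measure_ae_null_of_prod_null
      ((quasiMeasurePreserving_add_swap μ ν).preimage_null hN0)] with h hh
    rw [map_measureReal_apply (measurable_add_const h) hN]
    exact congrArg ENNReal.toReal hh
  have hfreq : ∃ᶠ h in nhds (0 : G), (ν.map (· + h)).real N ∈ ({0} : Set ℝ) :=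
    mem_closure_iff_frequently.1 (Measure.dense_of_ae hae 0)
  have hzero := isClosed_singleton.mem_of_frequently_of_tendsto hfreq (hν N hN)
  exact (measureReal_eq_zero_iff).1 hzero

lemma integral_abs_rnDeriv_add_sub_le {ν : Measure ℝ} [IsFiniteMeasure ν] (hac : ν ≪ volume)
    {h K : ℝ} (hK : ∀ ψ : ℝ → ℝ, Measurable ψ → (∀ s, |ψ s| ≤ 1) →
      |∫ s, ψ s ∂ν.map (· + -h) - ∫ s, ψ s ∂ν| ≤ K) :
    ∫ s, |(ν.rnDeriv volume (s + h)).toReal - (ν.rnDeriv volume s).toReal| ≤ K := by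
  set ρ : ℝ → ℝ := fun s => (ν.rnDeriv volume s).toReal
  have hρ : Measurable ρ := (Measure.measurable_rnDeriv ν volume).ennreal_toReal
  have hρ_int : Integrable ρ := Measure.integrable_toReal_rnDeriv
  let ψ : ℝ → ℝ := fun s => if 0 ≤ ρ (s + h) - ρ s then 1 else -1
  have hψ : Measurable ψ := .ite (measurableSet_le measurable_const
    ((hρ.comp (measurable_add_const h)).sub hρ)) measurable_const measurable_const
  have hψ_le (s : ℝ) : |ψ s| ≤ 1 := by
    simp only [ψ]
    split_ifs <;> simp
  have h_int : Integrable fun s => ρ s * ψ s :=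
    hρ_int.mul_bdd (c := 1) hψ.aestronglyMeasurable (.of_forall hψ_le)
  have hint_add : Integrable fun s => ρ (s + h) * ψ s :=
    (hρ_int.comp_add_right h).mul_bdd (c := 1) hψ.aestronglyMeasurable (.of_forall hψ_le)
  have hν : ∫ s, ψ s ∂ν = ∫ s, ρ s * ψ s := (integral_rnDeriv_smul hac).symm
  have hν_map : ∫ s, ψ s ∂ν.map (· + -h) = ∫ s, ρ (s + h) * ψ s := by
    rw [integral_map (measurable_add_const _).aemeasurable hψ.aestronglyMeasurable,
      ← integral_rnDeriv_smul hac, ← integral_add_right_eq_self _ h]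
    simp [ρ]
  calc ∫ s, |ρ (s + h) - ρ s| = ∫ s, (ρ (s + h) * ψ s - ρ s * ψ s) := by
        congr with s
        rw [← sub_mul]
        simp only [ψ]
        split_ifs with hs
        · rw [abs_of_nonneg hs, mul_one]
        · rw [abs_of_neg (not_le.1 hs), mul_neg_one]
    _ = ∫ s, ψ s ∂ν.map (· + -h) - ∫ s, ψ s ∂ν := by rw [integral_sub hint_add h_int, hν, hν_map]
    _ ≤ K := (le_abs_self _).trans (hK ψ hψ hψ_le)

lemma exists_density_of_translation_le {ν : Measure ℝ} [IsFiniteMeasure ν] {K α : ℝ} (hα : 0 < α)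
    (hK : ∀ (h : ℝ) (ψ : ℝ → ℝ), Continuous ψ → (∀ s, |ψ s| ≤ 1) →
      |∫ s, ψ s ∂ν.map (· + h) - ∫ s, ψ s ∂ν| ≤ K * |h| ^ α) :
    ∃ ρ : ℝ → ℝ, Integrable ρ ∧ ν = volume.withDensity (fun s => ENNReal.ofReal (ρ s)) ∧
      ∀ h, ∫ s, |ρ (s + h) - ρ s| ≤ K * |h| ^ α := by
  have hK_meas (h : ℝ) (ψ : ℝ → ℝ) (hψ : Measurable ψ) (hψ_le : ∀ s, |ψ s| ≤ 1) :
      |∫ s, ψ s ∂ν.map (· + h) - ∫ s, ψ s ∂ν| ≤ K * |h| ^ α :=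
    abs_integral_sub_integral_le_of_continuous (hK h) hψ hψ_le
  have hac : ν ≪ volume := by
    refine absolutelyContinuous_of_tendsto_map_add fun N hN => ?_
    have hlim : Filter.Tendsto (fun h : ℝ => K * |h| ^ α) (nhds 0) (nhds 0) := by
      have hcont : Continuous fun h : ℝ => K * |h| ^ α :=
        continuous_const.mul (continuous_abs.rpow_const fun _ => .inr hα.le)
      simpa [Real.zero_rpow hα.ne'] using hcont.tendsto 0
    refine tendsto_iff_norm_sub_tendsto_zero.2 (squeeze_zero (fun h => norm_nonneg _)
      (fun h => ?_) hlim)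
    have := hK_meas h (N.indicator 1) (measurable_one.indicator hN) fun s => by
      by_cases hs : s ∈ N <;> simp [hs]
    rwa [integral_indicator_one hN, integral_indicator_one hN] at this
  refine ⟨fun s => (ν.rnDeriv volume s).toReal, Measure.integrable_toReal_rnDeriv, ?_, fun h => ?_⟩
  · rw [withDensity_congr_ae (ofReal_toReal_ae_eq (Measure.rnDeriv_lt_top ν volume)),
      Measure.withDensity_rnDeriv_eq ν volume hac]
  · simpa using integral_abs_rnDeriv_add_sub_le hac (h := h) (hK_meas (-h))

lemma isTest_primitive {ψ : ℝ → ℝ} (hψ : Continuous ψ) (hψ_le : ∀ s, |ψ s| ≤ 1) (h : ℝ) :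
    IsTest (fun s => (∫ t in s..(s + h), ψ t) / 2) (fun s => (ψ (s + h) - ψ s) / 2) (|h| / 2) where
  hasDerivAt s := by
    have hF (u : ℝ) : HasDerivAt (fun u => ∫ t in (0 : ℝ)..u, ψ t) (ψ u) u :=
      hψ.integral_hasStrictDerivAt 0 u |>.hasDerivAt
    refine ((((hF (s + h)).comp_add_const s h).fun_sub (hF s)).div_const 2).congr_of_eventuallyEq
      (.of_forall fun u => congrArg (· / 2) ?_)
    exact (intervalIntegral.integral_interval_sub_left (hψ.intervalIntegrable _ _)
      (hψ.intervalIntegrable _ _)).symm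
  continuous_deriv := ((hψ.comp (continuous_add_const h)).sub hψ).div_const 2
  abs_le s := by
    have h_int := intervalIntegral.norm_integral_le_of_norm_le_const (a := s) (b := s + h) (f := ψ)
      (C := 1) fun t _ => hψ_le t
    rw [Real.norm_eq_abs, add_sub_cancel_left, one_mul] at h_int
    rw [abs_div, abs_two]
    gcongr
  abs_deriv_le s := by
    rw [abs_div, abs_two, div_le_one two_pos]
    linarith [abs_sub (ψ (s + h)) (ψ s), hψ_le s, hψ_le (s + h)]

lemma integral_map_add_sub_integral {ν : Measure ℝ} [IsFiniteMeasure ν] {ψ : ℝ → ℝ}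
    (hψ : Continuous ψ) (hψ_le : ∀ s, |ψ s| ≤ 1) (h : ℝ) :
    ∫ s, ψ s ∂ν.map (· + h) - ∫ s, ψ s ∂ν = 2 * ∫ s, (ψ (s + h) - ψ s) / 2 ∂ν := by
  have hψh : Continuous fun s => ψ (s + h) := hψ.comp (continuous_add_const h)
  rw [integral_map (measurable_add_const h).aemeasurable hψ.aestronglyMeasurable, integral_div,
    integral_sub (integrable_of_abs_le hψh.measurable fun s => hψ_le _)
      (integrable_of_abs_le hψ.measurable hψ_le)]
  ring

lemma SmoothingInequality.exists_abs_integral_map_add_le {d : ℕ} (h : SmoothingInequality d 0) :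
    ∃ C : ℝ, 0 ≤ C ∧ ∀ (n : ℕ) (g : MvPolynomial (Fin n) ℝ), g.totalDegree ≤ d → 0 < polyVar g →
      ∀ (h : ℝ) (ψ : ℝ → ℝ), Continuous ψ → (∀ s, |ψ s| ≤ 1) → h ≠ 0 →
        |∫ s, ψ s ∂((γ n).map fun x => eval x g).map (· + h) -
            ∫ s, ψ s ∂(γ n).map fun x => eval x g| ≤
          C * polyVar g ^ (-(1 : ℝ) / (2 * d)) * |h| ^ ((1 : ℝ) / d) := by
  obtain ⟨C, hC, hsmooth⟩ := h
  refine ⟨2 * C, by positivity, fun n g hg hV h ψ hψ hψ_le hh => ?_⟩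
  have hg_meas : Measurable fun x => eval x g := (PolyGrowth.eval g).continuous.measurable
  have := Measure.isProbabilityMeasure_map (μ := γ n) hg_meas.aemeasurable
  have hψ' := isTest_primitive hψ hψ_le h
  have hbound := hsmooth n g 1 _ _ (|h| / 2) hg (by simp) (by positivity) hψ' hV
  have hone : secondMoment (1 : MvPolynomial (Fin n) ℝ) = 1 := by simp [secondMoment]
  simp only [map_one, one_pow, mul_one, hone] at hbound
  rw [integral_map_add_sub_integral hψ hψ_le, abs_mul, abs_two,
    integral_map hg_meas.aemeasurable hψ'.continuous_deriv.aestronglyMeasurable]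
  have hexp : ((|h| / 2) ^ 2 / polyVar g) ^ (1 / (2 * d) : ℝ) ≤
      polyVar g ^ (-(1 : ℝ) / (2 * d)) * |h| ^ ((1 : ℝ) / d) := by
    calc ((|h| / 2) ^ 2 / polyVar g) ^ (1 / (2 * d) : ℝ)
        ≤ (|h| ^ 2 / polyVar g) ^ (1 / (2 * d) : ℝ) := by
          gcongr
          exact half_le_self (abs_nonneg h)
      _ = polyVar g ^ (-(1 : ℝ) / (2 * d)) * |h| ^ ((1 : ℝ) / d) := by
          rw [Real.div_rpow (by positivity) hV.le, ← Real.rpow_natCast_mul (abs_nonneg h),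
            neg_div, Real.rpow_neg hV.le, div_eq_inv_mul]
          congr 2
          push_cast
          field_simp
  calc _ ≤ 2 * (C * ((|h| / 2) ^ 2 / polyVar g) ^ (1 / (2 * d) : ℝ)) := by gcongr
    _ ≤ 2 * (C * (polyVar g ^ (-(1 : ℝ) / (2 * d)) * |h| ^ ((1 : ℝ) / d))) := by gcongr
    _ = _ := by ring

theorem exists_density_eval {d : ℕ} (hd : 1 ≤ d) : ∃ C : ℝ, 0 < C ∧
    ∀ (n : ℕ) (g : MvPolynomial (Fin n) ℝ), g.totalDegree ≤ d → 0 < polyVar g →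
      ∃ ρ : ℝ → ℝ, Integrable ρ ∧
        (γ n).map (fun x => eval x g) = volume.withDensity (fun s => ENNReal.ofReal (ρ s)) ∧
        ∀ h, ∫ s, |ρ (s + h) - ρ s| ≤
          C * polyVar g ^ (-(1 : ℝ) / (2 * d)) * |h| ^ ((1 : ℝ) / d) := by
  obtain ⟨C, hC, htrans⟩ := (smoothingInequality hd 0).exists_abs_integral_map_add_le
  refine ⟨C + 1, by positivity, fun n g hg hV => ?_⟩
  have : (0 : ℝ) < d := by exact_mod_cast hd
  refine exists_density_of_translation_le (by positivity) fun h ψ hψ hψ_le => ?_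
  rcases eq_or_ne h 0 with rfl | hh
  · simp only [add_zero, Measure.map_id', sub_self, abs_zero]
    positivity
  · refine (htrans n g hg hV h ψ hψ hψ_le hh).trans ?_
    gcongr
    linarith

section AffineMaps

variable {n : ℕ} (g : MvPolynomial (Fin n) ℝ) (L : (Fin n → ℝ) →ₗ[ℝ] (Fin n → ℝ)) (b : Fin n → ℝ)

/-- The polynomial `x ↦ g (b + L x)`. -/
noncomputable def affineComp : MvPolynomial (Fin n) ℝ :=
  MvPolynomial.bind₁ (fun i => MvPolynomial.C (b i) +
    ∑ j, MvPolynomial.C (L (Pi.single j 1) i) * MvPolynomial.X j) g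

lemma eval_affineComp (x : Fin n → ℝ) : eval x (affineComp g L b) = eval (b + L x) g := by
  have hL (i : Fin n) : L x i = ∑ j, L (Pi.single j 1) i * x j := by
    simp [← LinearMap.toMatrix'_mulVec L x, Matrix.mulVec, dotProduct, LinearMap.toMatrix'_apply]
  simp only [affineComp, eval, MvPolynomial.eval₂Hom_bind₁]
  congr 2
  ext i
  simp [hL]

lemma totalDegree_affineComp_le : (affineComp g L b).totalDegree ≤ g.totalDegree := by
  have hlin (i : Fin n) : (MvPolynomial.C (b i) +
      ∑ j, MvPolynomial.C (L (Pi.single j 1) i) * MvPolynomial.X j :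
      MvPolynomial (Fin n) ℝ).totalDegree ≤ 1 :=
    (MvPolynomial.totalDegree_add _ _).trans (max_le (by simp)
      (MvPolynomial.totalDegree_finsetSum_le fun j _ =>
        (MvPolynomial.totalDegree_mul _ _).trans (by simp)))
  rw [affineComp, MvPolynomial.bind₁, MvPolynomial.aeval_def, MvPolynomial.eval₂_eq]
  refine MvPolynomial.totalDegree_finsetSum_le fun s hs => ?_
  calc _ ≤ _ := MvPolynomial.totalDegree_mul _ _
    _ ≤ 0 + ∑ i ∈ s.support, s i * 1 := by
        refine add_le_add (MvPolynomial.totalDegree_C _).le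
          ((MvPolynomial.totalDegree_finsetProd _ _).trans (Finset.sum_le_sum fun i _ => ?_))
        exact (MvPolynomial.totalDegree_pow _ _).trans (Nat.mul_le_mul_left _ (hlin i))
    _ ≤ g.totalDegree := by
        simp only [zero_add, mul_one]
        exact MvPolynomial.le_totalDegree hs

lemma measurable_add_linearMap : Measurable fun x => b + L x :=
  (continuous_const.add L.continuous_of_finiteDimensional).measurable

lemma map_eval_map_affine : ((γ n).map fun x => b + L x).map (fun x => eval x g) =
    (γ n).map fun x => eval x (affineComp g L b) := by
  rw [Measure.map_map (PolyGrowth.eval g).continuous.measurable (measurable_add_linearMap L b)]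
  simp only [Function.comp_def, eval_affineComp]

lemma variance_eval_map_affine :
    Var[fun x => eval x g; (γ n).map fun x => b + L x] = polyVar (affineComp g L b) := by
  rw [variance_map (PolyGrowth.eval g).continuous.aemeasurable
    (measurable_add_linearMap L b).aemeasurable]
  simp only [Function.comp_def, polyVar, eval_affineComp]

end AffineMaps

lemma omegaMod_le {ρ : ℝ → ℝ} {ε K α : ℝ} (hε : 0 ≤ ε) (hK : 0 ≤ K) (hα : 0 ≤ α)
    (h : ∀ h, ∫ s, |ρ (s + h) - ρ s| ≤ K * |h| ^ α) : omegaMod ρ ε ≤ K * ε ^ α := by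
  refine csSup_le ⟨_, 0, by simpa using hε, rfl⟩ ?_
  rintro - ⟨t, ht, rfl⟩
  refine (h t).trans ?_
  gcongr

end GaussPoly

/-- For every `d` there is `C(d) > 0` such that for every Gaussian random vector `X` in `ℝⁿ`
and every non-constant (as a random variable) polynomial `g` of total degree at most `d`,
the distribution of `g(X)` has a density `ϱ_g` with
`ω(ϱ_g, ε) ≤ C(d) (𝔻g(X))^{-1/(2d)} ε^{1/d}`; in particular `ϱ_g ∈ B^{1/d}_{1,∞}(ℝ)`. -/
theorem density_regularity_gaussian_polynomial (d : ℕ) (hd : 1 ≤ d) :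
    ∃ C : ℝ, 0 < C ∧
      ∀ (n : ℕ) (μ : Measure (Fin n → ℝ)), IsGaussianVec μ →
        ∀ g : MvPolynomial (Fin n) ℝ, g.totalDegree ≤ d →
          0 < variance (fun x => MvPolynomial.eval x g) μ →
          ∃ ρ : ℝ → ℝ, Integrable ρ ∧
            μ.map (fun x => MvPolynomial.eval x g)
              = volume.withDensity (fun s => ENNReal.ofReal (ρ s)) ∧
            (∀ ε : ℝ, 0 < ε →
              omegaMod ρ ε ≤
                C * (variance (fun x => MvPolynomial.eval x g) μ) ^ (-(1 : ℝ) / (2 * d)) *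
                  ε ^ ((1 : ℝ) / d)) ∧
            ∃ C' : ℝ, 0 < C' ∧
              ∀ h : ℝ, (∫ t : ℝ, |ρ (t + h) - ρ t|) ≤ C' * |h| ^ ((1 : ℝ) / d) := by
  obtain ⟨C, hC, hdensity⟩ := GaussPoly.exists_density_eval hd
  refine ⟨C, hC, ?_⟩
  rintro n μ ⟨L, b, rfl⟩ g hg hV
  have hdeg := (GaussPoly.totalDegree_affineComp_le g L b).trans hg
  rw [GaussPoly.variance_eval_map_affine] at hV ⊢
  rw [GaussPoly.map_eval_map_affine]
  obtain ⟨ρ, hρ, hmap, hbound⟩ := hdensity n (GaussPoly.affineComp g L b) hdeg hV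
  have hα : 0 ≤ (1 : ℝ) / d := by positivity
  exact ⟨ρ, hρ, hmap, fun ε hε => GaussPoly.omegaMod_le hε.le (by positivity) hα hbound,
    _, by positivity, hbound⟩
end

section
/- For every function ϱ ∈ L¹(ℝ) and every ε > 0, one has 2^{−1} ω(ϱ, 2ε) ≤ σ(ϱ, ε) ≤ 6 ω(ϱ, ε). -/
/-!
Both bounds rest on `∫ (g s - g (s - h)) ρ(s) ds = ∫ g(s) (ρ(s) - ρ(s + h)) ds` for bounded `g`.

Lower bound: `∫ |ρ(s) - ρ(s + h)| ds` is the supremum of the right-hand side over test functions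
`|g| ≤ 1`. For such `g` and `|h| ≤ 2ε`, half the integral of `g` over the window `[s - h, s]` is a
test function `φ` with `|φ| ≤ ε` and `φ' = (g - g(· - h)) / 2`, so `|φ'| ≤ 1` and `∫ φ' ρ` is half
of the pairing.

Upper bound: `t ↦ ∫ φ(s - t) ρ(s) ds` has derivative `-∫ φ'(s - t) ρ(s) ds`, so by the mean value
theorem some `t ∈ (0, ε)` satisfies `∫ φ'(s - t) ρ = ε⁻¹ ∫ (φ(s) - φ(s - ε)) ρ ≤ ω(ρ, ε)`. Replacing
`φ'(s - t)` by `φ'(s)` costs another `ω(ρ, ε)`, which gives `σ(ρ, ε) ≤ 2 ω(ρ, ε)`.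
-/

open MeasureTheory

/-- The modulus `σ(ϱ, ε) = sup { ∫ φ' ϱ : φ ∈ C₀^∞(ℝ), ‖φ‖_∞ ≤ ε, ‖φ'‖_∞ ≤ 1 }`. -/
noncomputable def sigmaMod (ρ : ℝ → ℝ) (ε : ℝ) : ℝ :=
  sSup {r : ℝ | ∃ φ : ℝ → ℝ, ContDiff ℝ (⊤ : ℕ∞) φ ∧ HasCompactSupport φ ∧
    (∀ x, |φ x| ≤ ε) ∧ (∀ x, |deriv φ x| ≤ 1) ∧ r = ∫ s : ℝ, deriv φ s * ρ s}

open scoped ContDiff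

section Pairing

variable {α : Type*} [MeasurableSpace α] {μ : Measure α} {f g : α → ℝ} {c : ℝ}

lemma integrable_mul_of_abs_le (hf : Integrable f μ) (hg : AEStronglyMeasurable g μ)
    (hc : ∀ x, |g x| ≤ c) : Integrable (fun x ↦ g x * f x) μ :=
  hf.bdd_mul hg (.of_forall hc)

lemma integral_mul_le_mul_integral_abs (hf : Integrable f μ) (hc : ∀ x, |g x| ≤ c) :
    ∫ x, g x * f x ∂μ ≤ c * ∫ x, |f x| ∂μ := by
  rw [← integral_const_mul]
  refine (Real.le_norm_self _).trans
    (norm_integral_le_of_norm_le (hf.abs.const_mul c) (.of_forall fun x ↦ ?_))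
  rw [norm_mul]
  exact mul_le_mul_of_nonneg_right (hc x) (abs_nonneg _)

lemma integral_sub_comp_sub_mul_eq [AddGroup α] [MeasurableAdd α] [μ.IsAddRightInvariant]
    (hf : Integrable f μ) (hg : AEStronglyMeasurable g μ) (hc : ∀ x, |g x| ≤ c) (h : α) :
    ∫ x, (g x - g (x - h)) * f x ∂μ = ∫ x, g x * (f x - f (x + h)) ∂μ := by
  have shift : ∫ x, g (x - h) * f x ∂μ = ∫ x, g x * f (x + h) ∂μ := by
    simpa using (integral_add_right_eq_self (fun x ↦ g (x - h) * f x) h).symm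
  have hg_shift : AEStronglyMeasurable (fun x ↦ g (x - h)) μ :=
    hg.comp_measurePreserving (measurePreserving_sub_right μ h)
  simp only [sub_mul, mul_sub]
  rw [integral_sub (integrable_mul_of_abs_le hf hg hc)
      (integrable_mul_of_abs_le hf hg_shift fun x ↦ hc (x - h)),
    integral_sub (integrable_mul_of_abs_le hf hg hc)
      (integrable_mul_of_abs_le (hf.comp_add_right h) hg hc), shift]

end Pairing

section SmoothSign

/-- A smooth approximation of the sign function, with `η > 0` the width of the transition. It turns
a smooth `k` into a smooth multiplier bounded by `1` whose pairing with `k` is nearly `∫ |k|`. -/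
noncomputable def smoothSign (η y : ℝ) : ℝ := y / √(y ^ 2 + η ^ 2)

@[simp]
lemma smoothSign_zero (η : ℝ) : smoothSign η 0 = 0 := zero_div _

lemma abs_smoothSign_le_one (η y : ℝ) : |smoothSign η y| ≤ 1 := by
  rw [smoothSign, abs_div, abs_of_nonneg (Real.sqrt_nonneg _)]
  exact div_le_one_of_le₀ (Real.abs_le_sqrt (le_add_of_nonneg_right (sq_nonneg η)))
    (Real.sqrt_nonneg _)

lemma contDiff_smoothSign {η : ℝ} (hη : 0 < η) {n : WithTop ℕ∞} :
    ContDiff ℝ n (smoothSign η) := by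
  have pos (y : ℝ) : 0 < y ^ 2 + η ^ 2 := by positivity
  exact contDiff_id.div (((contDiff_id.pow 2).add contDiff_const).sqrt fun y ↦ (pos y).ne')
    fun y ↦ (Real.sqrt_pos.2 (pos y)).ne'

lemma abs_le_smoothSign_mul_add {η : ℝ} (hη : 0 < η) (y : ℝ) :
    |y| ≤ smoothSign η y * y + η := by
  have root_pos : 0 < √(y ^ 2 + η ^ 2) := Real.sqrt_pos.2 (by positivity)
  have root_le : √(y ^ 2 + η ^ 2) ≤ |y| + η :=
    Real.sqrt_le_iff.2 ⟨by positivity, by nlinarith [sq_abs y, abs_nonneg y]⟩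
  rw [smoothSign, div_mul_eq_mul_div, ← sub_le_iff_le_add, le_div_iff₀ root_pos]
  have le_root : |y| ≤ √(y ^ 2 + η ^ 2) :=
    Real.abs_le_sqrt (le_add_of_nonneg_right (sq_nonneg η))
  calc (|y| - η) * √(y ^ 2 + η ^ 2)
      = |y| * √(y ^ 2 + η ^ 2) - η * √(y ^ 2 + η ^ 2) := sub_mul _ _ _
    _ ≤ |y| * (|y| + η) - η * |y| := by gcongr
    _ = y * y := by rw [← abs_mul_abs_self y]; ring

end SmoothSign

section Duality

lemma integral_abs_le_integral_mul_add {α : Type*} [MeasurableSpace α] {μ : Measure α}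
    {f k g : α → ℝ} (hf : Integrable f μ) (hk : Integrable k μ) (hg : AEStronglyMeasurable g μ)
    (hg_le : ∀ x, |g x| ≤ 1) :
    ∫ x, |f x| ∂μ ≤ ∫ x, g x * f x ∂μ + (∫ x, |k x| ∂μ - ∫ x, g x * k x ∂μ)
      + 2 * ∫ x, |f x - k x| ∂μ := by
  have hfk : Integrable (fun x ↦ f x - k x) μ := hf.sub hk
  have abs_f_le : ∫ x, |f x| ∂μ ≤ ∫ x, |k x| ∂μ + ∫ x, |f x - k x| ∂μ := by
    rw [← integral_add hk.abs hfk.abs]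
    refine integral_mono hf.abs (hk.abs.add hfk.abs) fun x ↦ ?_
    linarith [abs_sub_abs_le_abs_sub (f x) (k x)]
  have pairing_le : ∫ x, g x * k x ∂μ - ∫ x, g x * f x ∂μ ≤ ∫ x, |f x - k x| ∂μ := by
    rw [← integral_sub (integrable_mul_of_abs_le hk hg hg_le)
      (integrable_mul_of_abs_le hf hg hg_le)]
    simpa only [← mul_sub, one_mul, Pi.sub_apply, abs_sub_comm (k _)] using
      integral_mul_le_mul_integral_abs (hk.sub hf) hg_le
  linarith

lemma integral_abs_le_integral_smoothSign_mul_add {X : Type*} [TopologicalSpace X]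
    [MeasurableSpace X] [OpensMeasurableSpace X] {μ : Measure X} [IsFiniteMeasureOnCompacts μ]
    {k : X → ℝ} (hk : Continuous k) (hk_supp : HasCompactSupport k) {η : ℝ} (hη : 0 < η) :
    ∫ x, |k x| ∂μ ≤ ∫ x, smoothSign η (k x) * k x ∂μ + η * μ.real (tsupport k) := by
  have hk_int : Integrable k μ := hk.integrable_of_hasCompactSupport hk_supp
  have hprod_int : Integrable (fun x ↦ smoothSign η (k x) * k x) μ :=
    integrable_mul_of_abs_le hk_int
      ((contDiff_smoothSign hη (n := 0)).continuous.comp hk).aestronglyMeasurable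
      fun x ↦ abs_smoothSign_le_one η (k x)
  have hconst_int : Integrable ((tsupport k).indicator fun _ ↦ η) μ :=
    (integrable_indicator_iff (isClosed_tsupport k).measurableSet).2
      (integrableOn_const hk_supp.measure_lt_top.ne)
  have integral_const :
      ∫ x, (tsupport k).indicator (fun _ ↦ η) x ∂μ = η * μ.real (tsupport k) := by
    rw [integral_indicator_const _ (isClosed_tsupport k).measurableSet, smul_eq_mul, mul_comm]
  rw [← integral_const, ← integral_add hprod_int hconst_int]
  refine integral_mono hk_int.abs (hprod_int.add hconst_int) fun x ↦ ?_
  by_cases hx : x ∈ tsupport k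
  · simpa [hx] using abs_le_smoothSign_mul_add hη (k x)
  · simp [image_eq_zero_of_notMem_tsupport hx, hx]

lemma exists_contDiff_hasCompactSupport_integral_abs_le {E : Type*} [NormedAddCommGroup E]
    [NormedSpace ℝ E] [FiniteDimensional ℝ E] [MeasurableSpace E] [BorelSpace E] {μ : Measure E}
    [IsFiniteMeasureOnCompacts μ] {f : E → ℝ} (hf : Integrable f μ) {δ : ℝ} (hδ : 0 < δ) :
    ∃ g : E → ℝ, ContDiff ℝ ∞ g ∧ HasCompactSupport g ∧ (∀ x, |g x| ≤ 1) ∧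
      ∫ x, |f x| ∂μ ≤ ∫ x, g x * f x ∂μ + δ := by
  obtain ⟨k, hk_supp, hk, hfk⟩ :=
    (memLp_one_iff_integrable.2 hf).exist_eLpNorm_sub_le ENNReal.one_ne_top le_rfl
      (by positivity : 0 < δ / 4)
  have hk_int : Integrable k μ := hk.continuous.integrable_of_hasCompactSupport hk_supp
  have integral_sub_le : ∫ x, |f x - k x| ∂μ ≤ δ / 4 := by
    rw [eLpNorm_one_eq_lintegral_enorm, ← ofReal_integral_norm_eq_lintegral_enorm (hf.sub hk_int)]
      at hfk
    exact (ENNReal.ofReal_le_ofReal_iff (by positivity)).1 hfk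
  set m := μ.real (tsupport k)
  obtain ⟨η, hη, hηm⟩ : ∃ η > 0, η * m ≤ δ / 2 :=
    ⟨δ / (2 * (m + 1)), by positivity, by
      rw [div_mul_eq_mul_div, div_le_div_iff₀ (by positivity) two_pos]
      linarith⟩
  have hg : ContDiff ℝ ∞ (smoothSign η ∘ k) := (contDiff_smoothSign hη).comp hk
  refine ⟨smoothSign η ∘ k, hg, hk_supp.comp_left (smoothSign_zero η),
    fun x ↦ abs_smoothSign_le_one η (k x), ?_⟩
  have le_transfer := integral_abs_le_integral_mul_add hf hk_int
    hg.continuous.aestronglyMeasurable fun x ↦ abs_smoothSign_le_one η (k x)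
  have le_sign := integral_abs_le_integral_smoothSign_mul_add (μ := μ) hk.continuous hk_supp hη
  simp only [Function.comp_apply] at le_transfer ⊢
  linarith

end Duality

section MovingIntegral

variable {E : Type*} [NormedAddCommGroup E] [NormedSpace ℝ E]

/-- The integral of `g` over the window of length `h` ending at `x`. The window is oriented, so
that `h` may be negative; the result is the primitive of `g - g (· - h)` that vanishes wherever `g`
vanishes on the window. -/
noncomputable def movingIntegral (g : ℝ → E) (h x : ℝ) : E := ∫ t in (x - h)..x, g t

lemma norm_movingIntegral_le {g : ℝ → E} {c : ℝ} (hc : ∀ x, ‖g x‖ ≤ c) (h x : ℝ) :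
    ‖movingIntegral g h x‖ ≤ c * |h| := by
  simpa [movingIntegral] using
    intervalIntegral.norm_integral_le_of_norm_le_const (a := x - h) (b := x) fun t _ ↦ hc t

lemma hasCompactSupport_movingIntegral {g : ℝ → E} (hg : HasCompactSupport g) (h : ℝ) :
    HasCompactSupport (movingIntegral g h) := by
  refine .intro (hg.isCompact.add (isCompact_closedBall (0 : ℝ) |h|)) fun x hx ↦ ?_
  refine intervalIntegral.integral_zero_ae (.of_forall fun t ht ↦ ?_)
  by_contra hgt
  have ht_near : |x - t| ≤ |h| := by
    simpa using Set.abs_sub_right_of_mem_uIcc (Set.uIoc_subset_uIcc ht)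
  exact hx ⟨t, subset_tsupport g hgt, x - t, by simpa using ht_near, add_sub_cancel t x⟩

variable [CompleteSpace E]

lemma hasDerivAt_movingIntegral {g : ℝ → E} (hg : Continuous g) (h x : ℝ) :
    HasDerivAt (movingIntegral g h) (g x - g (x - h)) x := by
  have primitive (y : ℝ) : HasDerivAt (fun y ↦ ∫ t in (0 : ℝ)..y, g t) (g y) y :=
    (hg.integral_hasStrictDerivAt 0 y).hasDerivAt
  convert (primitive x).sub ((primitive (x - h)).comp_sub_const x h) using 1
  ext y
  exact (intervalIntegral.integral_interval_sub_left (hg.intervalIntegrable 0 y)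
    (hg.intervalIntegrable 0 (y - h))).symm

lemma deriv_movingIntegral {g : ℝ → E} (hg : Continuous g) (h : ℝ) :
    deriv (movingIntegral g h) = fun x ↦ g x - g (x - h) :=
  funext fun x ↦ (hasDerivAt_movingIntegral hg h x).deriv

lemma contDiff_movingIntegral {g : ℝ → E} {n : ℕ∞} (hg : ContDiff ℝ n g) (h : ℝ) :
    ContDiff ℝ (n + 1) (movingIntegral g h) := by
  refine contDiff_succ_iff_deriv.2
    ⟨fun x ↦ (hasDerivAt_movingIntegral hg.continuous h x).differentiableAt, by simp, ?_⟩
  rw [deriv_movingIntegral hg.continuous]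
  fun_prop

end MovingIntegral

section TranslatedPairing

variable {μ : Measure ℝ} {ρ φ : ℝ → ℝ} {b c : ℝ}

lemma hasDerivAt_integral_comp_sub_mul (hρ : Integrable ρ μ) (hφ : Differentiable ℝ φ)
    (hb : ∀ x, |φ x| ≤ b) (hc : ∀ x, |deriv φ x| ≤ c) (t : ℝ) :
    HasDerivAt (fun t ↦ ∫ s, φ (s - t) * ρ s ∂μ) (-∫ s, deriv φ (s - t) * ρ s ∂μ) t := by
  have hφ_meas (t : ℝ) : AEStronglyMeasurable (fun s ↦ φ (s - t)) μ :=
    (hφ.continuous.comp (continuous_sub_right t)).aestronglyMeasurable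
  have hφ'_meas : AEStronglyMeasurable (fun s ↦ deriv φ (s - t)) μ :=
    ((measurable_deriv φ).comp (measurable_sub_const t)).aestronglyMeasurable
  rw [← integral_neg]
  refine (hasDerivAt_integral_of_dominated_loc_of_deriv_le Filter.univ_mem
    (F' := fun t s ↦ -(deriv φ (s - t) * ρ s)) (bound := fun s ↦ c * |ρ s|)
    (.of_forall fun t ↦ (hφ_meas t).mul hρ.aestronglyMeasurable)
    (integrable_mul_of_abs_le hρ (hφ_meas t) fun s ↦ hb (s - t))
    (hφ'_meas.mul hρ.aestronglyMeasurable).neg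
    (.of_forall fun s t _ ↦ ?_) (hρ.abs.const_mul c) (.of_forall fun s t _ ↦ ?_)).2
  · rw [norm_neg, norm_mul]
    exact mul_le_mul_of_nonneg_right (hc _) (abs_nonneg _)
  · rw [← neg_mul]
    exact ((hφ (s - t)).hasDerivAt.comp_const_sub s t).mul_const (ρ s)

lemma exists_mul_integral_deriv_comp_sub_mul_eq (hρ : Integrable ρ μ) (hφ : Differentiable ℝ φ)
    (hb : ∀ x, |φ x| ≤ b) (hc : ∀ x, |deriv φ x| ≤ c) {h : ℝ} (hh : 0 < h) :
    ∃ t ∈ Set.Ioo 0 h,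
      h * ∫ s, deriv φ (s - t) * ρ s ∂μ = ∫ s, (φ s - φ (s - h)) * ρ s ∂μ := by
  have hasDeriv := hasDerivAt_integral_comp_sub_mul hρ hφ hb hc
  obtain ⟨t, ht, slope⟩ := exists_hasDerivAt_eq_slope _ _ hh
    (fun t _ ↦ (hasDeriv t).continuousAt.continuousWithinAt) fun t _ ↦ hasDeriv t
  have hint (t : ℝ) : Integrable (fun s ↦ φ (s - t) * ρ s) μ :=
    integrable_mul_of_abs_le hρ (hφ.continuous.comp (continuous_sub_right t)).aestronglyMeasurable
      fun s ↦ hb (s - t)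
  refine ⟨t, ht, ?_⟩
  simp only [sub_mul]
  rw [integral_sub (by simpa using hint 0) (hint h)]
  rw [eq_div_iff (by simpa using hh.ne')] at slope
  simp only [sub_zero] at slope
  linarith

end TranslatedPairing

section Moduli

variable {ρ : ℝ → ℝ} {ε h : ℝ}

lemma omegaMod_nonneg (ρ : ℝ → ℝ) (ε : ℝ) : 0 ≤ omegaMod ρ ε := by
  refine Real.sSup_nonneg ?_
  rintro _ ⟨h, -, rfl⟩
  exact integral_nonneg fun s ↦ abs_nonneg _

lemma integral_abs_comp_add_sub_le_omegaMod (hρ : Integrable ρ) (hh : |h| ≤ ε) :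
    ∫ s, |ρ (s + h) - ρ s| ≤ omegaMod ρ ε := by
  refine le_csSup ⟨2 * ∫ s, |ρ s|, ?_⟩ ⟨h, hh, rfl⟩
  rintro _ ⟨k, -, rfl⟩
  have hρk : Integrable fun s ↦ ρ (s + k) := hρ.comp_add_right k
  calc ∫ s, |ρ (s + k) - ρ s|
      ≤ ∫ s, (|ρ (s + k)| + |ρ s|) :=
        integral_mono (hρk.sub hρ).abs (hρk.abs.add hρ.abs) fun s ↦ abs_sub _ _
    _ = 2 * ∫ s, |ρ s| := by
        rw [integral_add hρk.abs hρ.abs, integral_add_right_eq_self (fun s ↦ |ρ s|) k, two_mul]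

lemma integral_deriv_mul_le_sigmaMod (hρ : Integrable ρ) {φ : ℝ → ℝ} (hφ : ContDiff ℝ ∞ φ)
    (hφ_supp : HasCompactSupport φ) (hφ_le : ∀ x, |φ x| ≤ ε) (hφ'_le : ∀ x, |deriv φ x| ≤ 1) :
    ∫ s, deriv φ s * ρ s ≤ sigmaMod ρ ε := by
  refine le_csSup ⟨1 * ∫ s, |ρ s|, ?_⟩ ⟨φ, hφ, hφ_supp, hφ_le, hφ'_le, rfl⟩
  rintro _ ⟨ψ, -, -, -, hψ'_le, rfl⟩
  exact integral_mul_le_mul_integral_abs hρ hψ'_le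

lemma integral_sub_comp_sub_mul_le_mul_omegaMod (hρ : Integrable ρ) {g : ℝ → ℝ}
    (hg : AEStronglyMeasurable g) {c : ℝ} (hc : ∀ x, |g x| ≤ c) (hh : |h| ≤ ε) :
    ∫ s, (g s - g (s - h)) * ρ s ≤ c * omegaMod ρ ε := by
  have c_nonneg : 0 ≤ c := (abs_nonneg _).trans (hc 0)
  calc ∫ s, (g s - g (s - h)) * ρ s
      = ∫ s, g s * (ρ s - ρ (s + h)) := integral_sub_comp_sub_mul_eq hρ hg hc h
    _ ≤ c * ∫ s, |ρ s - ρ (s + h)| :=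
        integral_mul_le_mul_integral_abs (hρ.sub (hρ.comp_add_right h)) hc
    _ = c * ∫ s, |ρ (s + h) - ρ s| := by simp only [abs_sub_comm]
    _ ≤ c * omegaMod ρ ε := by
        gcongr
        exact integral_abs_comp_add_sub_le_omegaMod hρ hh

lemma integral_deriv_mul_le_mul_omegaMod (hρ : Integrable ρ) {φ : ℝ → ℝ}
    (hφ : Differentiable ℝ φ) {b c : ℝ} (hb : ∀ x, |φ x| ≤ b) (hc : ∀ x, |deriv φ x| ≤ c)
    (hε : 0 < ε) : ∫ s, deriv φ s * ρ s ≤ (b / ε + c) * omegaMod ρ ε := by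
  have hφ'_meas : Measurable (deriv φ) := measurable_deriv φ
  obtain ⟨t, ht, mean_value⟩ := exists_mul_integral_deriv_comp_sub_mul_eq hρ hφ hb hc hε
  have translate_le : ∫ s, deriv φ (s - t) * ρ s ≤ b / ε * omegaMod ρ ε := by
    rw [div_mul_eq_mul_div, le_div_iff₀' hε, mean_value]
    exact integral_sub_comp_sub_mul_le_mul_omegaMod hρ hφ.continuous.aestronglyMeasurable hb
      (abs_of_pos hε).le
  have error_le : ∫ s, (deriv φ s - deriv φ (s - t)) * ρ s ≤ c * omegaMod ρ ε :=
    integral_sub_comp_sub_mul_le_mul_omegaMod hρ hφ'_meas.aestronglyMeasurable hc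
      (by simpa [abs_of_pos ht.1] using ht.2.le)
  have shift_int : Integrable fun s ↦ deriv φ (s - t) * ρ s :=
    integrable_mul_of_abs_le hρ (hφ'_meas.comp (measurable_sub_const t)).aestronglyMeasurable
      fun s ↦ hc (s - t)
  simp only [sub_mul] at error_le
  rw [integral_sub (integrable_mul_of_abs_le hρ hφ'_meas.aestronglyMeasurable hc) shift_int]
    at error_le
  linarith

lemma integral_mul_sub_comp_add_le_two_mul_sigmaMod (hρ : Integrable ρ) {g : ℝ → ℝ}
    (hg : ContDiff ℝ ∞ g) (hg_supp : HasCompactSupport g) (hg_le : ∀ x, |g x| ≤ 1)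
    (hh : |h| ≤ 2 * ε) : ∫ s, g s * (ρ s - ρ (s + h)) ≤ 2 * sigmaMod ρ ε := by
  have deriv_eq (x : ℝ) :
      deriv (fun x ↦ 2⁻¹ * movingIntegral g h x) x = 2⁻¹ * (g x - g (x - h)) :=
    ((hasDerivAt_movingIntegral hg.continuous h x).const_mul 2⁻¹).deriv
  have le_sigma : ∫ s, deriv (fun x ↦ 2⁻¹ * movingIntegral g h x) s * ρ s ≤ sigmaMod ρ ε := by
    refine integral_deriv_mul_le_sigmaMod hρ (contDiff_const.mul (contDiff_movingIntegral hg h))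
      (hasCompactSupport_movingIntegral hg_supp h).mul_left (fun x ↦ ?_) fun x ↦ ?_
    · have window_le : |movingIntegral g h x| ≤ 1 * |h| :=
        norm_movingIntegral_le (g := g) hg_le h x
      rw [abs_mul, abs_of_pos (by norm_num : (0 : ℝ) < 2⁻¹)]
      linarith
    · rw [deriv_eq, abs_mul, abs_of_pos (by norm_num : (0 : ℝ) < 2⁻¹)]
      linarith [abs_sub (g x) (g (x - h)), hg_le x, hg_le (x - h)]
  simp only [deriv_eq, mul_assoc, integral_const_mul] at le_sigma
  rw [← integral_sub_comp_sub_mul_eq hρ hg.continuous.aestronglyMeasurable hg_le h]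
  linarith

lemma integral_abs_comp_add_sub_le_two_mul_sigmaMod (hρ : Integrable ρ) (hh : |h| ≤ 2 * ε) :
    ∫ s, |ρ (s + h) - ρ s| ≤ 2 * sigmaMod ρ ε := by
  refine le_of_forall_pos_le_add fun δ hδ ↦ ?_
  obtain ⟨g, hg, hg_supp, hg_le, integral_abs_le⟩ :=
    exists_contDiff_hasCompactSupport_integral_abs_le (hρ.sub (hρ.comp_add_right h)) hδ
  calc ∫ s, |ρ (s + h) - ρ s| = ∫ s, |ρ s - ρ (s + h)| := by simp only [abs_sub_comm]
    _ ≤ (∫ s, g s * (ρ s - ρ (s + h))) + δ := integral_abs_le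
    _ ≤ 2 * sigmaMod ρ ε + δ := by
        grw [integral_mul_sub_comp_add_le_two_mul_sigmaMod hρ hg hg_supp hg_le hh]

lemma omegaMod_two_mul_le_two_mul_sigmaMod (hρ : Integrable ρ) (hε : 0 ≤ ε) :
    omegaMod ρ (2 * ε) ≤ 2 * sigmaMod ρ ε := by
  refine csSup_le ⟨_, 0, by simpa using hε, rfl⟩ ?_
  rintro _ ⟨h, hh, rfl⟩
  exact integral_abs_comp_add_sub_le_two_mul_sigmaMod hρ hh

lemma sigmaMod_le_two_mul_omegaMod (hρ : Integrable ρ) (hε : 0 < ε) :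
    sigmaMod ρ ε ≤ 2 * omegaMod ρ ε := by
  refine Real.sSup_le ?_ (mul_nonneg zero_le_two (omegaMod_nonneg ρ ε))
  rintro _ ⟨φ, hφ, -, hφ_le, hφ'_le, rfl⟩
  calc ∫ s, deriv φ s * ρ s
      ≤ (ε / ε + 1) * omegaMod ρ ε :=
        integral_deriv_mul_le_mul_omegaMod hρ (hφ.differentiable (by simp)) hφ_le hφ'_le hε
    _ = 2 * omegaMod ρ ε := by rw [div_self hε.ne', one_add_one_eq_two]

end Moduli

/-- Proposition 2 (equivalence of the two moduli of continuity):
`2⁻¹ ω(ϱ, 2ε) ≤ σ(ϱ, ε) ≤ 6 ω(ϱ, ε)` for every `ϱ ∈ L¹(ℝ)` and every `ε > 0`. -/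
theorem sigma_omega_equivalence (ρ : ℝ → ℝ) (hρ : Integrable ρ) (ε : ℝ) (hε : 0 < ε) :
    2⁻¹ * omegaMod ρ (2 * ε) ≤ sigmaMod ρ ε ∧ sigmaMod ρ ε ≤ 6 * omegaMod ρ ε := by
  constructor
  · linarith [omegaMod_two_mul_le_two_mul_sigmaMod hρ hε.le]
  · linarith [sigmaMod_le_two_mul_omegaMod hρ hε, omegaMod_nonneg ρ ε]
end
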